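/- arXiv:2603.19490 — 7 statements merged into one kernel-verified Lean document; each statement's English description precedes it below -/
import Mathlib

section
/- There exists a universal constant C > 0 such that the following holds for every positive integer n. Let μ_A and μ_B be probability distributions on the power set 2^[n] of [n] = {1,…,n}, and let ε be a real number with 2^{-n} < ε < 1/2 such that P_{A∼μ_A, B∼μ_B}[A ∩ B = ∅] ≥ ε (the sets A and B are sampled independently). Then there exist families 𝒜, ℬ ⊆ 2^[n] with μ_A(𝒜) ≥ 2^{-C·√(n·log₂(1/ε))} and μ_B(ℬ) ≥ 2^{-C·√(n·log₂(1/ε))} such that A ∩ B = ∅ for every pair (A, B) ∈ 𝒜 × ℬ. -/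
open Finset

/-!
Call `(A, B)` an edge if `A ∩ B = ∅`, let `e ≥ ε` be the probability of an edge, and let `n` be the
size of the ground set. Let `A₁, …, A_k ∼ μA`, `B₁, …, B_k ∼ μB` and a uniformly random set `S` be
independent, and put `V = ⋃ Aᵢ`, `U = ⋃ Bᵢ`. The families `𝒜 = {A | A ∩ U = ∅, A \ V ⊆ S}` and
`ℬ = {B | B ∩ V = ∅, (B \ U) ∩ S = ∅}` are always cross-disjoint. For a fixed edge `(A, B)`, the
probability that `A ∈ 𝒜` and `B ∈ ℬ` is
`E[1(V ∩ B = ∅) 2^(-|A \ V|)] · E[1(U ∩ A = ∅) 2^(-|B \ U|)]`.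

By Jensen's inequality the first factor is at least `d^k 2^(-E|A \ V|)`, where `d` is the degree of
`B`, the probability that a set of law `μA` is disjoint from `B`, and the `Aᵢ` are now random
neighbours of `B`. If `(A, B)` is itself a random edge, then given `B` the sets `A, A₁, …, A_k` are
i.i.d., so an element `x` lies in `A \ V` with probability `t (1 - t)^k ≤ 1 / (k + 1)` and
`E|A \ V| ≤ n / (k + 1)`. Moreover `E[log d] ≥ log e`, by convexity of `x log x`. Jensen's
inequality over the random edge therefore gives `E[μA(𝒜) μB(ℬ)] ≥ e^(2k+1) 2^(-2n/(k+1))`, and some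
choice of `U`, `V`, `S` does at least as well. With `L = log₂ (1/ε)` and `k = ⌊√(n/L)⌋` this is at
least `2^(-5√(nL))`.
-/

namespace CrossDisjoint

lemma sum_mul_exp_sum_mul_log_div_le {ι : Type*} [Fintype ι] {w x : ι → ℝ} (hw : ∀ i, 0 ≤ w i)
    (hx : ∀ i, w i ≠ 0 → 0 < x i) :
    (∑ i, w i) * Real.exp ((∑ i, w i * Real.log (x i)) / ∑ i, w i) ≤ ∑ i, w i * x i := by
  have exp_log (i : ι) : w i * Real.exp (Real.log (x i)) = w i * x i := by
    by_cases hi : w i = 0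
    · simp only [hi, zero_mul]
    · rw [Real.exp_log (hx i hi)]
  obtain hW | hW := (sum_nonneg fun i _ => hw i : 0 ≤ ∑ i, w i).eq_or_lt
  · have hw0 (i : ι) : w i = 0 := (Fintype.sum_eq_zero_iff_of_nonneg hw).1 hW.symm ▸ rfl
    simp [hw0]
  · have jensen := convexOn_exp.map_centerMass_le (t := univ) (p := fun i => Real.log (x i))
      (fun i _ => hw i) hW fun _ _ => Set.mem_univ _
    simpa only [centerMass, smul_eq_mul, Function.comp_apply, inv_mul_eq_div, exp_log,
      le_div_iff₀' hW] using jensen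

variable {α : Type*} [DecidableEq α] {μ ν μA μB : Finset α → ℝ}

/-- The weight `μ` restricted to the sets disjoint from `B`. Up to normalisation it is the law of a
random neighbour of `B` in the bipartite graph of disjoint pairs. -/
def neighborMass (μ : Finset α → ℝ) (B A : Finset α) : ℝ :=
  if Disjoint A B then μ A else 0

/-- The mass that `μA × μB` gives to the pair `(A, B)` as an edge of the bipartite graph of disjoint
pairs; it is zero on pairs that intersect. -/
def edgeMass (μA μB : Finset α → ℝ) (A B : Finset α) : ℝ :=
  if Disjoint A B then μA A * μB B else 0

/-- The probability `2 ^ (-|A \ V|)` that a uniformly random set contains `A \ V`, replaced by `0`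
if `V` meets `B`, that is, if `V` is not a union of neighbours of `B`. -/
noncomputable def coverWeight (V A B : Finset α) : ℝ :=
  if Disjoint V B then (1 / 2) ^ #(A \ V) else 0

lemma neighborMass_nonneg (hμ : ∀ A, 0 ≤ μ A) (B A : Finset α) : 0 ≤ neighborMass μ B A := by
  unfold neighborMass
  split_ifs <;> simp [hμ]

lemma edgeMass_comm (μA μB : Finset α → ℝ) (A B : Finset α) :
    edgeMass μA μB A B = edgeMass μB μA B A := by
  simp only [edgeMass, disjoint_comm, mul_comm]

lemma edgeMass_eq_mul_neighborMass (μA μB : Finset α → ℝ) (A B : Finset α) :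
    edgeMass μA μB A B = μB B * neighborMass μA B A := by
  simp only [edgeMass, neighborMass, mul_ite, mul_zero, mul_comm]

lemma edgeMass_nonneg (hA : ∀ A, 0 ≤ μA A) (hB : ∀ B, 0 ≤ μB B) (A B : Finset α) :
    0 ≤ edgeMass μA μB A B := by
  rw [edgeMass_eq_mul_neighborMass]
  exact mul_nonneg (hB B) (neighborMass_nonneg hA B A)

lemma card_sdiff_biUnion_eq_sum {k : ℕ} (A : Finset α) (f : Fin k → Finset α) :
    (#(A \ univ.biUnion f) : ℝ) = ∑ x ∈ A, ∏ i, if x ∉ f i then 1 else 0 := by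
  simp_rw [prod_ite_zero, prod_const_one, sum_boole]
  congr 2
  ext x
  simp

variable [Fintype α]

/-- For independent random sets `A₁, …, A_k` of law `ν`, the expected size of
`A \ (A₁ ∪ ⋯ ∪ A_k)`, multiplied by the `k`-th power of the total mass of `ν`. -/
noncomputable def uncovered (ν : Finset α → ℝ) (k : ℕ) (A : Finset α) : ℝ :=
  ∑ f : Fin k → Finset α, (∏ i, ν (f i)) * #(A \ univ.biUnion f)

/-- For independent random sets `A₁, …, A_k` of law `ν`, the expectation of
`2 ^ (-|A \ (A₁ ∪ ⋯ ∪ A_k)|)`, multiplied by the `k`-th power of the total mass of `ν`. -/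
noncomputable def coverage (ν : Finset α → ℝ) (k : ℕ) (A : Finset α) : ℝ :=
  ∑ f : Fin k → Finset α, (∏ i, ν (f i)) * (1 / 2) ^ #(A \ univ.biUnion f)

lemma uncovered_eq_sum (ν : Finset α → ℝ) (k : ℕ) (A : Finset α) :
    uncovered ν k A = ∑ x ∈ A, (∑ C with x ∉ C, ν C) ^ k := by
  simp_rw [uncovered, card_sdiff_biUnion_eq_sum, mul_sum, ← prod_mul_distrib, mul_ite, mul_one,
    mul_zero, sum_filter, Fintype.sum_pow]
  exact sum_comm

lemma sum_mul_uncovered_le (hν : ∀ A, 0 ≤ ν A) (k : ℕ) :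
    (k + 1) * ∑ A, ν A * uncovered ν k A ≤ Fintype.card α * (∑ A, ν A) ^ (k + 1) := by
  have swap : ∑ A, ν A * uncovered ν k A =
      ∑ x, (∑ C with x ∈ C, ν C) * (∑ C with x ∉ C, ν C) ^ k := by
    simp_rw [uncovered_eq_sum, mul_sum, sum_mul]
    exact sum_comm' fun A x => by simp
  have bernoulli (x : α) : (k + 1) * ((∑ C with x ∈ C, ν C) * (∑ C with x ∉ C, ν C) ^ k) ≤
      (∑ A, ν A) ^ (k + 1) := by
    have hin : 0 ≤ ∑ C with x ∈ C, ν C := sum_nonneg fun C _ => hν C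
    have hout : 0 ≤ ∑ C with x ∉ C, ν C := sum_nonneg fun C _ => hν C
    have h := pow_add_mul_le_add_pow hout (b := ∑ C with x ∈ C, ν C) (by positivity) (k + 1)
    rw [add_comm (∑ C with x ∉ C, ν C), sum_filter_add_sum_filter_not, Nat.add_sub_cancel] at h
    push_cast at h
    nlinarith [pow_nonneg hout (k + 1)]
  rw [swap, mul_sum]
  calc ∑ x, (k + 1) * ((∑ C with x ∈ C, ν C) * (∑ C with x ∉ C, ν C) ^ k)
      ≤ ∑ _x : α, (∑ A, ν A) ^ (k + 1) := sum_le_sum fun x _ => bernoulli x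
    _ = Fintype.card α * (∑ A, ν A) ^ (k + 1) := by simp

lemma coverage_pos (hν : ∀ A, 0 ≤ ν A) (k : ℕ) (A : Finset α) (h : 0 < ∑ C, ν C) :
    0 < coverage ν k A := by
  obtain ⟨C, -, hC⟩ := (sum_pos_iff_of_nonneg fun C _ => hν C).1 h
  exact sum_pos' (fun f _ => mul_nonneg (prod_nonneg fun i _ => hν _) (by positivity))
    ⟨fun _ => C, mem_univ _, mul_pos (prod_pos fun _ _ => hC) (by positivity)⟩

lemma le_log_coverage (hν : ∀ A, 0 ≤ ν A) (k : ℕ) (A : Finset α) (h : 0 < ∑ C, ν C) :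
    k * Real.log (∑ C, ν C) - Real.log 2 * (uncovered ν k A / (∑ C, ν C) ^ k) ≤
      Real.log (coverage ν k A) := by
  have jensen := sum_mul_exp_sum_mul_log_div_le (ι := Fin k → Finset α)
    (w := fun f => ∏ i, ν (f i)) (x := fun f => (1 / 2) ^ #(A \ univ.biUnion f))
    (fun f => prod_nonneg fun i _ => hν _) (fun f _ => by positivity)
  have log_eq : ∑ f : Fin k → Finset α,
      (∏ i, ν (f i)) * Real.log ((1 / 2) ^ #(A \ univ.biUnion f)) =
        -(Real.log 2 * uncovered ν k A) := by
    simp_rw [uncovered, Real.log_pow, one_div, Real.log_inv, mul_sum, ← sum_neg_distrib]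
    exact sum_congr rfl fun f _ => by ring
  rw [log_eq, ← Fintype.sum_pow, ← coverage] at jensen
  refine le_trans (le_of_eq ?_) (Real.log_le_log (by positivity) jensen)
  rw [Real.log_mul (by positivity) (Real.exp_pos _).ne', Real.log_pow, Real.log_exp]
  ring

lemma le_sum_mul_log_coverage (hν : ∀ A, 0 ≤ ν A) (k : ℕ) :
    (∑ A, ν A) * (k * Real.log (∑ A, ν A) - Real.log 2 * (Fintype.card α / (k + 1))) ≤
      ∑ A, ν A * Real.log (coverage ν k A) := by
  set m := ∑ A, ν A with hm
  obtain hm0 | hmpos := (sum_nonneg fun A _ => hν A : 0 ≤ m).eq_or_lt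
  · have hν0 : ∀ A, ν A = 0 := fun A =>
      (sum_eq_zero_iff_of_nonneg fun A _ => hν A).1 hm0.symm A (mem_univ A)
    simp [hm, hν0]
  have huncovered : (∑ A, ν A * uncovered ν k A) / m ^ k ≤ m * (Fintype.card α / (k + 1)) := by
    rw [div_le_iff₀ (by positivity), ← mul_div_assoc, div_mul_eq_mul_div,
      le_div_iff₀ (by positivity)]
    calc (∑ A, ν A * uncovered ν k A) * (k + 1)
        = (k + 1) * ∑ A, ν A * uncovered ν k A := mul_comm _ _
      _ ≤ Fintype.card α * m ^ (k + 1) := sum_mul_uncovered_le hν k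
      _ = m * Fintype.card α * m ^ k := by ring
  calc m * (k * Real.log m - Real.log 2 * (Fintype.card α / (k + 1)))
      = m * (k * Real.log m) - Real.log 2 * (m * (Fintype.card α / (k + 1))) := by ring
    _ ≤ m * (k * Real.log m) - Real.log 2 * ((∑ A, ν A * uncovered ν k A) / m ^ k) := by gcongr
    _ = ∑ A, ν A * (k * Real.log m - Real.log 2 * (uncovered ν k A / m ^ k)) := by
        simp_rw [mul_sub, sum_sub_distrib, ← sum_mul, ← hm, sum_div, mul_sum]
        congr 1
        exact sum_congr rfl fun A _ => by ring
    _ ≤ _ := sum_le_sum fun A _ =>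
        mul_le_mul_of_nonneg_left (le_log_coverage hν k A hmpos) (hν A)

lemma coverage_neighborMass_pos (hA : ∀ A, 0 ≤ μA A) (k : ℕ) {A B : Finset α}
    (h : edgeMass μA μB A B ≠ 0) : 0 < coverage (neighborMass μA B) k A := by
  rw [edgeMass_eq_mul_neighborMass] at h
  refine coverage_pos (neighborMass_nonneg hA B) k A (sum_pos' (fun C _ => ?_) ⟨A, mem_univ A, ?_⟩)
  · exact neighborMass_nonneg hA B C
  · exact (neighborMass_nonneg hA B A).lt_of_ne' (right_ne_zero_of_mul h)

lemma le_sum_edgeMass_mul_log_coverage (hA : ∀ A, 0 ≤ μA A) (hB : ∀ B, 0 ≤ μB B)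
    (hB1 : ∑ B, μB B = 1) (k : ℕ) :
    (∑ A, ∑ B, edgeMass μA μB A B) * (k * Real.log (∑ A, ∑ B, edgeMass μA μB A B) -
        Real.log 2 * (Fintype.card α / (k + 1))) ≤
      ∑ A, ∑ B, edgeMass μA μB A B * Real.log (coverage (neighborMass μA B) k A) := by
  rw [sum_comm, sum_comm (f := fun A B => _ * Real.log _)]
  simp_rw [edgeMass_eq_mul_neighborMass, mul_assoc, ← mul_sum]
  set d : Finset α → ℝ := fun B => ∑ A, neighborMass μA B A
  have hd : ∀ B, 0 ≤ d B := fun B => sum_nonneg fun A _ => neighborMass_nonneg hA B A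
  set e := ∑ B, μB B * d B with he
  set c := Real.log 2 * (Fintype.card α / (k + 1))
  have jensen : e * Real.log e ≤ ∑ B, μB B * (d B * Real.log (d B)) :=
    Real.convexOn_mul_log.map_sum_le (fun B _ => hB B) hB1 fun B _ => hd B
  calc e * (k * Real.log e - c) = k * (e * Real.log e) - e * c := by ring
    _ ≤ k * (∑ B, μB B * (d B * Real.log (d B))) - e * c := by gcongr
    _ = ∑ B, μB B * (d B * (k * Real.log (d B) - c)) := by
        rw [he, mul_sum, sum_mul, ← sum_sub_distrib]
        exact sum_congr rfl fun B _ => by ring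
    _ ≤ _ := sum_le_sum fun B _ => mul_le_mul_of_nonneg_left
        (le_sum_mul_log_coverage (neighborMass_nonneg hA B) k) (hB B)

lemma le_sum_edgeMass_mul_log_coverage_mul_coverage (hA : ∀ A, 0 ≤ μA A) (hA1 : ∑ A, μA A = 1)
    (hB : ∀ B, 0 ≤ μB B) (hB1 : ∑ B, μB B = 1) (k : ℕ) :
    2 * ((∑ A, ∑ B, edgeMass μA μB A B) * (k * Real.log (∑ A, ∑ B, edgeMass μA μB A B) -
        Real.log 2 * (Fintype.card α / (k + 1)))) ≤
      ∑ A, ∑ B, edgeMass μA μB A B *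
        Real.log (coverage (neighborMass μA B) k A * coverage (neighborMass μB A) k B) := by
  have log_mul (A B : Finset α) : edgeMass μA μB A B *
      Real.log (coverage (neighborMass μA B) k A * coverage (neighborMass μB A) k B) =
        edgeMass μA μB A B * Real.log (coverage (neighborMass μA B) k A) +
          edgeMass μA μB A B * Real.log (coverage (neighborMass μB A) k B) := by
    by_cases h : edgeMass μA μB A B = 0
    · simp only [h, zero_mul, add_zero]
    · rw [Real.log_mul (coverage_neighborMass_pos hA k h).ne'
        (coverage_neighborMass_pos hB k (edgeMass_comm μA μB A B ▸ h)).ne', mul_add]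
  have sideA := le_sum_edgeMass_mul_log_coverage hA hB hB1 k
  have sideB := le_sum_edgeMass_mul_log_coverage hB hA hA1 k
  simp_rw [edgeMass_comm μB μA] at sideB
  rw [sum_comm, sum_comm (f := fun B A => _ * Real.log _)] at sideB
  simp_rw [log_mul, sum_add_distrib]
  linarith

lemma pow_mul_rpow_le_sum_edgeMass_mul_coverage (hA : ∀ A, 0 ≤ μA A) (hA1 : ∑ A, μA A = 1)
    (hB : ∀ B, 0 ≤ μB B) (hB1 : ∑ B, μB B = 1) (k : ℕ)
    (he : 0 < ∑ A, ∑ B, edgeMass μA μB A B) :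
    (∑ A, ∑ B, edgeMass μA μB A B) ^ (2 * k + 1) *
        (2 : ℝ) ^ (-(2 * Fintype.card α / (k + 1)) : ℝ) ≤
      ∑ A, ∑ B, edgeMass μA μB A B *
        (coverage (neighborMass μA B) k A * coverage (neighborMass μB A) k B) := by
  have jensen := sum_mul_exp_sum_mul_log_div_le (ι := Finset α × Finset α)
    (w := fun p => edgeMass μA μB p.1 p.2)
    (x := fun p =>
      coverage (neighborMass μA p.2) k p.1 * coverage (neighborMass μB p.1) k p.2)
    (fun p => edgeMass_nonneg hA hB p.1 p.2)
    (fun p h => mul_pos (coverage_neighborMass_pos hA k h)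
      (coverage_neighborMass_pos hB k (edgeMass_comm μA μB p.1 p.2 ▸ h)))
  simp_rw [Fintype.sum_prod_type] at jensen
  have exponent := le_sum_edgeMass_mul_log_coverage_mul_coverage hA hA1 hB hB1 k
  set e := ∑ A, ∑ B, edgeMass μA μB A B
  rw [mul_left_comm, ← le_div_iff₀' he] at exponent
  refine le_trans ?_ jensen
  calc e ^ (2 * k + 1) * (2 : ℝ) ^ (-(2 * Fintype.card α / (k + 1)) : ℝ)
      = e * Real.exp (2 * (k * Real.log e - Real.log 2 * (Fintype.card α / (k + 1)))) := by
        rw [pow_succ', mul_assoc, Real.rpow_def_of_pos two_pos, ← Real.exp_log (pow_pos he _),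
          ← Real.exp_add, Real.log_pow]
        push_cast
        ring_nf
    _ ≤ _ := by gcongr

lemma coverage_neighborMass (μ : Finset α → ℝ) (k : ℕ) (A B : Finset α) :
    coverage (neighborMass μ B) k A =
      ∑ f : Fin k → Finset α, (∏ i, μ (f i)) * coverWeight (univ.biUnion f) A B := by
  refine sum_congr rfl fun f _ => ?_
  simp only [neighborMass, coverWeight, prod_ite_zero, disjoint_biUnion_left, ite_mul, mul_ite,
    zero_mul, mul_zero]

/-- The sets that avoid `U` and whose part outside `V` lies in `S`. The other side of a
cross-disjoint pair is obtained by exchanging `U` and `V` and replacing `S` by its complement. -/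
def splitFamily (U V S : Finset α) : Finset (Finset α) :=
  {A | Disjoint U A ∧ A \ V ⊆ S}

lemma disjoint_of_mem_splitFamily {U V S A B : Finset α} (hA : A ∈ splitFamily U V S)
    (hB : B ∈ splitFamily V U Sᶜ) : Disjoint A B := by
  simp only [splitFamily, mem_filter_univ] at hA hB
  refine disjoint_left.2 fun x hxA hxB => ?_
  have hxU : x ∉ U := fun hx => disjoint_left.1 hA.1 hx hxA
  have hxV : x ∉ V := fun hx => disjoint_left.1 hB.1 hx hxB
  exact mem_compl.1 (hB.2 (mem_sdiff.2 ⟨hxB, hxU⟩)) (hA.2 (mem_sdiff.2 ⟨hxA, hxV⟩))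

lemma card_filter_subset_and_subset_compl {P Q : Finset α} (h : Disjoint P Q) :
    (#{S | P ⊆ S ∧ Q ⊆ Sᶜ} : ℝ) = 2 ^ Fintype.card α * ((1 / 2) ^ #P * (1 / 2) ^ #Q) := by
  have interval : ({S | P ⊆ S ∧ Q ⊆ Sᶜ} : Finset (Finset α)) = Icc P Qᶜ := by
    ext S
    simp [subset_compl_comm]
  have hPQ : #P + #Q ≤ Fintype.card α := by
    rw [← card_union_of_disjoint h]
    exact card_le_univ _
  rw [interval, card_Icc_finset h.le_compl_right, card_compl, Nat.sub_sub, add_comm #Q, ← pow_add]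
  push_cast
  rw [pow_sub₀ _ two_ne_zero hPQ, one_div, inv_pow]

lemma edgeMass_mul_coverWeight_le_sum_splitFamily (hA : ∀ A, 0 ≤ μA A) (hB : ∀ B, 0 ≤ μB B)
    (U V A B : Finset α) :
    2 ^ Fintype.card α * (edgeMass μA μB A B * (coverWeight V A B * coverWeight U B A)) ≤
      ∑ S, if A ∈ splitFamily U V S ∧ B ∈ splitFamily V U Sᶜ then μA A * μB B else 0 := by
  have rhs_nonneg : 0 ≤ ∑ S, if A ∈ splitFamily U V S ∧ B ∈ splitFamily V U Sᶜ
      then μA A * μB B else 0 :=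
    sum_nonneg fun S _ => ite_nonneg (mul_nonneg (hA A) (hB B)) le_rfl
  by_cases hAB : Disjoint A B
  swap
  · simpa [edgeMass, hAB] using rhs_nonneg
  by_cases hVB : Disjoint V B
  swap
  · simpa [coverWeight, hVB] using rhs_nonneg
  by_cases hUA : Disjoint U A
  swap
  · simpa [coverWeight, hUA] using rhs_nonneg
  have hcard := card_filter_subset_and_subset_compl
    (hAB.mono (sdiff_subset : A \ V ⊆ A) (sdiff_subset : B \ U ⊆ B))
  simp only [edgeMass, coverWeight, splitFamily, mem_filter_univ, hAB, hVB, hUA, true_and,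
    if_true]
  rw [← sum_filter, sum_const, nsmul_eq_mul, hcard]
  exact le_of_eq (by ring)

lemma exists_crossDisjoint_of_coverWeight (hA : ∀ A, 0 ≤ μA A) (hB : ∀ B, 0 ≤ μB B)
    (U V : Finset α) :
    ∃ 𝒜 ℬ : Finset (Finset α), (∀ A ∈ 𝒜, ∀ B ∈ ℬ, Disjoint A B) ∧
      ∑ A, ∑ B, edgeMass μA μB A B * (coverWeight V A B * coverWeight U B A) ≤
        (∑ A ∈ 𝒜, μA A) * ∑ B ∈ ℬ, μB B := by
  have average : ∑ _S : Finset α, ∑ A, ∑ B,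
      edgeMass μA μB A B * (coverWeight V A B * coverWeight U B A) ≤
        ∑ S, (∑ A ∈ splitFamily U V S, μA A) * ∑ B ∈ splitFamily V U Sᶜ, μB B := by
    calc _ = ∑ A, ∑ B, 2 ^ Fintype.card α *
          (edgeMass μA μB A B * (coverWeight V A B * coverWeight U B A)) := by
          simp [mul_sum]
      _ ≤ ∑ A, ∑ B, ∑ S, if A ∈ splitFamily U V S ∧ B ∈ splitFamily V U Sᶜ
            then μA A * μB B else 0 := sum_le_sum fun A _ => sum_le_sum fun B _ =>
          edgeMass_mul_coverWeight_le_sum_splitFamily hA hB U V A B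
      _ = ∑ S, ∑ A, ∑ B, if A ∈ splitFamily U V S ∧ B ∈ splitFamily V U Sᶜ
            then μA A * μB B else 0 := sum_comm_cycle
      _ = _ := by
          simp_rw [← ite_zero_mul_ite_zero, ← sum_mul_sum, sum_ite_mem, univ_inter]
  obtain ⟨S, -, hS⟩ := exists_le_of_sum_le univ_nonempty average
  exact ⟨_, _, fun A hA B hB => disjoint_of_mem_splitFamily hA hB, hS⟩

lemma exists_crossDisjoint_of_coverage (hA : ∀ A, 0 ≤ μA A) (hA1 : ∑ A, μA A = 1)
    (hB : ∀ B, 0 ≤ μB B) (hB1 : ∑ B, μB B = 1) (k : ℕ) :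
    ∃ 𝒜 ℬ : Finset (Finset α), (∀ A ∈ 𝒜, ∀ B ∈ ℬ, Disjoint A B) ∧
      ∑ A, ∑ B, edgeMass μA μB A B *
          (coverage (neighborMass μA B) k A * coverage (neighborMass μB A) k B) ≤
        (∑ A ∈ 𝒜, μA A) * ∑ B ∈ ℬ, μB B := by
  set r : (Fin k → Finset α) × (Fin k → Finset α) → ℝ := fun p => ∑ A, ∑ B, edgeMass μA μB A B *
    (coverWeight (univ.biUnion p.1) A B * coverWeight (univ.biUnion p.2) B A)
  set w : (Fin k → Finset α) × (Fin k → Finset α) → ℝ := fun p =>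
    (∏ i, μA (p.1 i)) * ∏ i, μB (p.2 i) with hw
  have hw0 : ∀ p, 0 ≤ w p := fun p =>
    mul_nonneg (prod_nonneg fun i _ => hA _) (prod_nonneg fun i _ => hB _)
  have hw1 : ∑ p, w p = 1 := by
    simp_rw [hw, Fintype.sum_prod_type]
    rw [← sum_mul_sum, ← Fintype.sum_pow, ← Fintype.sum_pow, hA1, hB1, one_pow, one_mul]
  have average : ∑ A, ∑ B, edgeMass μA μB A B *
      (coverage (neighborMass μA B) k A * coverage (neighborMass μB A) k B) = ∑ p, w p * r p := by
    simp_rw [r, mul_sum]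
    rw [← sum_comm_cycle]
    simp_rw [coverage_neighborMass, sum_mul_sum, mul_sum, Fintype.sum_prod_type]
    refine sum_congr rfl fun A _ => sum_congr rfl fun B _ => sum_congr rfl fun f _ =>
      sum_congr rfl fun g _ => ?_
    rw [hw]
    ring
  obtain ⟨⟨f, g⟩, -, hfg⟩ := (convexOn_id convex_univ).exists_ge_of_centerMass
    (fun p _ => hw0 p) (by rw [hw1]; exact one_pos) (fun p _ => Set.mem_univ (r p))
  rw [centerMass_eq_of_sum_1 _ _ hw1] at hfg
  obtain ⟨𝒜, ℬ, hdisj, hle⟩ :=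
    exists_crossDisjoint_of_coverWeight hA hB (univ.biUnion g) (univ.biUnion f)
  exact ⟨𝒜, ℬ, hdisj, average.le.trans (hfg.trans hle)⟩

lemma exists_crossDisjoint_pow_mul_rpow_le (hA : ∀ A, 0 ≤ μA A) (hA1 : ∑ A, μA A = 1)
    (hB : ∀ B, 0 ≤ μB B) (hB1 : ∑ B, μB B = 1) {ε : ℝ} (hε : 0 < ε)
    (h : ε ≤ ∑ A, ∑ B, edgeMass μA μB A B) (k : ℕ) :
    ∃ 𝒜 ℬ : Finset (Finset α), (∀ A ∈ 𝒜, ∀ B ∈ ℬ, Disjoint A B) ∧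
      ε ^ (2 * k + 1) * (2 : ℝ) ^ (-(2 * Fintype.card α / (k + 1)) : ℝ) ≤
        (∑ A ∈ 𝒜, μA A) * ∑ B ∈ ℬ, μB B := by
  obtain ⟨𝒜, ℬ, hdisj, hle⟩ := exists_crossDisjoint_of_coverage hA hA1 hB hB1 k
  refine ⟨𝒜, ℬ, hdisj, le_trans ?_ hle⟩
  refine le_trans ?_ (pow_mul_rpow_le_sum_edgeMass_mul_coverage hA hA1 hB hB1 k (hε.trans_le h))
  gcongr

lemma exists_nat_mul_add_div_le {n L : ℝ} (hL : 0 < L) (hLn : L ≤ n) :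
    ∃ k : ℕ, (2 * k + 1) * L + 2 * n / (k + 1) ≤ 5 * √(n * L) := by
  set r := √(n / L)
  have hr : 1 ≤ r := by rwa [Real.one_le_sqrt, one_le_div hL]
  have hn : n = L * r ^ 2 := by
    rw [Real.sq_sqrt (div_nonneg (hL.le.trans hLn) hL.le), mul_div_cancel₀ _ hL.ne']
  have hsqrt : √(n * L) = L * r := by
    rw [hn, show L * r ^ 2 * L = (L * r) ^ 2 by ring, Real.sqrt_sq (by positivity)]
  have floor_le : (⌊r⌋₊ : ℝ) ≤ r := Nat.floor_le (by positivity)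
  have lt_floor : r < ⌊r⌋₊ + 1 := Nat.lt_floor_add_one r
  have hdiv : 2 * n / (⌊r⌋₊ + 1) ≤ 2 * (L * r) := by
    rw [div_le_iff₀ (by positivity), hn]
    calc 2 * (L * r ^ 2) = 2 * (L * r) * r := by ring
      _ ≤ 2 * (L * r) * (⌊r⌋₊ + 1) := by gcongr
  have hmul : (2 * ⌊r⌋₊ + 1) * L ≤ 3 * (L * r) := by
    calc (2 * ⌊r⌋₊ + 1) * L ≤ (2 * r + r) * L := by gcongr
      _ = 3 * (L * r) := by ring
  exact ⟨⌊r⌋₊, by linarith⟩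

lemma exists_rpow_neg_le {n ε : ℝ} (hε : (2 : ℝ) ^ (-n) ≤ ε) (hε1 : ε < 1) :
    ∃ k : ℕ, (2 : ℝ) ^ (-(5 * √(n * Real.logb 2 (1 / ε)))) ≤
      ε ^ (2 * k + 1) * (2 : ℝ) ^ (-(2 * n / (k + 1))) := by
  have hε0 : 0 < ε := (by positivity : (0 : ℝ) < 2 ^ (-n)).trans_le hε
  set L := Real.logb 2 (1 / ε) with hL
  have hεL : ε = 2 ^ (-L) := by
    rw [hL, one_div, Real.logb_inv, neg_neg, Real.rpow_logb two_pos (by norm_num) hε0]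
  have hL0 : 0 < L := Real.logb_pos one_lt_two ((one_lt_div hε0).2 hε1)
  have hLn : L ≤ n := by
    rw [hεL, Real.rpow_le_rpow_left_iff one_lt_two] at hε
    linarith
  obtain ⟨k, hk⟩ := exists_nat_mul_add_div_le hL0 hLn
  refine ⟨k, ?_⟩
  calc (2 : ℝ) ^ (-(5 * √(n * L))) ≤ 2 ^ (-L * (2 * k + 1) + -(2 * n / (k + 1))) :=
        Real.rpow_le_rpow_of_exponent_le one_le_two (by linarith)
    _ = (2 ^ (-L)) ^ (2 * k + 1) * 2 ^ (-(2 * n / (k + 1))) := by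
        rw [Real.rpow_add two_pos, Real.rpow_mul two_pos.le]
        norm_cast
    _ = _ := by rw [← hεL]

end CrossDisjoint

theorem statement0_general {α : Type*} [Fintype α] [DecidableEq α] {μA μB : Finset α → ℝ}
    (hA : ∀ A, 0 ≤ μA A) (hA1 : ∑ A, μA A = 1) (hB : ∀ B, 0 ≤ μB B) (hB1 : ∑ B, μB B = 1)
    {ε : ℝ} (hε : (2 : ℝ) ^ (-(Fintype.card α : ℝ)) ≤ ε) (hε1 : ε < 1)
    (h : ε ≤ ∑ A, ∑ B, if Disjoint A B then μA A * μB B else 0) :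
    ∃ 𝒜 ℬ : Finset (Finset α),
      (2 : ℝ) ^ (-(5 * √(Fintype.card α * Real.logb 2 (1 / ε)))) ≤ ∑ A ∈ 𝒜, μA A ∧
      (2 : ℝ) ^ (-(5 * √(Fintype.card α * Real.logb 2 (1 / ε)))) ≤ ∑ B ∈ ℬ, μB B ∧
      ∀ A ∈ 𝒜, ∀ B ∈ ℬ, Disjoint A B := by
  have hε0 : 0 < ε := (by positivity : (0 : ℝ) < 2 ^ (-(Fintype.card α : ℝ))).trans_le hε
  obtain ⟨k, hk⟩ := CrossDisjoint.exists_rpow_neg_le hε hε1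
  obtain ⟨𝒜, ℬ, hdisj, hmul⟩ :=
    CrossDisjoint.exists_crossDisjoint_pow_mul_rpow_le hA hA1 hB hB1 hε0 h k
  have hA_le : ∑ A ∈ 𝒜, μA A ≤ 1 := hA1 ▸ sum_le_univ_sum_of_nonneg hA
  have hB_le : ∑ B ∈ ℬ, μB B ≤ 1 := hB1 ▸ sum_le_univ_sum_of_nonneg hB
  have hle := hk.trans hmul
  exact ⟨𝒜, ℬ, hle.trans (mul_le_of_le_one_right (sum_nonneg fun A _ => hA A) hB_le),
    hle.trans (mul_le_of_le_one_left (sum_nonneg fun B _ => hB B) hA_le), hdisj⟩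

/-- There is a universal constant `C > 0` such that for every `n ≥ 1`,
probability distributions `μA, μB` on `2^[n]`, and `ε` with `2^{-n} < ε < 1/2` such that
independently sampled sets are disjoint with probability at least `ε`, there exist families
`𝒜, ℬ` of measure at least `2^{-C√(n log₂(1/ε))}` that are fully cross-disjoint. -/
theorem statement0 :
    ∃ C : ℝ, 0 < C ∧ ∀ n : ℕ, 0 < n →
      ∀ μA μB : Finset (Fin n) → ℝ,
        (∀ A, 0 ≤ μA A) → (∑ A, μA A) = 1 →
        (∀ B, 0 ≤ μB B) → (∑ B, μB B) = 1 →
        ∀ ε : ℝ, (2 : ℝ) ^ (-(n : ℝ)) < ε → ε < 1 / 2 →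
          ε ≤ ∑ A, ∑ B, (if Disjoint A B then μA A * μB B else 0) →
          ∃ 𝒜 ℬ : Finset (Finset (Fin n)),
            (2 : ℝ) ^ (-(C * Real.sqrt (n * Real.logb 2 (1 / ε)))) ≤ ∑ A ∈ 𝒜, μA A ∧
            (2 : ℝ) ^ (-(C * Real.sqrt (n * Real.logb 2 (1 / ε)))) ≤ ∑ B ∈ ℬ, μB B ∧
            ∀ A ∈ 𝒜, ∀ B ∈ ℬ, Disjoint A B := by
  refine ⟨5, by norm_num, fun n _ μA μB hA hA1 hB hB1 ε hε hε2 h => ?_⟩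
  simpa only [Fintype.card_fin] using
    statement0_general hA hA1 hB hB1 (by simpa using hε.le) (by linarith) h
end

section
/- Let n ≥ 2 and ℓ ≥ 1 be integers, let μ_A and μ_B be probability distributions on the power set 2^[n], and let ε ∈ (0, 1/2) be a real number satisfying ε^ℓ ≥ 2^{-n} and P_{A∼μ_A, B∼μ_B}[A ∩ B = ∅] ≥ ε (the sets A and B are sampled independently). Then there exist families 𝒜, ℬ ⊆ 2^[n] with μ_A(𝒜) ≥ 2^{-3n/ℓ} and μ_B(ℬ) ≥ ε^ℓ/2 such that A ∩ B = ∅ for every pair (A, B) ∈ 𝒜 × ℬ. -/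
open Finset

/-!
The proof is by dependent random choice. Draw `A₁, …, A_ℓ` independently from `μA`, let `S` be their
union, and take `𝒜 = {A | A ⊆ S}` and `ℬ = {B | S ∩ B = ∅}`, which are cross-disjoint whatever `S`
is. By Jensen's inequality the expectation of `μB ℬ` is `E_B [P_A[A ∩ B = ∅] ^ ℓ] ≥ ε ^ ℓ`. If
`μA {A | A ⊆ T} < δ`, then `S ⊆ T` has probability less than `δ ^ ℓ`, so a union bound over the
`2 ^ n` sets `T` shows that `μA 𝒜 < δ` has probability at most `2 ^ n * δ ^ ℓ`. Hence some `S` has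
`μA 𝒜 ≥ δ` and `μB ℬ ≥ ε ^ ℓ - 2 ^ n * δ ^ ℓ`; the theorem takes `δ ^ ℓ = 2 ^ (-3n)`.

The argument runs unchanged in any finite distributive lattice with a least element and at most
`2 ^ n` elements, with joins in place of unions.
-/

/-- The weight of a tuple of `ℓ` independent samples from `μ`, i.e. the product distribution
`μ ^ ⊗ℓ` on `Fin ℓ → α`. -/
def iidWeight {α R : Type*} [CommSemiring R] (μ : α → R) {ℓ : ℕ} (p : Fin ℓ → α) : R :=
  ∏ i, μ (p i)

section Sampling

variable {α β : Type*} [Fintype α]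

lemma sum_iidWeight_filter_forall {R : Type*} [CommSemiring R] (μ : α → R) (ℓ : ℕ) (P : α → Prop)
    [DecidablePred P] :
    ∑ p : Fin ℓ → α with ∀ i, P (p i), iidWeight μ p = (∑ a with P a, μ a) ^ ℓ := by
  rw [sum_pow']
  refine sum_congr ?_ fun _ _ ↦ rfl
  ext p
  simp only [mem_filter_univ, Fintype.mem_piFinset]

variable {μ : α → ℝ}

lemma iidWeight_mem_stdSimplex (hμ : μ ∈ stdSimplex ℝ α) (ℓ : ℕ) :
    iidWeight μ ∈ stdSimplex ℝ (Fin ℓ → α) := by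
  refine ⟨fun p ↦ prod_nonneg fun i _ ↦ hμ.1 (p i), ?_⟩
  simp only [iidWeight]
  rw [← Fintype.sum_pow, hμ.2, one_pow]

lemma exists_sum_mul_le_of_mem_stdSimplex (hμ : μ ∈ stdSimplex ℝ α) (X : α → ℝ) :
    ∃ a, ∑ b, μ b * X b ≤ X a := by
  obtain ⟨a, -, ha⟩ := (convexOn_id convex_univ).exists_ge_of_centerMass (t := univ) (w := μ)
    (p := X) (fun b _ ↦ hμ.1 b) (hμ.2 ▸ zero_lt_one) fun b _ ↦ Set.mem_univ (X b)
  rw [centerMass_eq_of_sum_1 _ _ hμ.2] at ha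
  exact ⟨a, ha⟩

lemma pow_sum_sum_rel_le_sum_iidWeight_mul [Fintype β] {ν : β → ℝ} (hμ : ∀ a, 0 ≤ μ a)
    (hν : ν ∈ stdSimplex ℝ β) (r : α → β → Prop) [DecidableRel r] (ℓ : ℕ) :
    (∑ a, ∑ b, if r a b then μ a * ν b else 0) ^ ℓ ≤
      ∑ p : Fin ℓ → α, iidWeight μ p * ∑ b with ∀ i, r (p i) b, ν b := by
  calc (∑ a, ∑ b, if r a b then μ a * ν b else 0) ^ ℓ
      = (∑ b, ν b * ∑ a with r a b, μ a) ^ ℓ := by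
        rw [sum_comm]
        simp only [mul_sum, sum_filter, mul_ite, mul_zero, mul_comm]
    _ ≤ ∑ b, ν b * (∑ a with r a b, μ a) ^ ℓ :=
        Real.pow_arith_mean_le_arith_mean_pow univ ν _ (fun b _ ↦ hν.1 b) hν.2
          (fun _ _ ↦ sum_nonneg fun a _ ↦ hμ a) ℓ
    _ = ∑ p : Fin ℓ → α, iidWeight μ p * ∑ b with ∀ i, r (p i) b, ν b := by
        simp only [← sum_iidWeight_filter_forall]
        simp only [mul_sum, sum_filter, mul_ite, mul_zero]
        rw [sum_comm]
        simp only [mul_comm]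

lemma sum_iidWeight_filter_sum_lt_le [SemilatticeSup α] [OrderBot α] [DecidableLE α]
    (hμ : ∀ a, 0 ≤ μ a) {δ : ℝ} (hδ : 0 ≤ δ) (ℓ : ℕ) :
    ∑ p : Fin ℓ → α with ∑ a with a ≤ univ.sup p, μ a < δ, iidWeight μ p ≤
      Fintype.card α * δ ^ ℓ := by
  classical
  have hw (p : Fin ℓ → α) : 0 ≤ iidWeight μ p := prod_nonneg fun i _ ↦ hμ (p i)
  let light : Finset α := {t | ∑ a with a ≤ t, μ a < δ}
  have union_bound : ∑ p : Fin ℓ → α with univ.sup p ∈ light, iidWeight μ p ≤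
      ∑ t ∈ light, ∑ p : Fin ℓ → α with ∀ i, p i ≤ t, iidWeight μ p := by
    rw [← sum_fiberwise_of_maps_to (g := univ.sup) (t := light) fun p hp ↦ (mem_filter.1 hp).2]
    refine sum_le_sum fun t _ ↦ sum_le_sum_of_subset_of_nonneg (fun p hp ↦ ?_) fun p _ _ ↦ hw p
    obtain rfl := (mem_filter.1 hp).2
    exact mem_filter.2 ⟨mem_univ p, fun i ↦ le_sup (mem_univ i)⟩
  calc ∑ p : Fin ℓ → α with ∑ a with a ≤ univ.sup p, μ a < δ, iidWeight μ p
      ≤ ∑ t ∈ light, ∑ p : Fin ℓ → α with ∀ i, p i ≤ t, iidWeight μ p := by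
        simpa only [light, mem_filter_univ] using union_bound
    _ = ∑ t ∈ light, (∑ a with a ≤ t, μ a) ^ ℓ :=
        sum_congr rfl fun t _ ↦ sum_iidWeight_filter_forall μ ℓ (· ≤ t)
    _ ≤ ∑ _t ∈ light, δ ^ ℓ := sum_le_sum fun _ ht ↦
        pow_le_pow_left₀ (sum_nonneg fun a _ ↦ hμ a) (mem_filter.1 ht).2.le ℓ
    _ ≤ ∑ _t : α, δ ^ ℓ :=
        sum_le_sum_of_subset_of_nonneg (subset_univ light) fun _ _ _ ↦ pow_nonneg hδ ℓ
    _ = Fintype.card α * δ ^ ℓ := by rw [sum_const, card_univ, nsmul_eq_mul]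

end Sampling

lemma exists_le_sum_le_and_le_sum_disjoint {α : Type*} [DistribLattice α] [OrderBot α] [Fintype α]
    [DecidableLE α] [DecidableRel (Disjoint : α → α → Prop)] {μ ν : α → ℝ}
    (hμ : μ ∈ stdSimplex ℝ α) (hν : ν ∈ stdSimplex ℝ α) {ε δ : ℝ} (hε : 0 ≤ ε) (hδ : 0 ≤ δ) {ℓ : ℕ}
    (hδε : Fintype.card α * δ ^ ℓ < ε ^ ℓ)
    (hdisj : ε ≤ ∑ a, ∑ b, if Disjoint a b then μ a * ν b else 0) :
    ∃ s : α, δ ≤ ∑ a with a ≤ s, μ a ∧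
      ε ^ ℓ - Fintype.card α * δ ^ ℓ ≤ ∑ b with Disjoint s b, ν b := by
  let lower (s : α) : ℝ := ∑ a with a ≤ s, μ a
  let avoid (s : α) : ℝ := ∑ b with Disjoint s b, ν b
  have avoid_le_one (s : α) : avoid s ≤ 1 := hν.2 ▸
    sum_le_sum_of_subset_of_nonneg (filter_subset _ _) fun b _ _ ↦ hν.1 b
  have le_expect_avoid : ε ^ ℓ ≤ ∑ p : Fin ℓ → α, iidWeight μ p * avoid (univ.sup p) := by
    have jensen := pow_sum_sum_rel_le_sum_iidWeight_mul hμ.1 hν Disjoint ℓ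
    simpa only [avoid, Finset.disjoint_sup_left, mem_univ, true_imp_iff] using
      (pow_le_pow_left₀ hε hdisj ℓ).trans jensen
  have prob_lower_lt := sum_iidWeight_filter_sum_lt_le hμ.1 hδ ℓ
  -- Subtracting `1` from `avoid` on the bad event leaves its expectation positive, and forces any
  -- tuple attaining at least that expectation to lie outside the bad event.
  obtain ⟨p, hp⟩ := exists_sum_mul_le_of_mem_stdSimplex (iidWeight_mem_stdSimplex hμ ℓ)
    fun p ↦ avoid (univ.sup p) - if lower (univ.sup p) < δ then 1 else 0
  simp only [mul_sub, sum_sub_distrib, mul_ite, mul_one, mul_zero, ← sum_filter] at hp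
  have le_altered := (sub_le_sub le_expect_avoid prob_lower_lt).trans hp
  have lower_ge : δ ≤ lower (univ.sup p) := by
    by_contra! hlt
    rw [if_pos hlt] at le_altered
    linarith [avoid_le_one (univ.sup p)]
  rw [if_neg lower_ge.not_gt, sub_zero] at le_altered
  exact ⟨univ.sup p, lower_ge, le_altered⟩

lemma two_pow_mul_rpow_neg_pow_le_half {n ℓ : ℕ} (hn : n ≠ 0) (hℓ : ℓ ≠ 0) {e : ℝ}
    (he : (2 : ℝ) ^ (-(n : ℝ)) ≤ e) :
    2 ^ n * ((2 : ℝ) ^ (-(3 * (n : ℝ) / (ℓ : ℝ)))) ^ ℓ ≤ e / 2 := by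
  have hpow : ((2 : ℝ) ^ (-(3 * (n : ℝ) / (ℓ : ℝ)))) ^ ℓ = (((2 : ℝ) ^ n)⁻¹) ^ 3 := by
    rw [← Real.rpow_natCast 2 n, ← Real.rpow_neg zero_le_two, ← Real.rpow_mul_natCast zero_le_two,
      ← Real.rpow_mul_natCast zero_le_two]
    congr 1
    field_simp
    norm_num
  rw [Real.rpow_neg zero_le_two, Real.rpow_natCast] at he
  have hhalf : ((2 : ℝ) ^ n)⁻¹ ≤ 2⁻¹ :=
    inv_anti₀ zero_lt_two (le_self_pow₀ one_le_two hn)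
  calc 2 ^ n * ((2 : ℝ) ^ (-(3 * (n : ℝ) / (ℓ : ℝ)))) ^ ℓ = ((2 : ℝ) ^ n)⁻¹ * ((2 : ℝ) ^ n)⁻¹ := by
        rw [hpow]
        field_simp
    _ ≤ e * 2⁻¹ := mul_le_mul he hhalf (by positivity) (he.trans' (by positivity))
    _ = e / 2 := (div_eq_mul_inv e 2).symm

theorem statement1_general {α : Type*} [DistribLattice α] [OrderBot α] [Fintype α]
    [DecidableRel (Disjoint : α → α → Prop)] {n ℓ : ℕ} (hn : n ≠ 0) (hℓ : ℓ ≠ 0)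
    (hcard : Fintype.card α ≤ 2 ^ n) {μ ν : α → ℝ}
    (hμ : μ ∈ stdSimplex ℝ α) (hν : ν ∈ stdSimplex ℝ α) {ε : ℝ} (hε : 0 < ε)
    (hεn : (2 : ℝ) ^ (-(n : ℝ)) ≤ ε ^ ℓ)
    (hdisj : ε ≤ ∑ a, ∑ b, if Disjoint a b then μ a * ν b else 0) :
    ∃ 𝒜 ℬ : Finset α,
      (2 : ℝ) ^ (-(3 * (n : ℝ) / (ℓ : ℝ))) ≤ ∑ a ∈ 𝒜, μ a ∧
      ε ^ ℓ / 2 ≤ ∑ b ∈ ℬ, ν b ∧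
      ∀ a ∈ 𝒜, ∀ b ∈ ℬ, Disjoint a b := by
  classical
  set δ : ℝ := (2 : ℝ) ^ (-(3 * (n : ℝ) / (ℓ : ℝ)))
  have hδ : 0 ≤ δ := by positivity
  have herror : Fintype.card α * δ ^ ℓ ≤ ε ^ ℓ / 2 :=
    (mul_le_mul_of_nonneg_right (mod_cast hcard) (pow_nonneg hδ ℓ)).trans
      (two_pow_mul_rpow_neg_pow_le_half hn hℓ hεn)
  have hεℓ : 0 < ε ^ ℓ := pow_pos hε ℓ
  obtain ⟨s, hlower, havoid⟩ :=
    exists_le_sum_le_and_le_sum_disjoint hμ hν hε.le hδ (by linarith) hdisj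
  refine ⟨univ.filter (· ≤ s), univ.filter (Disjoint s), hlower, by linarith, fun a ha b hb ↦ ?_⟩
  exact (mem_filter.1 hb).2.mono_left (mem_filter.1 ha).2

/-- quantitative version of the main lemma with explicit parameter `ℓ`. -/
theorem statement1 (n ℓ : ℕ) (hn : 2 ≤ n) (hℓ : 1 ≤ ℓ)
    (μA μB : Finset (Fin n) → ℝ)
    (hA0 : ∀ A, 0 ≤ μA A) (hA1 : (∑ A, μA A) = 1)
    (hB0 : ∀ B, 0 ≤ μB B) (hB1 : (∑ B, μB B) = 1)
    (ε : ℝ) (hε0 : 0 < ε) (hε2 : ε < 1 / 2)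
    (hεn : (2 : ℝ) ^ (-(n : ℝ)) ≤ ε ^ ℓ)
    (hP : ε ≤ ∑ A, ∑ B, (if Disjoint A B then μA A * μB B else 0)) :
    ∃ 𝒜 ℬ : Finset (Finset (Fin n)),
      (2 : ℝ) ^ (-(3 * (n : ℝ) / (ℓ : ℝ))) ≤ ∑ A ∈ 𝒜, μA A ∧
      ε ^ ℓ / 2 ≤ ∑ B ∈ ℬ, μB B ∧
      ∀ A ∈ 𝒜, ∀ B ∈ ℬ, Disjoint A B :=
  statement1_general (by omega) (by omega) (by simp) ⟨hA0, hA1⟩ ⟨hB0, hB1⟩ hε0 hεn hP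
end

section
/- Let n and ℓ be positive integers and let μ_A be a probability distribution on the power set 2^[n]. Sample sets A₁, …, A_ℓ independently, each according to μ_A, and set U = A₁ ∪ ⋯ ∪ A_ℓ. Then with probability at least 1 − 2^{-2n} (over the choice of A₁, …, A_ℓ), the family 𝒜 = {A ⊆ [n] : A ⊆ U} satisfies μ_A(𝒜) ≥ 2^{-3n/ℓ}. -/
open Finset Classical

/-! Union bound over the possible values `u` of the join of the samples. If the join equals `u`,
then every sample lies below `u`, an event of probability `F u ^ ℓ`, where `F u` is the mass of the
elements below `u`. The values `u` with `F u < q` therefore contribute at most `N * q ^ ℓ`, where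
`N` is the number of elements. On the power set of `[n]`, `N = 2 ^ n` and `q = 2 ^ (-3n/ℓ)` give
`N * q ^ ℓ = 2 ^ (-2n)`. -/

section ProductWeights

variable {ι α R : Type*} [Fintype ι] [DecidableEq ι] [Fintype α]

theorem sum_prod_filter_forall_eq_pow [CommSemiring R] (f : α → R) (p : α → Prop)
    [DecidablePred p] :
    ∑ t : ι → α with ∀ i, p (t i), ∏ i, f (t i) = (∑ a with p a, f a) ^ Fintype.card ι := by
  have h_pi : ({t : ι → α | ∀ i, p (t i)} : Finset (ι → α)) =
      Fintype.piFinset fun _ ↦ ({a | p a} : Finset α) := by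
    ext t
    simp only [mem_filter_univ, Fintype.mem_piFinset]
  rw [h_pi, ← prod_univ_sum, prod_const, card_univ]

variable [SemilatticeSup α] [OrderBot α] [DecidableLE α] {f : α → R}

theorem sum_prod_filter_sup_eq_le_pow [DecidableEq α] [CommSemiring R] [PartialOrder R]
    [IsOrderedRing R] (hf : 0 ≤ f) (u : α) :
    ∑ t : ι → α with univ.sup t = u, ∏ i, f (t i) ≤
      (∑ a with a ≤ u, f a) ^ Fintype.card ι := by
  rw [← sum_prod_filter_forall_eq_pow]
  refine sum_le_sum_of_subset_of_nonneg ?_ fun t _ _ ↦ prod_nonneg fun i _ ↦ hf (t i)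
  exact monotone_filter_right _ fun t _ ht i ↦ ht ▸ le_sup (mem_univ i)

theorem sum_prod_filter_sum_le_sup_lt_le [CommSemiring R] [LinearOrder R] [IsOrderedRing R]
    (hf : 0 ≤ f) {q : R} (hq : 0 ≤ q) :
    ∑ t : ι → α with ∑ a with a ≤ univ.sup t, f a < q, ∏ i, f (t i) ≤
      Fintype.card α * q ^ Fintype.card ι := by
  set light : Finset α := {u | ∑ a with a ≤ u, f a < q} with h_light
  calc ∑ t : ι → α with ∑ a with a ≤ univ.sup t, f a < q, ∏ i, f (t i)
      = ∑ u ∈ light, ∑ t : ι → α with univ.sup t = u, ∏ i, f (t i) := by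
        simpa only [h_light, mem_filter_univ] using
          (sum_fiberwise_eq_sum_filter univ light univ.sup fun t : ι → α ↦ ∏ i, f (t i)).symm
    _ ≤ ∑ _u ∈ light, q ^ Fintype.card ι := by
        refine sum_le_sum fun u hu ↦ (sum_prod_filter_sup_eq_le_pow hf u).trans ?_
        exact pow_le_pow_left₀ (sum_nonneg fun a _ ↦ hf a) ((mem_filter_univ u).mp hu).le _
    _ ≤ Fintype.card α * q ^ Fintype.card ι := by
        rw [sum_const, nsmul_eq_mul]
        gcongr
        exact card_le_univ light

theorem statement2_general [CommRing R] [LinearOrder R] [IsOrderedRing R]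
    (hf : 0 ≤ f) (hf_sum : ∑ a, f a = 1) {q : R} (hq : 0 ≤ q) :
    1 - Fintype.card α * q ^ Fintype.card ι ≤
      ∑ t : ι → α with q ≤ ∑ a with a ≤ univ.sup t, f a, ∏ i, f (t i) := by
  have h_total : ∑ t : ι → α, ∏ i, f (t i) = 1 := by
    rw [← Fintype.prod_sum fun _ : ι ↦ f, hf_sum, prod_const_one]
  rw [sub_le_iff_le_add, ← h_total,
    ← sum_filter_add_sum_filter_not univ fun t : ι → α ↦ q ≤ ∑ a with a ≤ univ.sup t, f a]
  simp only [not_le]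
  gcongr
  exact sum_prod_filter_sum_le_sup_lt_le hf hq

end ProductWeights

theorem pow_mul_rpow_neg_div_pow {b : ℝ} (hb : 0 < b) (n : ℕ) (x : ℝ) {ℓ : ℕ} (hℓ : ℓ ≠ 0) :
    b ^ n * (b ^ (-(x / ℓ))) ^ ℓ = b ^ (n - x) := by
  rw [← Real.rpow_mul_natCast hb.le, neg_mul, div_mul_cancel₀ _ (Nat.cast_ne_zero.mpr hℓ),
    ← Real.rpow_natCast, ← Real.rpow_add hb, ← sub_eq_add_neg]

/-- with probability at least `1 - 2^{-2n}` over `ℓ` independent samples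
`A₁, …, A_ℓ ∼ μA`, the family of sets contained in `U = A₁ ∪ ⋯ ∪ A_ℓ` has
`μA`-measure at least `2^{-3n/ℓ}`. -/
theorem statement2 (n ℓ : ℕ) (hn : 0 < n) (hℓ : 0 < ℓ)
    (μA : Finset (Fin n) → ℝ)
    (hA0 : ∀ A, 0 ≤ μA A) (hA1 : (∑ A, μA A) = 1) :
    1 - (2 : ℝ) ^ (-(2 * (n : ℝ))) ≤
      ∑ T ∈ Finset.univ.filter
          (fun T : Fin ℓ → Finset (Fin n) =>
            (2 : ℝ) ^ (-(3 * (n : ℝ) / (ℓ : ℝ))) ≤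
              ∑ A ∈ Finset.univ.filter (fun A => A ⊆ Finset.univ.sup T), μA A),
        ∏ i, μA (T i) := by
  rw [show -(2 * (n : ℝ)) = n - 3 * n by ring, ← pow_mul_rpow_neg_div_pow two_pos n _ hℓ.ne']
  simpa using statement2_general (ι := Fin ℓ) hA0 hA1 (Real.rpow_nonneg zero_le_two _)
end

section
/- Let n and ℓ be positive integers, let μ_A and μ_B be probability distributions on the power set 2^[n], and let ε ∈ (0, 1) satisfy P_{A∼μ_A, B∼μ_B}[A ∩ B = ∅] ≥ ε (the sets A and B are sampled independently). Sample sets A₁, …, A_ℓ independently, each according to μ_A, and set U = A₁ ∪ ⋯ ∪ A_ℓ. Then P[ μ_B({B ⊆ [n] : B ∩ U = ∅}) ≥ ε^ℓ/2 ] > ε^ℓ/2, where the probability is over the choice of A₁, …, A_ℓ. -/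
open Finset Classical

/-!
For a fixed `b`, independence of the samples `T i` makes the probability that all of them are
related to `b` equal to `p b ^ ℓ`, where `p b` is the probability for one sample. Exchanging the
order of the expectations and applying the power mean inequality, the expected measure of the common
neighbourhood of the samples is `𝔼[p ^ ℓ] ≥ 𝔼[p] ^ ℓ ≥ ε ^ ℓ`. This measure never exceeds `1`, so it
cannot have such a large mean without reaching half of it with noticeable probability.
-/

section ReverseMarkov

variable {Ω R : Type*} [LinearOrder R] {s : Finset Ω} {w g : Ω → R} {c : R}

lemma sum_mul_le_sum_filter_mul_add [Semiring R] [IsOrderedRing R] {M : R}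
    (hw : ∀ x ∈ s, 0 ≤ w x) (hg : ∀ x ∈ s, g x ≤ M) :
    ∑ x ∈ s, w x * g x ≤ (∑ x ∈ s with c ≤ g x, w x) * M + (∑ x ∈ s with ¬c ≤ g x, w x) * c := by
  rw [← sum_filter_add_sum_filter_not s (fun x ↦ c ≤ g x), sum_mul, sum_mul]
  gcongr with x hx x hx
  · exact hw x (mem_filter.mp hx).1
  · exact hg x (mem_filter.mp hx).1
  · exact hw x (mem_filter.mp hx).1
  · exact (not_le.mp (mem_filter.mp hx).2).le

lemma lt_sum_filter_of_two_mul_le_sum_mul [CommRing R] [IsStrictOrderedRing R]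
    (hw : ∀ x ∈ s, 0 ≤ w x) (hw_sum : ∑ x ∈ s, w x = 1)
    (hg : ∀ x ∈ s, g x ≤ 1) (hc : 0 < c) (hmean : 2 * c ≤ ∑ x ∈ s, w x * g x) :
    c < ∑ x ∈ s with c ≤ g x, w x := by
  set P := ∑ x ∈ s with c ≤ g x, w x
  have hcompl : ∑ x ∈ s with ¬c ≤ g x, w x = 1 - P := by
    rw [← hw_sum, ← sum_filter_add_sum_filter_not s (fun x ↦ c ≤ g x) w, add_sub_cancel_left]
  have hupper : 2 * c ≤ P * 1 + (1 - P) * c :=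
    hcompl ▸ hmean.trans (sum_mul_le_sum_filter_mul_add hw hg)
  have hP_nonneg : 0 ≤ P := sum_nonneg fun x hx ↦ hw x (mem_filter.mp hx).1
  have hle : c + P * c ≤ P := by linarith
  have hP_pos : 0 < P := hc.trans_le ((le_add_of_nonneg_right (by positivity)).trans hle)
  exact (lt_add_of_pos_right c (mul_pos hP_pos hc)).trans_le hle

end ReverseMarkov

lemma sum_filter_forall_prod_eq_pow {ι α R : Type*} [Fintype ι] [DecidableEq ι] [Fintype α]
    [CommSemiring R] (μ : α → R) (p : α → Prop) [DecidablePred p] :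
    ∑ T : ι → α with ∀ i, p (T i), ∏ i, μ (T i) = (∑ a with p a, μ a) ^ Fintype.card ι := by
  have hfilter : ({T : ι → α | ∀ i, p (T i)} : Finset (ι → α)) =
      Fintype.piFinset fun _ ↦ {a | p a} := by
    ext T
    simp
  rw [hfilter, sum_prod_piFinset, prod_const, card_univ]

section CommonNeighbors

variable {ι α β : Type*} [Fintype ι] [DecidableEq ι] [Fintype α] [Fintype β]
  (r : α → β → Prop) [DecidableRel r]

lemma sum_prod_mul_sum_filter_forall_eq {R : Type*} [CommSemiring R] (μ : α → R) (ν : β → R) :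
    ∑ T : ι → α, (∏ i, μ (T i)) * ∑ b with ∀ i, r (T i) b, ν b =
      ∑ b, ν b * (∑ a with r a b, μ a) ^ Fintype.card ι := by
  simp_rw [← sum_filter_forall_prod_eq_pow, mul_sum, sum_filter]
  rw [sum_comm]
  simp only [mul_comm]

lemma pow_sum_le_sum_prod_mul_sum_filter_forall {μ : α → ℝ} {ν : β → ℝ} (hμ : ∀ a, 0 ≤ μ a)
    (hν : ∀ b, 0 ≤ ν b) (hν_sum : ∑ b, ν b = 1) :
    (∑ a, ∑ b with r a b, μ a * ν b) ^ Fintype.card ι ≤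
      ∑ T : ι → α, (∏ i, μ (T i)) * ∑ b with ∀ i, r (T i) b, ν b := by
  have hmean : ∑ a, ∑ b with r a b, μ a * ν b = ∑ b, ν b * ∑ a with r a b, μ a := by
    simp_rw [mul_sum, sum_filter]
    rw [sum_comm]
    simp only [mul_comm]
  rw [hmean, sum_prod_mul_sum_filter_forall_eq]
  exact Real.pow_arith_mean_le_arith_mean_pow _ _ _ (fun b _ ↦ hν b) hν_sum
    (fun b _ ↦ sum_nonneg fun a _ ↦ hμ a) _

theorem statement4_general {μ : α → ℝ} {ν : β → ℝ} (hμ : ∀ a, 0 ≤ μ a) (hμ_sum : ∑ a, μ a = 1)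
    (hν : ∀ b, 0 ≤ ν b) (hν_sum : ∑ b, ν b = 1) {ε : ℝ} (hε : 0 < ε)
    (hr : ε ≤ ∑ a, ∑ b with r a b, μ a * ν b) :
    ε ^ Fintype.card ι / 2 <
      ∑ T : ι → α with ε ^ Fintype.card ι / 2 ≤ ∑ b with ∀ i, r (T i) b, ν b, ∏ i, μ (T i) := by
  have hprod_sum : ∑ T : ι → α, ∏ i, μ (T i) = 1 := by
    simpa [hμ_sum] using sum_filter_forall_prod_eq_pow μ fun _ ↦ True
  have hle_one (T : ι → α) : ∑ b with ∀ i, r (T i) b, ν b ≤ 1 :=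
    hν_sum ▸ sum_le_sum_of_subset_of_nonneg (filter_subset _ _) fun b _ _ ↦ hν b
  refine lt_sum_filter_of_two_mul_le_sum_mul (fun T _ ↦ prod_nonneg fun i _ ↦ hμ (T i)) hprod_sum
    (fun T _ ↦ hle_one T) (by positivity) ?_
  calc 2 * (ε ^ Fintype.card ι / 2) = ε ^ Fintype.card ι := mul_div_cancel₀ _ two_ne_zero
    _ ≤ (∑ a, ∑ b with r a b, μ a * ν b) ^ Fintype.card ι := by gcongr
    _ ≤ _ := pow_sum_le_sum_prod_mul_sum_filter_forall r hμ hν hν_sum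

end CommonNeighbors

/-- with probability greater than `ε^ℓ/2` over the samples `A₁,…,A_ℓ ∼ μA`,
the family `{B : B ∩ U = ∅}` (where `U = A₁ ∪ ⋯ ∪ A_ℓ`) has `μB`-measure at least `ε^ℓ/2`. -/
theorem statement4 (n ℓ : ℕ) (hn : 0 < n) (hℓ : 0 < ℓ)
    (μA μB : Finset (Fin n) → ℝ)
    (hA0 : ∀ A, 0 ≤ μA A) (hA1 : (∑ A, μA A) = 1)
    (hB0 : ∀ B, 0 ≤ μB B) (hB1 : (∑ B, μB B) = 1)
    (ε : ℝ) (hε0 : 0 < ε) (hε1 : ε < 1)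
    (hP : ε ≤ ∑ A, ∑ B, (if Disjoint A B then μA A * μB B else 0)) :
    ε ^ ℓ / 2 <
      ∑ T ∈ Finset.univ.filter
          (fun T : Fin ℓ → Finset (Fin n) =>
            ε ^ ℓ / 2 ≤
              ∑ B ∈ Finset.univ.filter (fun B => Disjoint B (Finset.univ.sup T)), μB B),
        ∏ i, μA (T i) := by
  simpa [Finset.disjoint_sup_right, disjoint_comm] using
    statement4_general (ι := Fin ℓ) Disjoint hA0 hA1 hB0 hB1 hε0 (by simpa [sum_filter] using hP)
end

section
/- (Classical Substate theorem of Jain, Radhakrishnan, and Sen.) Let ε > 0, let 𝒜 and ℬ be finite sets, and let μ be a probability distribution on 𝒜 × ℬ with marginals μ_A, μ_B whose mutual information I(A:B) = Σ_{a∈𝒜} Σ_{b∈ℬ} μ(a,b) · log₂( μ(a,b) / (μ_A(a)·μ_B(b)) ) is at most k. Then there exists a probability distribution ν on 𝒜 × ℬ, with marginals ν_A and ν_B, such that ‖μ − ν‖_TV ≤ ε and ν(a,b) ≤ 2^{4(k+1)/ε} · ν_A(a) · ν_B(b) for every (a, b) ∈ 𝒜 × ℬ (i.e., I_∞(ν)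 ≤ 4(k+1)/ε). -/
open Finset Classical

/-!
The substate `ν` keeps both marginals of `μ`: a part `0 ≤ u ≤ μ` of mass `m` is cut out of `μ` and
replaced by the independent weight with the same marginals and mass as `u`. This moves mass at most
`m`, and the replacement is at most `q / m`, where `q = μ_A ⊗ μ_B`. It remains to choose `u` of mass
between `ε / 2` and `ε` so that the rest `μ - u` is at most a suitable multiple of `q`.

As `μ` and `q` have the same mass, the relative entropy of `μ` with respect to `q` is the sum of the
nonnegative terms `q * klFun (μ / q)`, and such a term is at least `(log t - 1) * μ` wherever
`t * q < μ`. Markov's inequality therefore bounds the mass of `μ` there by `ε / 2` when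
`t = 2 ^ (2 * (k + 1) / ε)` and `ε ≤ 1`. The part `u` consists of `μ` on this set together with an
`ε / 2` fraction of `μ` elsewhere, which keeps `1 / m` under control. For `ε ≥ 1` all of `μ` may be
cut out, so that `ν = q`.
-/

section Marginals

variable {α β M : Type*} [AddCommMonoid M]

/-- The marginal on the first factor of a weight on a product. -/
def fstMarginal [Fintype β] (μ : α × β → M) (a : α) : M := ∑ b, μ (a, b)

/-- The marginal on the second factor of a weight on a product. -/
def sndMarginal [Fintype α] (μ : α × β → M) (b : β) : M := ∑ a, μ (a, b)

variable [Fintype α] [Fintype β]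

lemma sum_fstMarginal (μ : α × β → M) : ∑ a, fstMarginal μ a = ∑ p, μ p :=
  (Fintype.sum_prod_type μ).symm

lemma sum_sndMarginal (μ : α × β → M) : ∑ b, sndMarginal μ b = ∑ p, μ p :=
  (Fintype.sum_prod_type_right μ).symm

end Marginals

section MulMarginals

variable {α β R : Type*} [Fintype α] [Fintype β] [CommSemiring R]

/-- The product of the two marginals of a weight, `μ_A ⊗ μ_B` in tensor notation. -/
def mulMarginals (μ : α × β → R) (p : α × β) : R := fstMarginal μ p.1 * sndMarginal μ p.2

lemma fstMarginal_mulMarginals (μ : α × β → R) (a : α) :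
    fstMarginal (mulMarginals μ) a = fstMarginal μ a * ∑ p, μ p := by
  rw [← sum_sndMarginal, mul_sum]
  rfl

lemma sndMarginal_mulMarginals (μ : α × β → R) (b : β) :
    sndMarginal (mulMarginals μ) b = (∑ p, μ p) * sndMarginal μ b := by
  rw [← sum_fstMarginal, sum_mul]
  rfl

lemma sum_mulMarginals (μ : α × β → R) : ∑ p, mulMarginals μ p = (∑ p, μ p) ^ 2 := by
  simp only [← sum_fstMarginal (mulMarginals μ), fstMarginal_mulMarginals, ← sum_mul,
    sum_fstMarginal, sq]

variable [PartialOrder R] [IsOrderedRing R] {μ u : α × β → R}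

lemma mulMarginals_nonneg (hμ : 0 ≤ μ) : 0 ≤ mulMarginals μ := fun _ =>
  mul_nonneg (sum_nonneg fun _ _ => hμ _) (sum_nonneg fun _ _ => hμ _)

lemma mulMarginals_le_mulMarginals (hu : 0 ≤ u) (huμ : u ≤ μ) :
    mulMarginals u ≤ mulMarginals μ := fun _ =>
  mul_le_mul (sum_le_sum fun _ _ => huμ _) (sum_le_sum fun _ _ => huμ _)
    (sum_nonneg fun _ _ => hu _) (sum_nonneg fun _ _ => (hu.trans huμ) _)

lemma eq_zero_of_mulMarginals_eq_zero [NoZeroDivisors R] (hμ : 0 ≤ μ) {p : α × β}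
    (hp : mulMarginals μ p = 0) : μ p = 0 := by
  rcases mul_eq_zero.mp hp with h | h
  · exact (sum_eq_zero_iff_of_nonneg fun b _ => hμ (p.1, b)).mp h p.2 (mem_univ _)
  · exact (sum_eq_zero_iff_of_nonneg fun a _ => hμ (a, p.2)).mp h p.1 (mem_univ _)

end MulMarginals

section Resample

variable {α β 𝕜 : Type*} [Fintype α] [Fintype β] [Field 𝕜]

/-- The independent weight with the same marginals and the same mass as `u`. It is `0` when `u` has
mass `0`, by division by zero. -/
def decouple (u : α × β → 𝕜) (p : α × β) : 𝕜 := mulMarginals u p / ∑ p, u p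

/-- The weight `μ` with its part `u` replaced by the independent weight `decouple u`. -/
def resample (μ u : α × β → 𝕜) : α × β → 𝕜 := μ - u + decouple u

lemma fstMarginal_decouple {u : α × β → 𝕜} (hu : ∑ p, u p ≠ 0) :
    fstMarginal (decouple u) = fstMarginal u := by
  funext a
  calc fstMarginal (decouple u) a = fstMarginal (mulMarginals u) a / ∑ p, u p :=
        (sum_div _ _ _).symm
    _ = fstMarginal u a := by rw [fstMarginal_mulMarginals, mul_div_cancel_right₀ _ hu]

lemma sndMarginal_decouple {u : α × β → 𝕜} (hu : ∑ p, u p ≠ 0) :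
    sndMarginal (decouple u) = sndMarginal u := by
  funext b
  calc sndMarginal (decouple u) b = sndMarginal (mulMarginals u) b / ∑ p, u p :=
        (sum_div _ _ _).symm
    _ = sndMarginal u b := by rw [sndMarginal_mulMarginals, mul_div_cancel_left₀ _ hu]

lemma sum_decouple {u : α × β → 𝕜} (hu : ∑ p, u p ≠ 0) : ∑ p, decouple u p = ∑ p, u p := by
  rw [← sum_fstMarginal, fstMarginal_decouple hu, sum_fstMarginal]

lemma fstMarginal_resample (μ : α × β → 𝕜) {u : α × β → 𝕜} (hu : ∑ p, u p ≠ 0) :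
    fstMarginal (resample μ u) = fstMarginal μ := by
  funext a
  calc fstMarginal (resample μ u) a
      = fstMarginal μ a - fstMarginal u a + fstMarginal (decouple u) a := by
        simp only [fstMarginal, resample, Pi.add_apply, Pi.sub_apply, sum_add_distrib,
          sum_sub_distrib]
    _ = fstMarginal μ a := by rw [fstMarginal_decouple hu, sub_add_cancel]

lemma sndMarginal_resample (μ : α × β → 𝕜) {u : α × β → 𝕜} (hu : ∑ p, u p ≠ 0) :
    sndMarginal (resample μ u) = sndMarginal μ := by
  funext b
  calc sndMarginal (resample μ u) b
      = sndMarginal μ b - sndMarginal u b + sndMarginal (decouple u) b := by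
        simp only [sndMarginal, resample, Pi.add_apply, Pi.sub_apply, sum_add_distrib,
          sum_sub_distrib]
    _ = sndMarginal μ b := by rw [sndMarginal_decouple hu, sub_add_cancel]

variable [LinearOrder 𝕜] [IsStrictOrderedRing 𝕜] {μ u : α × β → 𝕜}

lemma decouple_nonneg (hu : 0 ≤ u) : 0 ≤ decouple u := fun p =>
  div_nonneg (mulMarginals_nonneg hu p) (sum_nonneg fun _ _ => hu _)

lemma resample_nonneg (hu : 0 ≤ u) (huμ : u ≤ μ) : 0 ≤ resample μ u :=
  add_nonneg (sub_nonneg.mpr huμ) (decouple_nonneg hu)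

lemma abs_sum_sub_sum_resample_le (μ : α × β → 𝕜) (hu : 0 ≤ u) (hm : ∑ p, u p ≠ 0)
    (S : Finset (α × β)) : |∑ p ∈ S, μ p - ∑ p ∈ S, resample μ u p| ≤ ∑ p, u p := by
  have hdiff : ∑ p ∈ S, μ p - ∑ p ∈ S, resample μ u p =
      ∑ p ∈ S, u p - ∑ p ∈ S, decouple u p := by
    simp only [resample, Pi.add_apply, Pi.sub_apply, sum_add_distrib, sum_sub_distrib]
    ring
  rw [hdiff]
  exact abs_sub_le_of_nonneg_of_le (sum_nonneg fun _ _ => hu _) (sum_le_univ_sum_of_nonneg hu)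
    (sum_nonneg fun _ _ => decouple_nonneg hu _)
    (sum_decouple hm ▸ sum_le_univ_sum_of_nonneg (decouple_nonneg hu))

lemma resample_le (hu : 0 ≤ u) (huμ : u ≤ μ) {t : 𝕜} (ht : μ - u ≤ t • mulMarginals μ) :
    resample μ u ≤ (t + (∑ p, u p)⁻¹) • mulMarginals μ := by
  have hdecouple : decouple u ≤ (∑ p, u p)⁻¹ • mulMarginals μ := fun p => by
    rw [decouple, div_eq_inv_mul]
    exact mul_le_mul_of_nonneg_left (mulMarginals_le_mulMarginals hu huμ p)
      (inv_nonneg.mpr (sum_nonneg fun _ _ => hu _))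
  rw [add_smul]
  exact add_le_add ht hdecouple

lemma exists_substate_of_sub_le (hu : 0 ≤ u) (huμ : u ≤ μ) (hm : 0 < ∑ p, u p) {ε t K : 𝕜}
    (hε : ∑ p, u p ≤ ε) (ht : μ - u ≤ t • mulMarginals μ) (hK : t + (∑ p, u p)⁻¹ ≤ K) :
    ∃ ν : α × β → 𝕜, 0 ≤ ν ∧ fstMarginal ν = fstMarginal μ ∧ sndMarginal ν = sndMarginal μ ∧
      (∀ S : Finset (α × β), |∑ p ∈ S, μ p - ∑ p ∈ S, ν p| ≤ ε) ∧
      ν ≤ K • mulMarginals μ :=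
  ⟨resample μ u, resample_nonneg hu huμ, fstMarginal_resample μ hm.ne',
    sndMarginal_resample μ hm.ne',
    fun S => (abs_sum_sub_sum_resample_le μ hu hm.ne' S).trans hε,
    (resample_le hu huμ ht).trans fun p =>
      mul_le_mul_of_nonneg_right hK (mulMarginals_nonneg (hu.trans huμ) p)⟩

end Resample

section RelEntropy

open InformationTheory

variable {ι : Type*} [Fintype ι] {μ q : ι → ℝ}

/-- The relative entropy of `μ` with respect to `q`, in nats. By division by zero, terms with
`q i = 0` vanish, so it is meaningful only if `μ` vanishes where `q` does. -/
noncomputable def relEntropy (μ q : ι → ℝ) : ℝ := ∑ i, μ i * Real.log (μ i / q i)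

lemma mul_klFun_div {x y : ℝ} (h : y = 0 → x = 0) :
    y * klFun (x / y) = x * Real.log (x / y) + y - x := by
  rcases eq_or_ne y 0 with rfl | hy
  · simp [h rfl]
  · rw [klFun]
    field_simp

lemma relEntropy_eq_sum_mul_klFun (hac : ∀ i, q i = 0 → μ i = 0) (hsum : ∑ i, μ i = ∑ i, q i) :
    relEntropy μ q = ∑ i, q i * klFun (μ i / q i) := by
  simp only [mul_klFun_div (hac _), sum_sub_distrib, sum_add_distrib, hsum, add_sub_cancel_right,
    relEntropy]

lemma relEntropy_nonneg (hμ : 0 ≤ μ) (hq : 0 ≤ q) (hac : ∀ i, q i = 0 → μ i = 0)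
    (hsum : ∑ i, μ i = ∑ i, q i) : 0 ≤ relEntropy μ q := by
  rw [relEntropy_eq_sum_mul_klFun hac hsum]
  exact sum_nonneg fun i _ => mul_nonneg (hq i) (klFun_nonneg (div_nonneg (hμ i) (hq i)))

lemma log_sub_one_mul_le_mul_klFun_div {t x y : ℝ} (ht : 0 < t) (hy : 0 < y) (hxy : t * y < x) :
    (Real.log t - 1) * x ≤ y * klFun (x / y) := by
  have hx : 0 < x := (mul_pos ht hy).trans hxy
  have hlog : Real.log t ≤ Real.log (x / y) :=
    Real.log_le_log ht ((le_div_iff₀ hy).mpr hxy.le)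
  rw [mul_klFun_div fun h => absurd h hy.ne']
  linarith [mul_le_mul_of_nonneg_left hlog hx.le]

lemma log_sub_one_mul_sum_filter_le_relEntropy (hμ : 0 ≤ μ) (hq : 0 ≤ q)
    (hac : ∀ i, q i = 0 → μ i = 0) (hsum : ∑ i, μ i = ∑ i, q i) {t : ℝ} (ht : 0 < t) :
    (Real.log t - 1) * ∑ i with t * q i < μ i, μ i ≤ relEntropy μ q := by
  rw [relEntropy_eq_sum_mul_klFun hac hsum, mul_sum]
  refine (sum_le_sum fun i hi => ?_).trans (sum_le_univ_sum_of_nonneg fun i =>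
    mul_nonneg (hq i) (klFun_nonneg (div_nonneg (hμ i) (hq i))))
  have hlt : t * q i < μ i := (mem_filter.mp hi).2
  have hqi : q i ≠ 0 := fun h => by simp [h, hac i h] at hlt
  exact log_sub_one_mul_le_mul_klFun_div ht ((hq i).lt_of_ne' hqi) hlt

end RelEntropy

section Excess

variable {ι 𝕜 : Type*} [Field 𝕜] [LinearOrder 𝕜] [IsStrictOrderedRing 𝕜] {s t : 𝕜} {μ q : ι → 𝕜}

/-- The part of `μ` to be cut out so that the rest is at most `t * q`: all of `μ` where it exceeds
`t * q`, and the fraction `s` of it elsewhere. -/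
def excess (s t : 𝕜) (μ q : ι → 𝕜) (i : ι) : 𝕜 := if t * q i < μ i then μ i else s * μ i

lemma mul_le_excess (hs : s ≤ 1) (hμ : 0 ≤ μ) (i : ι) : s * μ i ≤ excess s t μ q i := by
  unfold excess
  split_ifs
  exacts [mul_le_of_le_one_left (hμ i) hs, le_rfl]

lemma excess_nonneg (hs : 0 ≤ s) (hμ : 0 ≤ μ) : 0 ≤ excess s t μ q := fun i => by
  unfold excess
  split_ifs
  exacts [hμ i, mul_nonneg hs (hμ i)]

lemma excess_le (hs : s ≤ 1) (hμ : 0 ≤ μ) : excess s t μ q ≤ μ := fun i => by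
  unfold excess
  split_ifs
  exacts [le_rfl, mul_le_of_le_one_left (hμ i) hs]

lemma sub_excess_le (hs : 0 ≤ s) (ht : 0 ≤ t) (hμ : 0 ≤ μ) (hq : 0 ≤ q) :
    μ - excess s t μ q ≤ t • q := fun i => by
  simp only [Pi.sub_apply, Pi.smul_apply, smul_eq_mul, excess]
  split_ifs with h
  · rw [sub_self]
    exact mul_nonneg ht (hq i)
  · exact (sub_le_self _ (mul_nonneg hs (hμ i))).trans (not_lt.mp h)

variable [Fintype ι]

lemma mul_sum_le_sum_excess (hs : s ≤ 1) (hμ : 0 ≤ μ) :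
    s * ∑ i, μ i ≤ ∑ i, excess s t μ q i := by
  rw [mul_sum]
  exact sum_le_sum fun i _ => mul_le_excess hs hμ i

lemma sum_excess_le (hs : 0 ≤ s) (hμ : 0 ≤ μ) :
    ∑ i, excess s t μ q i ≤ ∑ i with t * q i < μ i, μ i + s * ∑ i, μ i := by
  simp only [sum_filter, mul_sum, ← sum_add_distrib]
  refine sum_le_sum fun i _ => ?_
  unfold excess
  split_ifs
  exacts [le_add_of_nonneg_right (mul_nonneg hs (hμ i)), (zero_add _).ge]

end Excess

lemma two_rpow_add_self_le {c : ℝ} (hc : 1 ≤ c) : (2 : ℝ) ^ c + c ≤ 2 ^ (2 * c) := by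
  have hbernoulli : 1 + c ≤ (2 : ℝ) ^ c := by
    simpa [one_add_one_eq_two] using one_add_mul_self_le_rpow_one_add (s := 1) (by norm_num) hc
  rw [two_mul, Real.rpow_add two_pos]
  nlinarith

section MutualInfo

variable {α β : Type*} [Fintype α] [Fintype β] {μ : α × β → ℝ}

/-- The mutual information of a distribution on a product, in bits. The convention for terms with
`μ p = 0` is built in, because of the factor `μ p`. -/
noncomputable def mutualInfo (μ : α × β → ℝ) : ℝ :=
  ∑ p, μ p * Real.logb 2 (μ p / mulMarginals μ p)

lemma mutualInfo_eq_sum_sum_ite (μ : α × β → ℝ) :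
    mutualInfo μ = ∑ a, ∑ b, if μ (a, b) = 0 then 0 else
      μ (a, b) * Real.logb 2 (μ (a, b) / ((∑ b', μ (a, b')) * ∑ a', μ (a', b))) := by
  rw [mutualInfo, Fintype.sum_prod_type]
  refine sum_congr rfl fun a _ => sum_congr rfl fun b _ => ?_
  split_ifs with h
  · rw [h, zero_mul]
  · rfl

lemma relEntropy_mulMarginals (μ : α × β → ℝ) :
    relEntropy μ (mulMarginals μ) = mutualInfo μ * Real.log 2 := by
  simp only [relEntropy, mutualInfo, sum_mul, mul_assoc, Real.logb,
    div_mul_cancel₀ _ (Real.log_pos one_lt_two).ne']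

lemma sum_eq_sum_mulMarginals (h1 : ∑ p, μ p = 1) : ∑ p, μ p = ∑ p, mulMarginals μ p := by
  rw [sum_mulMarginals, h1, one_pow]

lemma mutualInfo_nonneg (h0 : 0 ≤ μ) (h1 : ∑ p, μ p = 1) : 0 ≤ mutualInfo μ := by
  have h := relEntropy_nonneg h0 (mulMarginals_nonneg h0)
    (fun _ => eq_zero_of_mulMarginals_eq_zero h0) (sum_eq_sum_mulMarginals h1)
  rw [relEntropy_mulMarginals] at h
  exact nonneg_of_mul_nonneg_left h (Real.log_pos one_lt_two)

lemma sum_filter_two_rpow_mul_lt_le_half {ε k : ℝ} (hε : 0 < ε) (hε1 : ε ≤ 1) (h0 : 0 ≤ μ)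
    (h1 : ∑ p, μ p = 1) (hMI : mutualInfo μ ≤ k) :
    ∑ p with 2 ^ (2 * (k + 1) / ε) * mulMarginals μ p < μ p, μ p ≤ ε / 2 := by
  have hk : 0 ≤ k := (mutualInfo_nonneg h0 h1).trans hMI
  set c := 2 * (k + 1) / ε
  set d := ∑ p with 2 ^ c * mulMarginals μ p < μ p, μ p
  have hcε : c * (ε / 2) = k + 1 := by
    simp only [c]
    field_simp
  have hc : 2 ≤ c := by
    rw [le_div_iff₀ hε]
    linarith
  have hlog : 1 / 2 < Real.log 2 := by linarith [Real.log_two_gt_d9]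
  have hmarkov : (c * Real.log 2 - 1) * d ≤ k * Real.log 2 := by
    have h := log_sub_one_mul_sum_filter_le_relEntropy h0 (mulMarginals_nonneg h0)
      (fun _ => eq_zero_of_mulMarginals_eq_zero h0) (sum_eq_sum_mulMarginals h1)
      (Real.rpow_pos_of_pos two_pos c)
    rw [relEntropy_mulMarginals, Real.log_rpow two_pos] at h
    exact h.trans (mul_le_mul_of_nonneg_right hMI (by linarith))
  have hk_le : k * Real.log 2 ≤ (c * Real.log 2 - 1) * (ε / 2) := by
    linear_combination (1 / 2) * hε1 + hlog - Real.log 2 * hcε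
  have hcoeff : 0 < c * Real.log 2 - 1 := by
    linarith [mul_le_mul_of_nonneg_right hc (by linarith : 0 ≤ Real.log 2)]
  exact le_of_mul_le_mul_left (hmarkov.trans hk_le) hcoeff

lemma exists_sub_le_two_rpow_smul_mulMarginals {ε k : ℝ} (hε : 0 < ε) (hε1 : ε ≤ 1) (h0 : 0 ≤ μ)
    (h1 : ∑ p, μ p = 1) (hMI : mutualInfo μ ≤ k) :
    ∃ u : α × β → ℝ, 0 ≤ u ∧ u ≤ μ ∧ ε / 2 ≤ ∑ p, u p ∧ ∑ p, u p ≤ ε ∧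
      μ - u ≤ (2 : ℝ) ^ (2 * (k + 1) / ε) • mulMarginals μ := by
  have hs : 0 ≤ ε / 2 := by linarith
  have hs1 : ε / 2 ≤ 1 := by linarith
  refine ⟨excess (ε / 2) (2 ^ (2 * (k + 1) / ε)) μ (mulMarginals μ), excess_nonneg hs h0,
    excess_le hs1 h0, ?_, ?_, sub_excess_le hs (by positivity) h0 (mulMarginals_nonneg h0)⟩
  · simpa only [h1, mul_one] using mul_sum_le_sum_excess hs1 h0
  · calc _ ≤ _ + ε / 2 * ∑ p, μ p := sum_excess_le hs h0
      _ ≤ ε / 2 + ε / 2 * ∑ p, μ p :=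
        add_le_add_left (sum_filter_two_rpow_mul_lt_le_half hε hε1 h0 h1 hMI) _
      _ = ε := by rw [h1, mul_one, add_halves]

theorem statement9_general {ε k : ℝ} (hε : 0 < ε) (h0 : 0 ≤ μ) (h1 : ∑ p, μ p = 1)
    (hMI : mutualInfo μ ≤ k) :
    ∃ ν : α × β → ℝ, 0 ≤ ν ∧ fstMarginal ν = fstMarginal μ ∧ sndMarginal ν = sndMarginal μ ∧
      (∀ S : Finset (α × β), |∑ p ∈ S, μ p - ∑ p ∈ S, ν p| ≤ ε) ∧
      ν ≤ (2 : ℝ) ^ (4 * (k + 1) / ε) • mulMarginals μ := by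
  have hk : 0 ≤ k := (mutualInfo_nonneg h0 h1).trans hMI
  rcases le_or_gt 1 ε with hε1 | hε1
  · refine exists_substate_of_sub_le h0 le_rfl (h1 ▸ one_pos) (h1.trans_le hε1)
      (t := 0) (by rw [sub_self, zero_smul]) ?_
    rw [h1, inv_one, zero_add]
    exact Real.one_le_rpow one_le_two (by positivity)
  · set c := 2 * (k + 1) / ε
    obtain ⟨u, hu, huμ, hlower, hupper, hrest⟩ :=
      exists_sub_le_two_rpow_smul_mulMarginals hε hε1.le h0 h1 hMI
    have hinv : (∑ p, u p)⁻¹ ≤ c :=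
      calc (∑ p, u p)⁻¹ ≤ (ε / 2)⁻¹ := inv_anti₀ (by linarith) hlower
        _ = 2 / ε := inv_div _ _
        _ ≤ c := div_le_div_of_nonneg_right (by linarith) hε.le
    have hc : 1 ≤ c := by
      rw [one_le_div hε]
      linarith
    refine exists_substate_of_sub_le hu huμ (by linarith) hupper hrest ?_
    calc (2 : ℝ) ^ c + (∑ p, u p)⁻¹ ≤ 2 ^ c + c := by gcongr
      _ ≤ 2 ^ (2 * c) := two_rpow_add_self_le hc
      _ = 2 ^ (4 * (k + 1) / ε) := by
        congr 1
        ring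

end MutualInfo

/-- classical Substate theorem of Jain–Radhakrishnan–Sen: if the mutual
information of `μ` is at most `k`, then there is a distribution `ν` with
`‖μ − ν‖_TV ≤ ε` and `ν(a,b) ≤ 2^{4(k+1)/ε} · ν_A(a) · ν_B(b)` for all `(a,b)`. -/
theorem statement9 {𝒜 ℬ : Type*} [Fintype 𝒜] [Fintype ℬ]
    (ε : ℝ) (hε : 0 < ε) (k : ℝ)
    (μ : 𝒜 × ℬ → ℝ) (h0 : ∀ p, 0 ≤ μ p) (h1 : (∑ p, μ p) = 1)
    (hMI : ∑ a, ∑ b,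
        (if μ (a, b) = 0 then 0 else
          μ (a, b) * Real.logb 2 (μ (a, b) / ((∑ b', μ (a, b')) * (∑ a', μ (a', b)))))
      ≤ k) :
    ∃ ν : 𝒜 × ℬ → ℝ, (∀ p, 0 ≤ ν p) ∧ (∑ p, ν p) = 1 ∧
      (∀ S : Finset (𝒜 × ℬ), |(∑ p ∈ S, μ p) - ∑ p ∈ S, ν p| ≤ ε) ∧
      (∀ a b, ν (a, b) ≤
        (2 : ℝ) ^ (4 * (k + 1) / ε) * (∑ b', ν (a, b')) * (∑ a', ν (a', b))) := by
  obtain ⟨ν, hν, hA, hB, hTV, hle⟩ :=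
    statement9_general hε h0 h1 ((mutualInfo_eq_sum_sum_ite μ).trans_le hMI)
  refine ⟨ν, hν, by rw [← sum_fstMarginal, hA, sum_fstMarginal, h1], hTV, fun a b => ?_⟩
  calc ν (a, b) ≤ 2 ^ (4 * (k + 1) / ε) * (fstMarginal μ a * sndMarginal μ b) := hle (a, b)
    _ = 2 ^ (4 * (k + 1) / ε) * fstMarginal ν a * sndMarginal ν b := by rw [hA, hB, mul_assoc]
end

section
/- There exists a universal constant C > 0 such that the following holds for every positive integer n. Let 𝒜 and ℬ be nonempty families of subsets of [n] = {1,…,n}, and let ε be a real number with 2^{-n} < ε < 1/2 such that the number of pairs (A, B) ∈ 𝒜 × ℬ with A ∩ B = ∅ is at least ε·|𝒜|·|ℬ|. Then there exist subfamilies ℱ ⊆ 𝒜 and 𝒢 ⊆ ℬ with |ℱ|·|𝒢| ≥ 2^{-C·√(n·log₂(1/ε))}·|𝒜|·|ℬ| such that F ∩ G = ∅ for every pair (F, G) ∈ ℱ × 𝒢. -/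
open Finset

/-!
Write `n` for the size of the ground set and `L = log₂ (1/ε)`.

*Cleaning.* Draw `B₁, …, B_k ∈ ℬ` uniformly at random and let `U` be their union. Keep the `A ∈ 𝒜`
disjoint from `U` and the `B ∈ ℬ` with at most `m` elements outside `U`, where `m` is about
`2n/(k+1)`. For fixed `A`, the private parts `Bⱼ \ ⋃_{i ≠ j} Bᵢ` of a tuple `B₁, …, B_{k+1}` of
sets disjoint from `A` are pairwise disjoint, so by Markov at least half of them have at most `m`
elements; by symmetry, at least half of all such tuples have a small last private part. Since
the degrees of the `A`s in the disjointness graph have average at least `ε|ℬ|`, their power sums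
grow fast enough for some `U` to leave density at least `ε/4` in the cleaned families and at least
`ε^(k+1)/4 · |𝒜||ℬ|` disjoint pairs.

*Splitting.* Clean once with `U` a union of members of `ℬ`, and once more with the roles exchanged
and `V` a union of members of `𝒜`. Now every `A` avoids `U`, every `B` avoids `V`, and `|A \ V|`,
`|B \ U|` are at most `m`. For a random set `R`, the families `{A : A \ V ⊆ R}` and
`{B : (B \ U) ∩ R = ∅}` are cross-disjoint, and each disjoint pair survives with probability at
least `2^(-2m)`. Taking `k` about `√(n/L)` balances this loss against the factors `ε^(k+1)`.
If `L > n`, a single disjoint pair is enough.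
-/

section PrivateParts

variable {α ι β : Type*} [DecidableEq α]

lemma sum_card_sdiff_biUnion_compl_le [Fintype ι] [DecidableEq ι] (s : ι → Finset α) :
    ∑ j, #(s j \ ({j}ᶜ : Finset ι).biUnion s) ≤ #(univ.biUnion s) := by
  rw [← card_biUnion]
  · exact card_le_card (biUnion_mono fun j _ ↦ sdiff_subset)
  · intro i _ j _ hij
    refine disjoint_left.2 fun x hxi hxj ↦ (mem_sdiff.1 hxj).2 ?_
    exact mem_biUnion.2 ⟨i, by simpa using hij, (mem_sdiff.1 hxi).1⟩

lemma card_le_two_mul_card_filter_le [Fintype ι] (x : ι → ℕ) {m : ℕ}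
    (h : 2 * ∑ j, x j ≤ Fintype.card ι * (m + 1)) :
    Fintype.card ι ≤ 2 * #{j | x j ≤ m} := by
  have markov : #{j | ¬ x j ≤ m} * (m + 1) ≤ ∑ j, x j :=
    (card_nsmul_le_sum _ x (m + 1) fun j hj ↦ by simpa using hj).trans
      (sum_le_sum_of_subset (filter_subset _ _))
  have split : #{j | x j ≤ m} + #{j | ¬ x j ≤ m} = Fintype.card ι :=
    card_filter_add_card_filter_not _
  have : 2 * #{j | ¬ x j ≤ m} ≤ Fintype.card ι :=
    Nat.le_of_mul_le_mul_right (by linarith) m.succ_pos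
  lia

lemma succ_le_two_mul_card_filter_sdiff_removeNth {k m : ℕ} (s : Fin (k + 1) → Finset α)
    (hm : 2 * #(univ.biUnion s) ≤ (k + 1) * (m + 1)) :
    k + 1 ≤ 2 * #{j | #(s j \ univ.biUnion (j.removeNth s)) ≤ m} := by
  have union_others (j : Fin (k + 1)) :
      univ.biUnion (j.removeNth s) = ({j}ᶜ : Finset _).biUnion s := by
    rw [← Fin.image_succAbove_univ, image_biUnion]
    rfl
  have private_le : ∑ j, #(s j \ univ.biUnion (j.removeNth s)) ≤ #(univ.biUnion s) := by
    simpa only [union_others] using sum_card_sdiff_biUnion_compl_le s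
  have := card_le_two_mul_card_filter_le (fun j ↦ #(s j \ univ.biUnion (j.removeNth s)))
    (m := m) (by rw [Fintype.card_fin]; lia)
  rwa [Fintype.card_fin] at this

lemma card_filter_piFinset_removeNth {k : ℕ} (N : Finset β) (p : β → (Fin k → β) → Prop)
    [∀ b g, Decidable (p b g)] (j : Fin (k + 1)) :
    #{f ∈ Fintype.piFinset fun _ : Fin (k + 1) ↦ N | p (f j) (j.removeNth f)} =
      #{x ∈ N ×ˢ Fintype.piFinset (fun _ : Fin k ↦ N) | p x.1 x.2} := by
  refine card_equiv (j.insertNthEquiv fun _ ↦ β).symm fun f ↦ ?_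
  simp [Fin.forall_iff_succAbove j, Fin.removeNth]

lemma card_pow_succ_le_two_mul_card_filter [Fintype α] {k m : ℕ}
    (hm : 2 * Fintype.card α ≤ (k + 1) * (m + 1)) (N : Finset (Finset α)) :
    #N ^ (k + 1) ≤ 2 * #{x ∈ N ×ˢ Fintype.piFinset (fun _ : Fin k ↦ N) |
      #(x.1 \ univ.biUnion x.2) ≤ m} := by
  set T := #{x ∈ N ×ˢ Fintype.piFinset (fun _ : Fin k ↦ N) | #(x.1 \ univ.biUnion x.2) ≤ m}
  -- By symmetry, the distinguished set may sit at any of the `k + 1` positions of a tuple.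
  refine Nat.le_of_mul_le_mul_left ?_ k.succ_pos
  calc (k + 1) * #N ^ (k + 1)
      = ∑ f ∈ Fintype.piFinset fun _ : Fin (k + 1) ↦ N, (k + 1) := by
        rw [sum_const, Fintype.card_piFinset_const, smul_eq_mul, mul_comm]
    _ ≤ ∑ f ∈ Fintype.piFinset fun _ : Fin (k + 1) ↦ N,
          2 * #{j | #(f j \ univ.biUnion (j.removeNth f)) ≤ m} :=
        sum_le_sum fun f _ ↦ succ_le_two_mul_card_filter_sdiff_removeNth f
          ((Nat.mul_le_mul_left 2 (card_le_univ _)).trans hm)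
    _ = 2 * ∑ j : Fin (k + 1), #{f ∈ Fintype.piFinset fun _ : Fin (k + 1) ↦ N |
          #(f j \ univ.biUnion (j.removeNth f)) ≤ m} := by
        rw [← mul_sum]
        exact congrArg (2 * ·) (sum_card_bipartiteAbove_eq_sum_card_bipartiteBelow _)
    _ = 2 * ∑ _ : Fin (k + 1), T :=
        congrArg (2 * ·) (sum_congr rfl fun j _ ↦ card_filter_piFinset_removeNth N
          (fun B g ↦ #(B \ univ.biUnion g) ≤ m) j)
    _ = (k + 1) * (2 * T) := by
        rw [sum_const, card_univ, Fintype.card_fin, smul_eq_mul, mul_left_comm]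

end PrivateParts

section PowerSums

variable {ι R : Type*} [CommRing R] [LinearOrder R] [IsStrictOrderedRing R]
  {s : Finset ι} {t : ι → R} {c : R}

lemma mul_sum_pow_le_sum_pow_succ (ht : ∀ i ∈ s, 0 ≤ t i) (h : c * #s ≤ ∑ i ∈ s, t i) (k : ℕ) :
    c * ∑ i ∈ s, t i ^ k ≤ ∑ i ∈ s, t i ^ (k + 1) := by
  rcases s.eq_empty_or_nonempty with rfl | hs
  · simp
  have chebyshev : (∑ i ∈ s, t i ^ k) * ∑ i ∈ s, t i ≤ #s * ∑ i ∈ s, t i ^ k * t i :=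
    ((monovaryOn_self t s).pow_left₀ ht k).sum_mul_sum_le_card_mul_sum
  refine le_of_mul_le_mul_left ?_ (Nat.cast_pos.2 hs.card_pos : (0 : R) < #s)
  calc #s * (c * ∑ i ∈ s, t i ^ k) = (∑ i ∈ s, t i ^ k) * (c * #s) := by ring
    _ ≤ (∑ i ∈ s, t i ^ k) * ∑ i ∈ s, t i :=
        mul_le_mul_of_nonneg_left h (sum_nonneg fun i hi ↦ pow_nonneg (ht i hi) k)
    _ ≤ #s * ∑ i ∈ s, t i ^ (k + 1) := by simpa only [pow_succ] using chebyshev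

lemma pow_mul_card_le_sum_pow (hc : 0 ≤ c) (ht : ∀ i ∈ s, 0 ≤ t i) (h : c * #s ≤ ∑ i ∈ s, t i)
    (k : ℕ) : c ^ k * #s ≤ ∑ i ∈ s, t i ^ k := by
  induction k with
  | zero => simp
  | succ k ih =>
    calc c ^ (k + 1) * #s = c * (c ^ k * #s) := by ring
      _ ≤ c * ∑ i ∈ s, t i ^ k := by gcongr
      _ ≤ ∑ i ∈ s, t i ^ (k + 1) := mul_sum_pow_le_sum_pow_succ ht h k

end PowerSums

section Cleaning

variable {α : Type*} [DecidableEq α]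

/-- The members of `𝒜` that are disjoint from `U`. Applied to a member `A` of another family it
gives the neighbourhood of `A` in the disjointness graph. -/
def avoiding (𝒜 : Finset (Finset α)) (U : Finset α) : Finset (Finset α) :=
  {A ∈ 𝒜 | Disjoint A U}

/-- The members of `ℬ` that have at most `m` elements outside `U`. -/
def coveredUpTo (m : ℕ) (ℬ : Finset (Finset α)) (U : Finset α) : Finset (Finset α) :=
  {B ∈ ℬ | #(B \ U) ≤ m}

lemma card_interedges_disjoint_eq_sum (𝒜 ℬ : Finset (Finset α)) :
    #(Rel.interedges Disjoint 𝒜 ℬ) = ∑ A ∈ 𝒜, #(avoiding ℬ A) := by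
  simp only [Rel.interedges, avoiding, card_filter, sum_product, disjoint_comm]

lemma piFinset_avoiding (ℬ : Finset (Finset α)) (A : Finset α) (k : ℕ) :
    Fintype.piFinset (fun _ : Fin k ↦ avoiding ℬ A) =
      {g ∈ Fintype.piFinset fun _ : Fin k ↦ ℬ | Disjoint A (univ.biUnion g)} := by
  ext g
  simp [avoiding, forall_and, disjoint_biUnion_right, disjoint_comm]

lemma sum_card_avoiding_biUnion (𝒜 ℬ : Finset (Finset α)) (k : ℕ) :
    ∑ g ∈ Fintype.piFinset fun _ : Fin k ↦ ℬ, #(avoiding 𝒜 (univ.biUnion g)) =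
      ∑ A ∈ 𝒜, #(avoiding ℬ A) ^ k := by
  simp only [← Fintype.card_piFinset_const, piFinset_avoiding]
  exact (sum_card_bipartiteAbove_eq_sum_card_bipartiteBelow _).symm

lemma sum_card_interedges_avoiding_coveredUpTo (𝒜 ℬ : Finset (Finset α)) (k m : ℕ) :
    ∑ g ∈ Fintype.piFinset fun _ : Fin k ↦ ℬ,
        #(Rel.interedges Disjoint (avoiding 𝒜 (univ.biUnion g))
          (coveredUpTo m ℬ (univ.biUnion g))) =
      ∑ A ∈ 𝒜, #{x ∈ avoiding ℬ A ×ˢ Fintype.piFinset (fun _ : Fin k ↦ avoiding ℬ A) |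
        #(x.1 \ univ.biUnion x.2) ≤ m} := by
  simp only [card_interedges_disjoint_eq_sum, piFinset_avoiding, card_filter, sum_product_right]
  simp only [avoiding, coveredUpTo, sum_filter]
  rw [sum_comm]
  refine sum_congr rfl fun A _ ↦ sum_congr rfl fun g _ ↦ ?_
  split_ifs <;> simp [← sum_filter, filter_filter, and_comm]

lemma sum_pow_succ_le_two_mul_sum_card_interedges [Fintype α] {k m : ℕ}
    (hm : 2 * Fintype.card α ≤ (k + 1) * (m + 1)) (𝒜 ℬ : Finset (Finset α)) :
    ∑ A ∈ 𝒜, #(avoiding ℬ A) ^ (k + 1) ≤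
      2 * ∑ g ∈ Fintype.piFinset fun _ : Fin k ↦ ℬ,
        #(Rel.interedges Disjoint (avoiding 𝒜 (univ.biUnion g))
          (coveredUpTo m ℬ (univ.biUnion g))) := by
  rw [sum_card_interedges_avoiding_coveredUpTo, mul_sum]
  exact sum_le_sum fun A _ ↦ card_pow_succ_le_two_mul_card_filter hm _

lemma exists_add_le_card_interedges_avoiding_coveredUpTo [Fintype α] {k m : ℕ}
    (hm : 2 * Fintype.card α ≤ (k + 1) * (m + 1)) {𝒜 ℬ : Finset (Finset α)} (hℬ : ℬ.Nonempty)
    {ε : ℝ} (hε : 0 ≤ ε) (h : ε * #𝒜 * #ℬ ≤ #(Rel.interedges Disjoint 𝒜 ℬ)) :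
    ∃ U, ε / 4 * #(avoiding 𝒜 U) * #ℬ + ε ^ (k + 1) / 4 * #𝒜 * #ℬ ≤
      #(Rel.interedges Disjoint (avoiding 𝒜 U) (coveredUpTo m ℬ U)) := by
  let tuples := Fintype.piFinset fun _ : Fin k ↦ ℬ
  have degree_nonneg : ∀ A ∈ 𝒜, (0 : ℝ) ≤ #(avoiding ℬ A) := fun A _ ↦ Nat.cast_nonneg _
  have average : ε * #ℬ * #𝒜 ≤ ∑ A ∈ 𝒜, (#(avoiding ℬ A) : ℝ) := by
    rw [mul_right_comm]
    exact_mod_cast card_interedges_disjoint_eq_sum 𝒜 ℬ ▸ h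
  have sum_avoiding : ∑ g ∈ tuples, (#(avoiding 𝒜 (univ.biUnion g)) : ℝ) =
      ∑ A ∈ 𝒜, (#(avoiding ℬ A) : ℝ) ^ k :=
    mod_cast sum_card_avoiding_biUnion 𝒜 ℬ k
  have sum_interedges : ∑ A ∈ 𝒜, (#(avoiding ℬ A) : ℝ) ^ (k + 1) ≤
      2 * ∑ g ∈ tuples, (#(Rel.interedges Disjoint (avoiding 𝒜 (univ.biUnion g))
          (coveredUpTo m ℬ (univ.biUnion g))) : ℝ) :=
    mod_cast sum_pow_succ_le_two_mul_sum_card_interedges hm 𝒜 ℬ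
  have relative := mul_sum_pow_le_sum_pow_succ degree_nonneg average k
  have absolute := pow_mul_card_le_sum_pow (by positivity) degree_nonneg average (k + 1)
  suffices ∑ g ∈ tuples,
      (ε / 4 * #(avoiding 𝒜 (univ.biUnion g)) * #ℬ + ε ^ (k + 1) / 4 * #𝒜 * #ℬ) ≤
      ∑ g ∈ tuples, (#(Rel.interedges Disjoint (avoiding 𝒜 (univ.biUnion g))
        (coveredUpTo m ℬ (univ.biUnion g))) : ℝ) by
    obtain ⟨g, -, hg⟩ := exists_le_of_sum_le (Fintype.piFinset_nonempty.2 fun _ ↦ hℬ) this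
    exact ⟨_, hg⟩
  calc ∑ g ∈ tuples, (ε / 4 * #(avoiding 𝒜 (univ.biUnion g)) * #ℬ + ε ^ (k + 1) / 4 * #𝒜 * #ℬ)
      = (ε * #ℬ * ∑ A ∈ 𝒜, (#(avoiding ℬ A) : ℝ) ^ k + (ε * #ℬ) ^ (k + 1) * #𝒜) / 4 := by
        rw [sum_add_distrib, ← sum_mul, ← mul_sum, sum_avoiding, sum_const,
          Fintype.card_piFinset_const, nsmul_eq_mul, Nat.cast_pow]
        ring
    _ ≤ _ := by linarith

lemma exists_cleaning [Fintype α] {k m : ℕ} (hm : 2 * Fintype.card α ≤ (k + 1) * (m + 1))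
    (𝒜 ℬ : Finset (Finset α)) {ε : ℝ} (hε : 0 ≤ ε)
    (h : ε * #𝒜 * #ℬ ≤ #(Rel.interedges Disjoint 𝒜 ℬ)) :
    ∃ U, ε / 4 * #(avoiding 𝒜 U) * #(coveredUpTo m ℬ U) ≤
        #(Rel.interedges Disjoint (avoiding 𝒜 U) (coveredUpTo m ℬ U)) ∧
      ε ^ (k + 1) / 4 * #𝒜 * #ℬ ≤
        #(Rel.interedges Disjoint (avoiding 𝒜 U) (coveredUpTo m ℬ U)) := by
  rcases ℬ.eq_empty_or_nonempty with rfl | hℬ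
  · exact ⟨∅, by simp [coveredUpTo]⟩
  obtain ⟨U, hU⟩ := exists_add_le_card_interedges_avoiding_coveredUpTo hm hℬ hε h
  have : (#(coveredUpTo m ℬ U) : ℝ) ≤ #ℬ := mod_cast card_filter_le _ _
  refine ⟨U, ?_, ?_⟩
  · calc ε / 4 * #(avoiding 𝒜 U) * #(coveredUpTo m ℬ U)
        ≤ ε / 4 * #(avoiding 𝒜 U) * #ℬ := by gcongr
      _ ≤ _ := (le_add_of_nonneg_right (by positivity)).trans hU
  · exact (le_add_of_nonneg_left (by positivity)).trans hU

end Cleaning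

section RandomSplit

variable {α : Type*} [DecidableEq α]

lemma two_pow_card_le_mul_card_filter_powerset {S T W : Finset α} (hS : S ⊆ W) (hT : T ⊆ W)
    (hST : Disjoint S T) :
    2 ^ #W ≤ 2 ^ (#S + #T) * #{R ∈ W.powerset | S ⊆ R ∧ Disjoint T R} := by
  have hSWT : S ⊆ W \ T := subset_sdiff.2 ⟨hS, hST⟩
  have eq_Icc : {R ∈ W.powerset | S ⊆ R ∧ Disjoint T R} = Icc S (W \ T) := by
    ext R
    simp [subset_sdiff, disjoint_comm, and_left_comm]
  rw [eq_Icc, card_Icc_finset hSWT, ← pow_add]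
  have := card_le_card hSWT
  have := card_sdiff_add_card_eq_card hT
  exact Nat.pow_le_pow_right two_pos (by lia)

lemma sum_card_filter_mul_card_filter (𝒜 ℬ : Finset (Finset α)) (U V W : Finset α) :
    ∑ R ∈ W.powerset, #{A ∈ 𝒜 | A \ V ⊆ R} * #{B ∈ ℬ | Disjoint (B \ U) R} =
      ∑ x ∈ 𝒜 ×ˢ ℬ, #{R ∈ W.powerset | x.1 \ V ⊆ R ∧ Disjoint (x.2 \ U) R} := by
  simp only [← card_product, ← filter_product]
  exact sum_card_bipartiteAbove_eq_sum_card_bipartiteBelow _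

lemma exists_card_interedges_le_two_pow_mul {𝒜 ℬ : Finset (Finset α)} {U V : Finset α} {a b : ℕ}
    (h𝒜 : ∀ A ∈ 𝒜, #(A \ V) ≤ a) (hℬ : ∀ B ∈ ℬ, #(B \ U) ≤ b) :
    ∃ R, #(Rel.interedges Disjoint 𝒜 ℬ) ≤
      2 ^ (a + b) * (#{A ∈ 𝒜 | A \ V ⊆ R} * #{B ∈ ℬ | Disjoint (B \ U) R}) := by
  let W := (𝒜 ∪ ℬ).biUnion id
  have survival : ∀ x ∈ Rel.interedges Disjoint 𝒜 ℬ, 2 ^ #W ≤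
      2 ^ (a + b) * #{R ∈ W.powerset | x.1 \ V ⊆ R ∧ Disjoint (x.2 \ U) R} := by
    rintro ⟨A, B⟩ hx
    obtain ⟨hA, hB, hAB⟩ := Rel.mk_mem_interedges_iff.1 hx
    have hAW : A ⊆ W := subset_biUnion_of_mem id (mem_union_left ℬ hA)
    have hBW : B ⊆ W := subset_biUnion_of_mem id (mem_union_right 𝒜 hB)
    calc 2 ^ #W ≤ 2 ^ (#(A \ V) + #(B \ U)) *
          #{R ∈ W.powerset | A \ V ⊆ R ∧ Disjoint (B \ U) R} :=
          two_pow_card_le_mul_card_filter_powerset (sdiff_subset.trans hAW)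
            (sdiff_subset.trans hBW) (hAB.mono sdiff_subset sdiff_subset)
      _ ≤ _ := by gcongr; exacts [one_le_two, h𝒜 A hA, hℬ B hB]
  suffices ∑ _ ∈ W.powerset, #(Rel.interedges Disjoint 𝒜 ℬ) ≤ ∑ R ∈ W.powerset,
      2 ^ (a + b) * (#{A ∈ 𝒜 | A \ V ⊆ R} * #{B ∈ ℬ | Disjoint (B \ U) R}) by
    obtain ⟨R, -, hR⟩ := exists_le_of_sum_le (powerset_nonempty W) this
    exact ⟨R, hR⟩
  calc ∑ _ ∈ W.powerset, #(Rel.interedges Disjoint 𝒜 ℬ)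
      = ∑ _ ∈ Rel.interedges Disjoint 𝒜 ℬ, 2 ^ #W := by
        simp only [sum_const, card_powerset, smul_eq_mul, mul_comm]
    _ ≤ ∑ x ∈ Rel.interedges Disjoint 𝒜 ℬ,
          2 ^ (a + b) * #{R ∈ W.powerset | x.1 \ V ⊆ R ∧ Disjoint (x.2 \ U) R} :=
        sum_le_sum survival
    _ ≤ ∑ x ∈ 𝒜 ×ˢ ℬ,
          2 ^ (a + b) * #{R ∈ W.powerset | x.1 \ V ⊆ R ∧ Disjoint (x.2 \ U) R} :=
        sum_le_sum_of_subset (filter_subset _ _)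
    _ = _ := by rw [← mul_sum, ← sum_card_filter_mul_card_filter, mul_sum]

lemma exists_crossDisjoint_of_card_sdiff_le {𝒜 ℬ : Finset (Finset α)} {U V : Finset α} {a b : ℕ}
    (h𝒜U : ∀ A ∈ 𝒜, Disjoint A U) (hℬV : ∀ B ∈ ℬ, Disjoint B V)
    (h𝒜 : ∀ A ∈ 𝒜, #(A \ V) ≤ a) (hℬ : ∀ B ∈ ℬ, #(B \ U) ≤ b) :
    ∃ ℱ ⊆ 𝒜, ∃ 𝒢 ⊆ ℬ, #(Rel.interedges Disjoint 𝒜 ℬ) ≤ 2 ^ (a + b) * (#ℱ * #𝒢) ∧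
      ∀ F ∈ ℱ, ∀ G ∈ 𝒢, Disjoint F G := by
  obtain ⟨R, hR⟩ := exists_card_interedges_le_two_pow_mul h𝒜 hℬ
  refine ⟨_, filter_subset _ _, _, filter_subset _ _, hR, fun F hF G hG ↦ ?_⟩
  obtain ⟨hF, hFR⟩ := mem_filter.1 hF
  obtain ⟨hG, hGR⟩ := mem_filter.1 hG
  have outside : Disjoint (F \ V) (G \ U) := hGR.symm.mono_left hFR
  rwa [disjoint_sdiff_comm, sdiff_right_comm, (hℬV G hG).sdiff_eq_left, ← disjoint_sdiff_comm,
    (h𝒜U F hF).sdiff_eq_left] at outside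

end RandomSplit

section CrossDisjoint

variable {α : Type*} [Fintype α] [DecidableEq α]

lemma exists_crossDisjoint {k m : ℕ} (hm : 2 * Fintype.card α ≤ (k + 1) * (m + 1))
    (𝒜 ℬ : Finset (Finset α)) {ε : ℝ} (hε : 0 ≤ ε)
    (h : ε * #𝒜 * #ℬ ≤ #(Rel.interedges Disjoint 𝒜 ℬ)) :
    ∃ ℱ ⊆ 𝒜, ∃ 𝒢 ⊆ ℬ,
      (ε / 4) ^ (k + 1) / 4 * (ε ^ (k + 1) / 4) * #𝒜 * #ℬ ≤ (2 : ℝ) ^ (2 * m) * (#ℱ * #𝒢) ∧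
      ∀ F ∈ ℱ, ∀ G ∈ 𝒢, Disjoint F G := by
  obtain ⟨U, relative, absolute⟩ := exists_cleaning hm 𝒜 ℬ hε h
  set 𝒜₁ := avoiding 𝒜 U
  set ℬ₁ := coveredUpTo m ℬ U
  rw [Rel.card_interedges_comm, mul_right_comm] at relative
  have card_le : (#(Rel.interedges Disjoint 𝒜₁ ℬ₁) : ℝ) ≤ #𝒜₁ * #ℬ₁ :=
    mod_cast Rel.card_interedges_le_mul Disjoint 𝒜₁ ℬ₁
  obtain ⟨V, -, absolute'⟩ := exists_cleaning hm ℬ₁ 𝒜₁ (by positivity) relative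
  rw [Rel.card_interedges_comm] at absolute'
  obtain ⟨ℱ, hℱ, 𝒢, h𝒢, hcard, hdisj⟩ := exists_crossDisjoint_of_card_sdiff_le
    (𝒜 := coveredUpTo m 𝒜₁ V) (ℬ := avoiding ℬ₁ V) (U := U) (V := V) (a := m) (b := m)
    (fun A hA ↦ (mem_filter.1 (mem_filter.1 hA).1).2) (fun B hB ↦ (mem_filter.1 hB).2)
    (fun A hA ↦ (mem_filter.1 hA).2) (fun B hB ↦ (mem_filter.1 (mem_filter.1 hB).1).2)
  refine ⟨ℱ, hℱ.trans ((filter_subset _ _).trans (filter_subset _ _)),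
    𝒢, h𝒢.trans ((filter_subset _ _).trans (filter_subset _ _)), ?_, hdisj⟩
  calc (ε / 4) ^ (k + 1) / 4 * (ε ^ (k + 1) / 4) * #𝒜 * #ℬ
      = (ε / 4) ^ (k + 1) / 4 * (ε ^ (k + 1) / 4 * #𝒜 * #ℬ) := by ring
    _ ≤ (ε / 4) ^ (k + 1) / 4 * (#𝒜₁ * #ℬ₁) :=
        mul_le_mul_of_nonneg_left (absolute.trans card_le) (by positivity)
    _ = (ε / 4) ^ (k + 1) / 4 * #ℬ₁ * #𝒜₁ := by ring
    _ ≤ #(Rel.interedges Disjoint (coveredUpTo m 𝒜₁ V) (avoiding ℬ₁ V)) := absolute'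
    _ ≤ (2 : ℝ) ^ (2 * m) * (#ℱ * #𝒢) := by
        rw [two_mul]
        exact_mod_cast hcard

lemma exists_crossDisjoint_of_pos {𝒜 ℬ : Finset (Finset α)} {ε : ℝ} (hε : 0 < ε)
    (h : ε * #𝒜 * #ℬ ≤ #(Rel.interedges Disjoint 𝒜 ℬ)) :
    ∃ ℱ ⊆ 𝒜, ∃ 𝒢 ⊆ ℬ, #𝒜 * #ℬ ≤ 2 ^ (2 * Fintype.card α) * (#ℱ * #𝒢) ∧
      ∀ F ∈ ℱ, ∀ G ∈ 𝒢, Disjoint F G := by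
  rcases (Rel.interedges Disjoint 𝒜 ℬ).eq_empty_or_nonempty with hempty | ⟨⟨A, B⟩, hAB⟩
  · rw [hempty, card_empty, Nat.cast_zero, mul_assoc] at h
    have card_mul_nonpos : (#𝒜 * #ℬ : ℝ) ≤ 0 := nonpos_of_mul_nonpos_right h hε
    have card_mul_le : #𝒜 * #ℬ ≤ 0 := mod_cast card_mul_nonpos
    exact ⟨∅, empty_subset _, ∅, empty_subset _, card_mul_le.trans (Nat.zero_le _), by simp⟩
  · obtain ⟨hA, hB, hdisj⟩ := Rel.mk_mem_interedges_iff.1 hAB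
    refine ⟨{A}, by simpa, {B}, by simpa, ?_, by simpa⟩
    rw [card_singleton, card_singleton, mul_one, mul_one, two_mul, pow_add,
      ← Fintype.card_finset]
    exact Nat.mul_le_mul (card_le_univ _) (card_le_univ _)

end CrossDisjoint

section Balancing

lemma exists_balanced_parameters {x L : ℝ} (hL : 1 ≤ L) (hLx : L ≤ x) :
    ∃ k m : ℕ, 2 * x ≤ (k + 1) * (m + 1) ∧ 4 * L * (k + 1) + 4 + 2 * m ≤ 16 * √(x * L) := by
  have hL0 : 0 < L := by linarith
  have hx0 : 0 < x := by linarith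
  -- `r = √(x / L)` satisfies `r * s = x` and `r * L = s`, so both losses have order `s`.
  set s := √(x * L)
  set r := s / L
  have hs : L ≤ s := Real.le_sqrt_of_sq_le (by nlinarith)
  have hrL : r * L = s := div_mul_cancel₀ s hL0.ne'
  have hrs : r * s = x := by
    rw [div_mul_eq_mul_div, Real.mul_self_sqrt (by positivity), mul_div_cancel_right₀ x hL0.ne']
  have hr : 1 ≤ r := (one_le_div hL0).2 hs
  refine ⟨⌊r⌋₊, ⌊2 * s⌋₊, ?_, ?_⟩
  · calc 2 * x = r * (2 * s) := by rw [← hrs]; ring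
      _ ≤ (⌊r⌋₊ + 1) * (⌊2 * s⌋₊ + 1) := by
        gcongr <;> exact (Nat.lt_floor_add_one _).le
  · have hk : (⌊r⌋₊ : ℝ) ≤ r := Nat.floor_le (by linarith)
    have hm : (⌊2 * s⌋₊ : ℝ) ≤ 2 * s := Nat.floor_le (by linarith)
    calc 4 * L * (⌊r⌋₊ + 1) + 4 + 2 * ⌊2 * s⌋₊
        ≤ 4 * L * (r + r) + 4 * s + 2 * (2 * s) := by gcongr; linarith
      _ = 16 * s := by rw [← hrL]; ring

lemma pow_four_mul_le {ε : ℝ} (hε : 0 ≤ ε) (hε' : ε ≤ 1 / 2) (K : ℕ) :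
    ε ^ (4 * K) / 16 ≤ (ε / 4) ^ K / 4 * (ε ^ K / 4) := by
  have cube_le : ε ^ 3 ≤ ε / 4 := by nlinarith [mul_nonneg hε hε]
  calc ε ^ (4 * K) / 16 = (ε ^ 3) ^ K / 4 * (ε ^ K / 4) := by ring
    _ ≤ (ε / 4) ^ K / 4 * (ε ^ K / 4) := by gcongr

lemma two_rpow_neg_mul_two_pow_le {ε x : ℝ} (hε : 0 < ε) (hε' : ε ≤ 1 / 2) {K m : ℕ}
    (h : 4 * Real.logb 2 (1 / ε) * K + 4 + 2 * m ≤ x) :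
    (2 : ℝ) ^ (-x) * 2 ^ (2 * m) ≤ (ε / 4) ^ K / 4 * (ε ^ K / 4) := by
  refine le_trans ?_ (pow_four_mul_le hε.le hε' K)
  have pow_eq : ε ^ (4 * K) = (2 : ℝ) ^ (-(4 * Real.logb 2 (1 / ε) * K)) := by
    rw [one_div, Real.logb_inv, ← Real.rpow_natCast]
    nth_rw 1 [← Real.rpow_logb two_pos (by norm_num) hε]
    rw [← Real.rpow_mul two_pos.le]
    congr 1
    push_cast
    ring
  have sixteen_eq : (16 : ℝ) = 2 ^ (4 : ℝ) := by norm_num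
  rw [pow_eq, sixteen_eq, ← Real.rpow_sub two_pos, ← Real.rpow_natCast, ← Real.rpow_add two_pos]
  refine Real.rpow_le_rpow_of_exponent_le one_le_two ?_
  push_cast
  linarith

end Balancing

theorem statement10_general {α : Type*} [Fintype α] [DecidableEq α] (𝒜 ℬ : Finset (Finset α))
    {ε : ℝ} (hε : 0 < ε) (hε' : ε ≤ 1 / 2)
    (h : ε * #𝒜 * #ℬ ≤ #(Rel.interedges Disjoint 𝒜 ℬ)) :
    ∃ ℱ ⊆ 𝒜, ∃ 𝒢 ⊆ ℬ,
      (2 : ℝ) ^ (-(16 * √(Fintype.card α * Real.logb 2 (1 / ε)))) * #𝒜 * #ℬ ≤ #ℱ * #𝒢 ∧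
        ∀ F ∈ ℱ, ∀ G ∈ 𝒢, Disjoint F G := by
  set n := Fintype.card α
  set L := Real.logb 2 (1 / ε)
  suffices ∃ (c : ℝ) (j : ℕ), (2 : ℝ) ^ (-(16 * √(n * L))) * 2 ^ j ≤ c ∧ ∃ ℱ ⊆ 𝒜, ∃ 𝒢 ⊆ ℬ,
      c * #𝒜 * #ℬ ≤ 2 ^ j * (#ℱ * #𝒢) ∧ ∀ F ∈ ℱ, ∀ G ∈ 𝒢, Disjoint F G by
    obtain ⟨c, j, hc, ℱ, hℱ, 𝒢, h𝒢, hcard, hdisj⟩ := this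
    refine ⟨ℱ, hℱ, 𝒢, h𝒢, le_of_mul_le_mul_left ?_ (pow_pos two_pos j), hdisj⟩
    calc (2 : ℝ) ^ j * (2 ^ (-(16 * √(n * L))) * #𝒜 * #ℬ)
        = 2 ^ (-(16 * √(n * L))) * 2 ^ j * #𝒜 * #ℬ := by ring
      _ ≤ c * #𝒜 * #ℬ := by gcongr
      _ ≤ 2 ^ j * (#ℱ * #𝒢) := hcard
  rcases le_total L n with hLn | hnL
  · have hL : 1 ≤ L := by
      rwa [Real.le_logb_iff_rpow_le one_lt_two (by positivity), Real.rpow_one,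
        le_one_div two_pos hε]
    obtain ⟨k, m, hkm, hbound⟩ := exists_balanced_parameters hL hLn
    exact ⟨_, 2 * m, two_rpow_neg_mul_two_pow_le hε hε' (K := k + 1) (mod_cast hbound),
      exists_crossDisjoint (mod_cast hkm) 𝒜 ℬ hε.le h⟩
  · obtain ⟨ℱ, hℱ, 𝒢, h𝒢, hcard, hdisj⟩ := exists_crossDisjoint_of_pos hε h
    refine ⟨1, 2 * n, ?_, ℱ, hℱ, 𝒢, h𝒢, by rw [one_mul]; exact_mod_cast hcard, hdisj⟩
    have hn : (n : ℝ) ≤ √(n * L) := Real.le_sqrt_of_sq_le (by rw [sq]; gcongr)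
    rw [← Real.rpow_natCast, ← Real.rpow_add two_pos]
    refine Real.rpow_le_one_of_one_le_of_nonpos one_le_two ?_
    push_cast
    linarith [n.cast_nonneg (α := ℝ)]

/-- if at least an `ε`-fraction of pairs in `𝒜 × ℬ` are disjoint
(with `2^{-n} < ε < 1/2`), then there are cross-disjoint subfamilies `ℱ ⊆ 𝒜`, `𝒢 ⊆ ℬ`
with `|ℱ||𝒢| ≥ 2^{-C√(n log₂(1/ε))}|𝒜||ℬ|`. -/
theorem statement10 :
    ∃ C : ℝ, 0 < C ∧ ∀ n : ℕ, 0 < n →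
      ∀ 𝒜 ℬ : Finset (Finset (Fin n)), 𝒜.Nonempty → ℬ.Nonempty →
        ∀ ε : ℝ, (2 : ℝ) ^ (-(n : ℝ)) < ε → ε < 1 / 2 →
          ε * 𝒜.card * ℬ.card ≤
            (((𝒜 ×ˢ ℬ).filter (fun p => Disjoint p.1 p.2)).card : ℝ) →
          ∃ ℱ ⊆ 𝒜, ∃ 𝒢 ⊆ ℬ,
            (2 : ℝ) ^ (-(C * Real.sqrt (n * Real.logb 2 (1 / ε)))) *
                𝒜.card * ℬ.card ≤ (ℱ.card : ℝ) * (𝒢.card : ℝ) ∧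
            ∀ F ∈ ℱ, ∀ G ∈ 𝒢, Disjoint F G := by
  refine ⟨16, by norm_num, fun n _ 𝒜 ℬ _ _ ε hε hε' h ↦ ?_⟩
  simpa only [Fintype.card_fin] using
    statement10_general 𝒜 ℬ ((Real.rpow_pos_of_pos two_pos _).trans hε) hε'.le h
end

section
/- There exists a universal constant C > 0 such that the following holds for every positive integer n. Let μ_A and μ_B be probability distributions on the power set 2^[n] and let ε ∈ (0, 1/2). Then there exist a positive integer m ≤ 2^{C·√(n·log₂(1/ε))}, a partition of 2^[n] × 2^[n] into combinatorial rectangles R₁ = ℱ₁ × 𝒢₁, …, R_m = ℱ_m × 𝒢_m, and labels b₁, …, b_m ∈ {0, 1}, such that Σ_{i=1}^m Σ_{(A,B)∈R_i, DISJ_n(A,B)≠b_i} μ_A(A)·μ_B(B) ≤ ε; that is, when (A, B) is sampled from the product distribution μ_A × μ_B, the probability that the label of the rectangle containing (A, B) differs from DISJ_n(A, B) is at most ε. -/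
open Finset Classical

open scoped BigOperators

/-!
The rectangles are the leaves of a deterministic communication protocol. Write `ε = (1 / 2) ^ k`,
let `s ≈ √(n * k)` and `t ≈ n / s`, and keep a set `Y` of live points, at first all of `[n]`.

*Large sets.* A pivot is a set of one player with at least `s` live points that is disjoint on `Y`
from an `ε`-fraction of the mass of the other player, who then announces whether her set is
disjoint from the pivot. After `yes` the pivot is removed from `Y`, which happens at most `t`
times; after `no` a fraction `ε` of the mass is lost. The potential `(4 / ε) ^ t * √mass`, with `t`
the number of removals still possible, drops at every step by a fraction `ε / 4` in total, so that
it bounds the number of branches as well as the error from abandoning branches of tiny mass. Once no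
pivot is left, rejecting whenever a set has at least `s` live points costs only error `2 * ε`.

*Small sets.* This is a distributional form of the Håstad–Wigderson protocol. Among public random
sets, Alice names the first one that contains her live points, and Bob discards his points outside
it; if the inputs are disjoint, this halves his set on average. Then the roles are exchanged. An
exponential moment of the two sizes shows that `O(s)` bits suffice. Since the inputs come from a
fixed distribution, the random sets can be fixed by averaging.

If `k > s`, then `n ≤ s`, and Alice simply announces her set.
-/

/-! ### Protocols and their rectangles -/

/-- Deterministic two-party protocol trees. An inner node splits on a set of inputs of one of the
two players; the first subtree is entered by the inputs in that set. -/
inductive Protocol (α : Type*) (β : Type*)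
  | leaf (c : Bool) : Protocol α β
  | alice (s : Set α) (P Q : Protocol α β) : Protocol α β
  | bob (s : Set β) (P Q : Protocol α β) : Protocol α β

namespace Protocol

variable {α β : Type*}

/-- The number of leaves, that is, of rectangles in the induced partition. -/
def numLeaves : Protocol α β → ℕ
  | leaf _ => 1
  | alice _ P Q => P.numLeaves + Q.numLeaves
  | bob _ P Q => P.numLeaves + Q.numLeaves

/-- The bit computed by the protocol. -/
noncomputable def output : Protocol α β → α → β → Bool
  | leaf c, _, _ => c
  | alice s P Q, a, b => if a ∈ s then P.output a b else Q.output a b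
  | bob s P Q, a, b => if b ∈ s then P.output a b else Q.output a b

/-- The number of the leaf reached by a pair of inputs, counting from the left and from `0`. -/
noncomputable def leafIndex : Protocol α β → α → β → ℕ
  | leaf _, _, _ => 0
  | alice s P Q, a, b => if a ∈ s then P.leafIndex a b else P.numLeaves + Q.leafIndex a b
  | bob s P Q, a, b => if b ∈ s then P.leafIndex a b else P.numLeaves + Q.leafIndex a b

/-- The protocol with the roles of the two players exchanged. -/
def swap : Protocol α β → Protocol β α
  | leaf c => leaf c
  | alice s P Q => bob s P.swap Q.swap
  | bob s P Q => alice s P.swap Q.swap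

/-- The indicator of the event that the protocol does not decide `D`. -/
noncomputable def error (P : Protocol α β) (D : α → β → Prop) (a : α) (b : β) : ℝ :=
  if (D a b ↔ P.output a b = true) then 0 else 1

lemma numLeaves_pos (P : Protocol α β) : 0 < P.numLeaves := by
  induction P with
  | leaf _ => exact Nat.one_pos
  | alice _ P Q hP _ => exact Nat.add_pos_left hP _
  | bob _ P Q hP _ => exact Nat.add_pos_left hP _

@[simp] lemma numLeaves_swap (P : Protocol α β) : P.swap.numLeaves = P.numLeaves := by
  induction P with
  | leaf _ => rfl
  | alice s P Q hP hQ => simp only [swap, numLeaves, hP, hQ]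
  | bob s P Q hP hQ => simp only [swap, numLeaves, hP, hQ]

lemma output_swap (P : Protocol α β) (a : α) (b : β) : P.swap.output b a = P.output a b := by
  induction P with
  | leaf _ => rfl
  | alice s P Q hP hQ => simp only [swap, output, hP, hQ]
  | bob s P Q hP hQ => simp only [swap, output, hP, hQ]

lemma error_swap (P : Protocol α β) (D : α → β → Prop) (a : α) (b : β) :
    P.swap.error (fun b a => D a b) b a = P.error D a b := by
  simp only [error, output_swap]

lemma error_alice (s : Set α) (P Q : Protocol α β) (D₁ D₂ : α → β → Prop) (a : α) (b : β) :
    (alice s P Q).error (fun a b => if a ∈ s then D₁ a b else D₂ a b) a b =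
      if a ∈ s then P.error D₁ a b else Q.error D₂ a b := by
  by_cases h : a ∈ s <;> simp only [error, output, h, if_true, if_false]

lemma leafIndex_lt (P : Protocol α β) (a : α) (b : β) : P.leafIndex a b < P.numLeaves := by
  induction P with
  | leaf _ => exact Nat.one_pos
  | alice s P Q hP hQ => rw [leafIndex, numLeaves]; split_ifs <;> omega
  | bob s P Q hP hQ => rw [leafIndex, numLeaves]; split_ifs <;> omega

lemma leafIndex_mix (P : Protocol α β) {a a' : α} {b b' : β}
    (h : P.leafIndex a b = P.leafIndex a' b') : P.leafIndex a b' = P.leafIndex a b := by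
  induction P with
  | leaf _ => rfl
  | alice s P Q hP hQ =>
    have := P.leafIndex_lt a b
    have := P.leafIndex_lt a' b'
    grind [leafIndex]
  | bob s P Q hP hQ =>
    have := P.leafIndex_lt a b
    have := P.leafIndex_lt a' b'
    grind [leafIndex]

lemma output_eq_of_leafIndex_eq (P : Protocol α β) {a a' : α} {b b' : β}
    (h : P.leafIndex a b = P.leafIndex a' b') : P.output a b = P.output a' b' := by
  induction P with
  | leaf _ => rfl
  | alice s P Q hP hQ =>
    have := P.leafIndex_lt a b
    have := P.leafIndex_lt a' b'
    grind [leafIndex, output]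
  | bob s P Q hP hQ =>
    have := P.leafIndex_lt a b
    have := P.leafIndex_lt a' b'
    grind [leafIndex, output]

lemma exists_rectangles (P : Protocol α β) :
    ∃ F : Fin P.numLeaves → Set α, ∃ G : Fin P.numLeaves → Set β, ∃ c : Fin P.numLeaves → Bool,
      (∀ a b (i : Fin P.numLeaves), P.leafIndex a b = i ↔ a ∈ F i ∧ b ∈ G i) ∧
      ∀ a b (i : Fin P.numLeaves), P.leafIndex a b = i → P.output a b = c i := by
  refine ⟨fun i => {a | ∃ b, P.leafIndex a b = i}, fun i => {b | ∃ a, P.leafIndex a b = i},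
    fun i => decide (∃ a b, P.leafIndex a b = i ∧ P.output a b = true),
    fun a b i => ⟨fun h => ⟨⟨b, h⟩, ⟨a, h⟩⟩, ?_⟩, fun a b i h => ?_⟩
  · rintro ⟨⟨b', hb'⟩, ⟨a', ha'⟩⟩
    rw [P.leafIndex_mix (hb'.trans ha'.symm), hb']
  · rw [Bool.eq_iff_iff, decide_eq_true_iff]
    refine ⟨fun h' => ⟨a, b, h, h'⟩, ?_⟩
    rintro ⟨a', b', h', hout⟩
    rw [P.output_eq_of_leafIndex_eq (h.trans h'.symm), hout]

end Protocol

/-! ### Distributional error -/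

/-- The integral of `W` against the product of the weights `μ` and `ν`. -/
def prodIntegral {α β : Type*} [Fintype α] [Fintype β] (μ : α → ℝ) (ν : β → ℝ) (W : α → β → ℝ) :
    ℝ :=
  ∑ a, ∑ b, μ a * ν b * W a b

section prodIntegral

variable {α β : Type*} [Fintype α] [Fintype β] {μ : α → ℝ} {ν : β → ℝ}

lemma prodIntegral_swap (μ : α → ℝ) (ν : β → ℝ) (W : α → β → ℝ) :
    prodIntegral ν μ (fun b a => W a b) = prodIntegral μ ν W := by
  simp only [prodIntegral, mul_comm (ν _)]
  exact sum_comm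

lemma prodIntegral_mono (hμ : 0 ≤ μ) (hν : 0 ≤ ν) {W W' : α → β → ℝ}
    (h : ∀ a b, W a b ≤ W' a b) : prodIntegral μ ν W ≤ prodIntegral μ ν W' :=
  sum_le_sum fun a _ => sum_le_sum fun b _ =>
    mul_le_mul_of_nonneg_left (h a b) (mul_nonneg (hμ a) (hν b))

lemma prodIntegral_ite (μ : α → ℝ) (ν : β → ℝ) (s : Set α) (W₁ W₂ : α → β → ℝ) :
    prodIntegral μ ν (fun a b => if a ∈ s then W₁ a b else W₂ a b) =
      prodIntegral (s.indicator μ) ν W₁ + prodIntegral (sᶜ.indicator μ) ν W₂ := by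
  simp only [prodIntegral, ← sum_add_distrib]
  refine sum_congr rfl fun a _ => sum_congr rfl fun b _ => ?_
  by_cases h : a ∈ s <;> simp [h]

lemma prodIntegral_add (μ : α → ℝ) (ν : β → ℝ) (W₁ W₂ : α → β → ℝ) :
    prodIntegral μ ν (fun a b => W₁ a b + W₂ a b) =
      prodIntegral μ ν W₁ + prodIntegral μ ν W₂ := by
  simp only [prodIntegral, mul_add, sum_add_distrib]

lemma prodIntegral_const (μ : α → ℝ) (ν : β → ℝ) (c : ℝ) :
    prodIntegral μ ν (fun _ _ => c) = c * ((∑ a, μ a) * ∑ b, ν b) := by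
  simp only [prodIntegral, ← sum_mul, ← mul_sum, mul_comm c]

lemma prodIntegral_expect {ι : Type*} [Fintype ι] (μ : α → ℝ) (ν : β → ℝ) (W : ι → α → β → ℝ) :
    prodIntegral μ ν (fun a b => 𝔼 i, W i a b) = 𝔼 i, prodIntegral μ ν (W i) := by
  simp only [prodIntegral, mul_expect, expect_sum_comm]

lemma Protocol.exists_partition (P : Protocol α β) (D : α → β → Prop) (μ : α → ℝ) (ν : β → ℝ) :
    ∃ F : Fin P.numLeaves → Finset α, ∃ G : Fin P.numLeaves → Finset β,
      ∃ c : Fin P.numLeaves → Bool,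
        (∀ i j, i ≠ j → Disjoint (F i ×ˢ G i) (F j ×ˢ G j)) ∧
        (∀ p : α × β, ∃ i, p ∈ F i ×ˢ G i) ∧
        ∑ i, ∑ p ∈ F i ×ˢ G i, (if (D p.1 p.2 ↔ c i = true) then 0 else μ p.1 * ν p.2) =
          prodIntegral μ ν (P.error D) := by
  obtain ⟨F, G, c, hFG, hc⟩ := P.exists_rectangles
  let leaf (p : α × β) : Fin P.numLeaves := ⟨P.leafIndex p.1 p.2, P.leafIndex_lt p.1 p.2⟩
  have rectangle (i) : univ.filter (· ∈ F i) ×ˢ univ.filter (· ∈ G i) =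
      univ.filter fun p => leaf p = i := by
    ext p
    simp only [mem_product, mem_filter_univ, ← hFG, Fin.ext_iff, leaf]
  refine ⟨fun i => univ.filter (· ∈ F i), fun i => univ.filter (· ∈ G i), c, ?_, ?_, ?_⟩ <;>
    simp only [rectangle]
  · refine fun i j hij => Finset.disjoint_left.2 fun p hi hj => hij ?_
    rw [← (mem_filter_univ p).1 hi, (mem_filter_univ p).1 hj]
  · exact fun p => ⟨leaf p, (mem_filter_univ p).2 rfl⟩
  · have summand (i) : ∀ p ∈ univ.filter fun p => leaf p = i,
        (if (D p.1 p.2 ↔ c i = true) then 0 else μ p.1 * ν p.2) =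
          μ p.1 * ν p.2 * P.error D p.1 p.2 := fun p hp => by
      rw [← hc p.1 p.2 i (Fin.ext_iff.1 ((mem_filter_univ p).1 hp)), Protocol.error, mul_ite,
        mul_zero, mul_one]
    rw [sum_congr rfl fun i _ => sum_congr rfl (summand i), sum_fiberwise,
      Fintype.sum_prod_type, prodIntegral]

end prodIntegral

/-- Some protocol with at most `L` leaves decides `D` with error at most `e`, where the inputs are
weighted by `μ` and `ν`, which need not be normalised. -/
def HasProtocol {α β : Type*} [Fintype α] [Fintype β] (μ : α → ℝ) (ν : β → ℝ)
    (D : α → β → Prop) (L e : ℝ) : Prop :=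
  ∃ P : Protocol α β, (P.numLeaves : ℝ) ≤ L ∧ prodIntegral μ ν (P.error D) ≤ e

namespace HasProtocol

variable {α β : Type*} [Fintype α] [Fintype β] {μ : α → ℝ} {ν : β → ℝ} {D : α → β → Prop}
  {L L' e e' : ℝ}

lemma mono (h : HasProtocol μ ν D L e) (hL : L ≤ L') (he : e ≤ e') : HasProtocol μ ν D L' e' :=
  let ⟨P, hPL, hPe⟩ := h
  ⟨P, hPL.trans hL, hPe.trans he⟩

lemma congr {D' : α → β → Prop} (h : HasProtocol μ ν D L e) (hD : ∀ a b, D a b ↔ D' a b) :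
    HasProtocol μ ν D' L e := by
  rwa [← show D = D' from funext₂ fun a b => propext (hD a b)]

lemma swap (h : HasProtocol μ ν D L e) : HasProtocol ν μ (fun b a => D a b) L e := by
  obtain ⟨P, hPL, hPe⟩ := h
  refine ⟨P.swap, by rwa [P.numLeaves_swap], ?_⟩
  rw [← prodIntegral_swap]
  simpa only [P.error_swap] using hPe

lemma leaf (c : Bool) (μ : α → ℝ) (ν : β → ℝ) (D : α → β → Prop) :
    HasProtocol μ ν D 1 (prodIntegral μ ν fun a b => if (D a b ↔ c = true) then 0 else 1) :=
  ⟨.leaf c, by simp [Protocol.numLeaves], le_rfl⟩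

lemma alice {s : Set α} {D₁ D₂ : α → β → Prop} {L₁ L₂ e₁ e₂ : ℝ}
    (h₁ : HasProtocol (s.indicator μ) ν D₁ L₁ e₁) (h₂ : HasProtocol (sᶜ.indicator μ) ν D₂ L₂ e₂) :
    HasProtocol μ ν (fun a b => if a ∈ s then D₁ a b else D₂ a b) (L₁ + L₂) (e₁ + e₂) := by
  obtain ⟨P, hPL, hPe⟩ := h₁
  obtain ⟨Q, hQL, hQe⟩ := h₂
  refine ⟨.alice s P Q, ?_, ?_⟩
  · rw [Protocol.numLeaves, Nat.cast_add]
    exact add_le_add hPL hQL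
  · rw [show Protocol.error _ _ = _ from funext₂ (Protocol.error_alice s P Q D₁ D₂),
      prodIntegral_ite]
    exact add_le_add hPe hQe

end HasProtocol

/-- Against all nonnegative weights `μ` and `ν` some protocol with at most `L` leaves decides `D`
with error at most the integral of `W`. By fixing the coins, this follows if a public-coin protocol
with at most `L` leaves errs on `(a, b)` with probability at most `W a b`. -/
def HasRandomizedProtocol {α β : Type*} [Fintype α] [Fintype β] (D : α → β → Prop) (L : ℝ)
    (W : α → β → ℝ) : Prop :=
  ∀ ⦃μ : α → ℝ⦄ ⦃ν : β → ℝ⦄, 0 ≤ μ → 0 ≤ ν → HasProtocol μ ν D L (prodIntegral μ ν W)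

namespace HasRandomizedProtocol

variable {α β ι : Type*} [Fintype α] [Fintype β] {D : α → β → Prop} {L L' : ℝ} {W W' : α → β → ℝ}

lemma mono (h : HasRandomizedProtocol D L W) (hL : L ≤ L') (hW : ∀ a b, W a b ≤ W' a b) :
    HasRandomizedProtocol D L' W' :=
  fun _ _ hμ hν => (h hμ hν).mono hL (prodIntegral_mono hμ hν hW)

lemma congr {D' : α → β → Prop} (h : HasRandomizedProtocol D L W)
    (hD : ∀ a b, D a b ↔ D' a b) : HasRandomizedProtocol D' L W :=
  fun _ _ hμ hν => (h hμ hν).congr hD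

lemma swap (h : HasRandomizedProtocol D L W) :
    HasRandomizedProtocol (fun b a => D a b) L (fun b a => W a b) := fun μ ν hμ hν => by
  simpa only [prodIntegral_swap] using (h hν hμ).swap

lemma leaf (c : Bool) (D : α → β → Prop) :
    HasRandomizedProtocol D 1 (fun a b => if (D a b ↔ c = true) then 0 else 1) :=
  fun μ ν _ _ => .leaf c μ ν D

lemma alice (s : Set α) {D₁ D₂ : α → β → Prop} {L₁ L₂ : ℝ} {W₁ W₂ : α → β → ℝ}
    (h₁ : HasRandomizedProtocol D₁ L₁ W₁) (h₂ : HasRandomizedProtocol D₂ L₂ W₂) :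
    HasRandomizedProtocol (fun a b => if a ∈ s then D₁ a b else D₂ a b) (L₁ + L₂)
      (fun a b => if a ∈ s then W₁ a b else W₂ a b) := fun μ ν hμ hν => by
  rw [prodIntegral_ite]
  exact (h₁ (Set.indicator_nonneg fun a _ => hμ a) hν).alice
    (h₂ (Set.indicator_nonneg fun a _ => hμ a) hν)

lemma bob (s : Set β) {D₁ D₂ : α → β → Prop} {L₁ L₂ : ℝ} {W₁ W₂ : α → β → ℝ}
    (h₁ : HasRandomizedProtocol D₁ L₁ W₁) (h₂ : HasRandomizedProtocol D₂ L₂ W₂) :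
    HasRandomizedProtocol (fun a b => if b ∈ s then D₁ a b else D₂ a b) (L₁ + L₂)
      (fun a b => if b ∈ s then W₁ a b else W₂ a b) :=
  (h₁.swap.alice s h₂.swap).swap

lemma announce {κ : α → ι} {S : Finset ι} (hS : S.Nonempty) (hκ : ∀ a, κ a ∈ S)
    {D : ι → α → β → Prop} {L : ι → ℝ} {W : ι → α → β → ℝ}
    (h : ∀ i ∈ S, HasRandomizedProtocol (D i) (L i) (W i)) :
    HasRandomizedProtocol (fun a b => D (κ a) a b) (∑ i ∈ S, L i) (fun a b => W (κ a) a b) := by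
  induction hS using Finset.Nonempty.cons_induction generalizing κ with
  | singleton i =>
    have hκi (a) : κ a = i := mem_singleton.1 (hκ a)
    simpa only [hκi, sum_singleton] using h i (mem_singleton_self i)
  | cons i S hi hS ih =>
    obtain ⟨j, hj⟩ := hS
    have hκ' (a) : (if κ a = i then j else κ a) ∈ S := by
      split_ifs with ha
      exacts [hj, (mem_cons.1 (hκ a)).resolve_left ha]
    rw [sum_cons]
    have key := (h i (mem_cons_self i S)).alice {a | κ a = i}
      (ih hκ' fun k hk => h k (mem_cons_of_mem hk))
    refine (key.congr fun a b => ?_).mono le_rfl fun a b => ?_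
    · by_cases ha : κ a = i <;> simp [ha]
    · by_cases ha : κ a = i <;> simp [ha]

lemma zero_error [Nonempty α] (D : α → β → Prop) :
    HasRandomizedProtocol D (2 * Fintype.card α) fun _ _ => 0 := by
  have bob_replies (a₀ : α) : HasRandomizedProtocol (fun _ : α => D a₀) 2 fun _ _ => 0 := by
    have key := (leaf true fun _ : α => D a₀).bob {b | D a₀ b} (leaf false fun _ : α => D a₀)
    refine (key.congr fun _ b => ?_).mono (by norm_num) fun _ b => ?_
    · rw [ite_self]
    · by_cases h : D a₀ b <;> simp [h]
  refine (announce univ_nonempty mem_univ fun a₀ _ => bob_replies a₀).mono ?_ fun _ _ => le_rfl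
  rw [sum_const, card_univ, nsmul_eq_mul, mul_comm]

lemma expect [Fintype ι] [Nonempty ι] {W : ι → α → β → ℝ}
    (h : ∀ i, HasRandomizedProtocol D L (W i)) :
    HasRandomizedProtocol D L (fun a b => 𝔼 i, W i a b) := fun μ ν hμ hν => by
  rw [prodIntegral_expect]
  obtain ⟨i, -, hi⟩ := exists_le_of_expect_le univ_nonempty
    (le_refl (𝔼 i, prodIntegral μ ν (W i)))
  exact ((h i) hμ hν).mono le_rfl hi

end HasRandomizedProtocol

/-! ### Small sets -/

section SmallSets

variable {X : Type*} [DecidableEq X]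

/-- `A` and `B` are disjoint on the set `Y` of points that are still live. -/
def DisjOn (Y A B : Finset X) : Prop :=
  Disjoint (A ∩ Y) (B ∩ Y)

lemma disjOn_comm {Y A B : Finset X} : DisjOn Y A B ↔ DisjOn Y B A :=
  disjoint_comm

lemma disjOn_inter_iff {Y Z A B : Finset X} (h : A ∩ Y ⊆ Z) :
    DisjOn (Y ∩ Z) A B ↔ DisjOn Y A B := by
  simp only [DisjOn, Finset.disjoint_left, mem_inter]
  exact ⟨fun H x hA hB => H ⟨hA.1, hA.2, h (mem_inter.2 hA)⟩ ⟨hB.1, hB.2, h (mem_inter.2 hA)⟩,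
    fun H x hA hB => H ⟨hA.1, hA.2.1⟩ ⟨hB.1, hB.2.1⟩⟩

/-- The exponential moment that controls the error of the protocol for small sets. Only pairs that
are disjoint on the live set can be answered wrongly. -/
noncomputable def potential (x y : ℝ) (Y A B : Finset X) : ℝ :=
  if DisjOn Y A B then x ^ #(A ∩ Y) * y ^ #(B ∩ Y) else 0

lemma potential_comm (x y : ℝ) (Y A B : Finset X) : potential x y Y A B = potential y x Y B A := by
  simp only [potential, disjOn_comm (A := A), mul_comm]

lemma potential_nonneg {x y : ℝ} (hx : 0 ≤ x) (hy : 0 ≤ y) (Y A B : Finset X) :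
    0 ≤ potential x y Y A B := by
  unfold potential
  positivity

lemma potential_mul_left (x y z : ℝ) (Y A B : Finset X) :
    potential (x * z) y Y A B = x ^ #(A ∩ Y) * potential z y Y A B := by
  simp only [potential, mul_pow, mul_ite, mul_zero, mul_assoc]

lemma error_false_le_potential {T : ℕ} {Y A : Finset X} (hA : T ≤ #(A ∩ Y)) (B : Finset X) :
    (if (DisjOn Y A B ↔ false = true) then 0 else 1) ≤ (4 / 5) ^ T * potential 3 2 Y A B := by
  by_cases h : DisjOn Y A B
  · have key : (1 : ℝ) ≤ (4 / 5) ^ T * (3 ^ #(A ∩ Y) * 2 ^ #(B ∩ Y)) :=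
      calc (1 : ℝ) ≤ (4 / 5 * 3) ^ T * 2 ^ #(B ∩ Y) :=
            one_le_mul_of_one_le_of_one_le (one_le_pow₀ (by norm_num)) (one_le_pow₀ one_le_two)
        _ = (4 / 5) ^ T * (3 ^ T * 2 ^ #(B ∩ Y)) := by rw [mul_pow, mul_assoc]
        _ ≤ (4 / 5) ^ T * (3 ^ #(A ∩ Y) * 2 ^ #(B ∩ Y)) := by gcongr; norm_num
    simpa [potential, h] using key
  · simp [potential, h]

lemma one_sub_pow_mul_le_one {q : ℝ} (h₀ : 0 ≤ q) (h₁ : q ≤ 1) (m : ℕ) :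
    (1 - q) ^ m * (m * q) ≤ 1 :=
  calc (1 - q) ^ m * (m * q) ≤ (1 - q) ^ m * (1 + q) ^ m := by
        have bernoulli := one_add_mul_le_pow (by linarith : -2 ≤ q) m
        exact mul_le_mul_of_nonneg_left (by linarith) (pow_nonneg (by linarith) m)
    _ = (1 - q ^ 2) ^ m := by rw [← mul_pow]; ring
    _ ≤ 1 := pow_le_one₀ (by nlinarith) (by nlinarith)

lemma tries_error_le {i : ℕ} (hi : 1 ≤ i) :
    (5 / 6 : ℝ) ^ i + (1 - (1 / 2) ^ i) ^ 4 ^ (i + 1) * (5 / 4) ^ i ≤ 1 := by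
  have hq : ((1 / 2 : ℝ)) ^ i ≤ 1 := pow_le_one₀ (by norm_num) (by norm_num)
  have miss : (1 - (1 / 2 : ℝ) ^ i) ^ 4 ^ (i + 1) * (4 * 2 ^ i) ≤ 1 := by
    have := one_sub_pow_mul_le_one (by positivity) hq (4 ^ (i + 1))
    have e : ((4 ^ (i + 1) : ℕ) : ℝ) * (1 / 2) ^ i = 4 * 2 ^ i := by
      push_cast
      rw [pow_succ, mul_right_comm, ← mul_pow]; norm_num [mul_comm]
    rwa [e] at this
  calc (5 / 6 : ℝ) ^ i + (1 - (1 / 2) ^ i) ^ 4 ^ (i + 1) * (5 / 4) ^ i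
      = (5 / 6) ^ i + (1 - (1 / 2) ^ i) ^ 4 ^ (i + 1) * (4 * 2 ^ i) * ((5 / 8) ^ i / 4) := by
        rw [show (5 / 4 : ℝ) = 2 * (5 / 8) by norm_num, mul_pow]; ring
    _ ≤ (5 / 6) ^ 1 + 1 * ((5 / 8) ^ 1 / 4) := by
        have h₁ : (5 / 6 : ℝ) ^ i ≤ (5 / 6) ^ 1 :=
          pow_le_pow_of_le_one (by norm_num) (by norm_num) hi
        have h₂ : (5 / 8 : ℝ) ^ i ≤ (5 / 8) ^ 1 :=
          pow_le_pow_of_le_one (by norm_num) (by norm_num) hi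
        gcongr
    _ ≤ 1 := by norm_num

lemma potential_tries_le {i T : ℕ} (hi : 1 ≤ i) (hiT : i ≤ T) {Y A : Finset X} (hA : #(A ∩ Y) = i)
    (B : Finset X) :
    (4 / 5) ^ (T - i) * (potential 2 2 Y A B +
        (1 - (1 / 2) ^ #(A ∩ Y)) ^ 4 ^ (i + 1) * potential 3 2 Y A B) ≤
      (4 / 5) ^ T * potential 3 2 Y A B := by
  have hT : (4 / 5 : ℝ) ^ (T - i) = (4 / 5) ^ T * (5 / 4) ^ i := by
    rw [← Nat.sub_add_cancel hiT, pow_add, mul_assoc, ← mul_pow]; norm_num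
  have h22 : potential 2 2 Y A B = (2 / 3) ^ i * potential 3 2 Y A B := by
    rw [← hA, ← potential_mul_left]; norm_num
  have h56 : (5 / 4 : ℝ) ^ i * (2 / 3) ^ i = (5 / 6) ^ i := by
    rw [← mul_pow]; norm_num
  calc _ = (4 / 5) ^ T * (((5 / 6 : ℝ) ^ i + (1 - (1 / 2) ^ i) ^ 4 ^ (i + 1) * (5 / 4) ^ i) *
        potential 3 2 Y A B) := by rw [hT, h22, ← h56, hA]; ring
    _ ≤ (4 / 5) ^ T * (1 * potential 3 2 Y A B) := by
        have := potential_nonneg three_pos.le two_pos.le Y A B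
        gcongr
        exact tries_error_le hi
    _ = _ := by rw [one_mul]

lemma one_le_pow_mul_half_pow {i T : ℕ} (hT : 1 ≤ T) (hi : i ≤ T + 1) :
    (1 : ℝ) ≤ 128 ^ T * (1 / 2) ^ i / 2 :=
  calc (1 : ℝ) ≤ 2 ^ (7 * T) / 2 ^ (i + 1) := by
        rw [one_le_div (by positivity)]
        exact pow_le_pow_right₀ one_le_two (by omega)
    _ = 128 ^ T * (1 / 2) ^ i / 2 := by
        rw [pow_mul, one_div_pow, mul_one_div, div_div, ← pow_succ]; norm_num

lemma tries_numLeaves_le {i T : ℕ} (hi : 1 ≤ i) (hiT : i ≤ T) :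
    ((4 ^ (i + 1) : ℕ) + 1 : ℝ) * 128 ^ (T - i) ≤ 128 ^ T * (1 / 2) ^ i / 2 := by
  have key : ((4 ^ (i + 1) : ℕ) + 1 : ℝ) ≤ 64 ^ i / 2 := by
    have h₁ : (1 : ℝ) ≤ 4 ^ i := one_le_pow₀ (by norm_num)
    have h₂ : (16 : ℝ) ^ 1 ≤ 16 ^ i := pow_le_pow_right₀ (by norm_num) hi
    have h₃ : (64 : ℝ) ^ i = 4 ^ i * 16 ^ i := by rw [← mul_pow]; norm_num
    push_cast
    rw [pow_succ, h₃]
    nlinarith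
  calc _ ≤ (64 : ℝ) ^ i / 2 * 128 ^ (T - i) := by gcongr
    _ = 128 ^ T * (1 / 2) ^ i / 2 := by
      conv_rhs => rw [← Nat.sub_add_cancel hiT, pow_add]
      rw [show (64 : ℝ) = 128 * (1 / 2) by norm_num, mul_pow]
      ring

variable [Fintype X]

lemma expect_ite_subset_pow {A B : Finset X} (h : Disjoint A B) (x : ℝ) :
    𝔼 Z : Finset X, (if A ⊆ Z then x ^ #(B ∩ Z) else 0) = (1 / 2) ^ #A * ((1 + x) / 2) ^ #B := by
  have summand (Z : Finset X) : (if A ⊆ Z then x ^ #(B ∩ Z) else 0) =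
      (∏ a ∈ Z, if a ∈ B then x else 1) * ∏ a ∈ Zᶜ, if a ∉ A then 1 else 0 := by
    have subset_iff : A ⊆ Z ↔ ∀ a ∈ Zᶜ, a ∉ A := by
      simp only [mem_compl, not_imp_not]; rfl
    simp only [prod_ite_mem, prod_const, prod_ite_zero, one_pow, mul_ite, mul_one, mul_zero,
      inter_comm B, subset_iff]
  have factor (a : X) : ((if a ∈ B then x else 1) + if a ∉ A then 1 else 0) =
      2 * ((if a ∈ A then 1 / 2 else 1) * if a ∈ B then (1 + x) / 2 else 1) := by
    have hAB : a ∈ A → a ∉ B := fun ha => Finset.disjoint_left.1 h ha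
    by_cases hA : a ∈ A <;> by_cases hB : a ∈ B <;> simp_all <;> ring
  rw [Fintype.expect_eq_sum_div_card, sum_congr rfl fun Z _ => summand Z, ← Fintype.prod_add,
    prod_congr rfl fun a _ => factor a, prod_mul_distrib, prod_mul_distrib, prod_ite_mem,
    prod_ite_mem, univ_inter, univ_inter, prod_const, prod_const, prod_const, card_univ,
    Fintype.card_finset, Nat.cast_pow, Nat.cast_ofNat, mul_div_cancel_left₀ _ (by positivity)]

lemma expect_ite_subset {A B : Finset X} (h : Disjoint A B) (x u v : ℝ) :
    𝔼 Z : Finset X, (if A ⊆ Z then u * x ^ #(B ∩ Z) else v) =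
      u * ((1 / 2) ^ #A * ((1 + x) / 2) ^ #B) + (1 - (1 / 2) ^ #A) * v := by
  have summand (Z : Finset X) : (if A ⊆ Z then u * x ^ #(B ∩ Z) else v) =
      u * (if A ⊆ Z then x ^ #(B ∩ Z) else 0) +
        (v - (if A ⊆ Z then 1 ^ #((∅ : Finset X) ∩ Z) else 0) * v) := by
    split_ifs <;> simp
  rw [expect_congr rfl fun Z _ => summand Z, expect_add_distrib, expect_sub_distrib,
    Fintype.expect_const, ← mul_expect, ← expect_mul, expect_ite_subset_pow h,
    expect_ite_subset_pow (disjoint_empty_right A)]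
  simp only [card_empty, pow_zero]
  ring

lemma expect_ite_potential (x y v : ℝ) (Y A B : Finset X) :
    𝔼 Z : Finset X, (if A ∩ Y ⊆ Z then potential x y (Y ∩ Z) A B else v) =
      potential (x / 2) ((1 + y) / 2) Y A B + (1 - (1 / 2) ^ #(A ∩ Y)) * v := by
  by_cases hAB : DisjOn Y A B
  · have summand (Z : Finset X) : (if A ∩ Y ⊆ Z then potential x y (Y ∩ Z) A B else v) =
        if A ∩ Y ⊆ Z then x ^ #(A ∩ Y) * y ^ #(B ∩ Y ∩ Z) else v := by
      refine if_ctx_congr Iff.rfl (fun hA => ?_) fun _ => rfl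
      rw [potential, if_pos ((disjOn_inter_iff hA).2 hAB), ← inter_assoc, ← inter_assoc,
        inter_eq_left.2 hA]
    rw [expect_congr rfl fun Z _ => summand Z, expect_ite_subset hAB, potential, if_pos hAB,
      ← mul_assoc, ← mul_pow, mul_one_div]
  · have summand (Z : Finset X) : (if A ∩ Y ⊆ Z then potential x y (Y ∩ Z) A B else v) =
        if A ∩ Y ⊆ Z then 0 * 1 ^ #((∅ : Finset X) ∩ Z) else v := by
      refine if_ctx_congr Iff.rfl (fun hA => ?_) fun _ => rfl
      rw [potential, if_neg (mt (disjOn_inter_iff hA).1 hAB), zero_mul]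
    rw [expect_congr rfl fun Z _ => summand Z, expect_ite_subset (disjoint_empty_right _),
      zero_mul, potential, if_neg hAB]

/- Among `m` random sets `Z`, Alice names the first one that contains her live points, and Bob may
then discard his points outside `Z`. If none of the sets qualifies, Alice remains the speaker. -/
lemma HasRandomizedProtocol.disjOn_tries {c N : ℝ} (hc : 0 ≤ c)
    (h : ∀ Y : Finset X, HasRandomizedProtocol (DisjOn Y) N fun A B => c * potential 3 2 Y A B)
    (Y : Finset X) (m : ℕ) :
    HasRandomizedProtocol (DisjOn Y) ((m + 1) * N) fun A B =>
      c * (potential 2 2 Y A B + (1 - (1 / 2) ^ #(A ∩ Y)) ^ m * potential 3 2 Y A B) := by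
  induction m with
  | zero =>
    refine (h Y).mono (by simp) fun A B => ?_
    rw [pow_zero, one_mul]
    exact mul_le_mul_of_nonneg_left
      (le_add_of_nonneg_left (potential_nonneg two_pos.le two_pos.le Y A B)) hc
  | succ m ih =>
    have swapped (Z : Finset X) :
        HasRandomizedProtocol (DisjOn Z) N fun A B => c * potential 2 3 Z A B := by
      simpa only [potential_comm 2 3, disjOn_comm] using (h Z).swap
    have one_try (Z : Finset X) : HasRandomizedProtocol (DisjOn Y) (N + (m + 1) * N) fun A B =>
        c * (if A ∩ Y ⊆ Z then potential 2 3 (Y ∩ Z) A B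
          else potential 2 2 Y A B + (1 - (1 / 2) ^ #(A ∩ Y)) ^ m * potential 3 2 Y A B) := by
      refine (((swapped (Y ∩ Z)).alice {A | A ∩ Y ⊆ Z} ih).congr fun A B => ?_).mono le_rfl
        fun A B => ?_
      · rw [Set.mem_ofPred_eq]
        split_ifs with hA
        exacts [disjOn_inter_iff hA, Iff.rfl]
      · rw [Set.mem_ofPred_eq, mul_ite]
        split_ifs <;> exact le_rfl
    refine (HasRandomizedProtocol.expect one_try).mono (by push_cast; linarith)
      fun A B => le_of_eq ?_
    have halve : potential (2 / 2) ((1 + 3) / 2) Y A B =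
        (1 / 2) ^ #(A ∩ Y) * potential 2 2 Y A B := by
      rw [← potential_mul_left]; norm_num
    rw [← mul_expect, expect_ite_potential, halve]
    ring

lemma exists_round {i T : ℕ} (hT : 1 ≤ T) (hi : i ≤ T + 1) (Y : Finset X)
    (ih : ∀ T' < T, ∀ Y : Finset X,
      HasRandomizedProtocol (DisjOn Y) (128 ^ T') fun A B => (4 / 5) ^ T' * potential 3 2 Y A B) :
    ∃ W : Finset X → Finset X → ℝ,
      HasRandomizedProtocol (DisjOn Y) (128 ^ T * (1 / 2) ^ i / 2) W ∧
        ∀ A, min #(A ∩ Y) (T + 1) = i → ∀ B, W A B ≤ (4 / 5) ^ T * potential 3 2 Y A B := by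
  have single_leaf (c : Bool) := (HasRandomizedProtocol.leaf c (DisjOn Y)).mono
    (one_le_pow_mul_half_pow hT hi) fun _ _ => le_rfl
  rcases (by omega : i = 0 ∨ i = T + 1 ∨ 1 ≤ i ∧ i ≤ T) with rfl | rfl | ⟨hi₁, hiT⟩
  · refine ⟨_, single_leaf true, fun A hA B => ?_⟩
    have hAY : A ∩ Y = ∅ := card_eq_zero.1 (by omega)
    have := potential_nonneg three_pos.le two_pos.le Y A B
    rw [if_pos (by simp [DisjOn, hAY])]
    positivity
  · exact ⟨_, single_leaf false, fun A hA B => error_false_le_potential (by omega) B⟩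
  · refine ⟨_, (HasRandomizedProtocol.disjOn_tries (by positivity) (ih (T - i) (by omega)) Y
      (4 ^ (i + 1))).mono (tries_numLeaves_le hi₁ hiT) fun _ _ => le_rfl, fun A hA B => ?_⟩
    exact potential_tries_le hi₁ hiT (by omega) B

/- Alice announces the number of her live points up to a maximum of `T + 1`; this selects the number
of tries. The remaining budget drops with that number, so a single induction on `T` suffices. -/
theorem hasRandomizedProtocol_disjOn (T : ℕ) (Y : Finset X) :
    HasRandomizedProtocol (DisjOn Y) (128 ^ T) fun A B => (4 / 5) ^ T * potential 3 2 Y A B := by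
  induction T using Nat.strong_induction_on generalizing Y with
  | _ T ih =>
  obtain rfl | hT := T.eq_zero_or_pos
  · exact (HasRandomizedProtocol.leaf false _).mono (by simp) fun A B =>
      error_false_le_potential (Nat.zero_le _) B
  choose! W hW hW_le using fun i (hi : i ∈ range (T + 2)) =>
    exists_round hT (Nat.le_of_lt_succ (mem_range.1 hi)) Y ih
  have hκ (A : Finset X) : min #(A ∩ Y) (T + 1) ∈ range (T + 2) := mem_range.2 (by omega)
  refine (HasRandomizedProtocol.announce nonempty_range_add_one hκ hW).mono ?_
    fun A B => hW_le _ (hκ A) A rfl B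
  calc ∑ i ∈ range (T + 2), (128 : ℝ) ^ T * (1 / 2) ^ i / 2
      = 128 ^ T * (∑ i ∈ range (T + 2), (1 / 2) ^ i) / 2 := by rw [← sum_div, ← mul_sum]
    _ ≤ 128 ^ T * 2 / 2 := by gcongr; exact sum_geometric_two_le _
    _ = 128 ^ T := by ring

end SmallSets

/-! ### Large sets -/

section PivotPotential

variable {α β : Type*} [Fintype α] [Fintype β] {μ : α → ℝ} {ν : β → ℝ} {ε : ℝ}

lemma sum_indicator_add_sum_indicator_compl (S : Set α) (μ : α → ℝ) :
    ∑ a, S.indicator μ a + ∑ a, Sᶜ.indicator μ a = ∑ a, μ a := by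
  rw [← sum_add_distrib]
  exact sum_congr rfl fun a _ => congrFun (Set.indicator_self_add_compl S μ) a

lemma ncard_support_indicator_compl_lt {S : Set α} (h : 0 < ∑ a, S.indicator μ a) :
    (Function.support (Sᶜ.indicator μ)).ncard < (Function.support μ).ncard := by
  obtain ⟨a, -, ha⟩ := exists_ne_zero_of_sum_ne_zero h.ne'
  obtain ⟨haS, haμ⟩ := Set.indicator_apply_ne_zero.1 ha
  refine Set.ncard_lt_ncard ?_
  rw [Set.support_indicator]
  exact Set.ssubset_iff_exists.2 ⟨Set.inter_subset_right, a, haμ, fun h => h.1 haS⟩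

/-- The potential of the first phase, where `t` bounds the number of pivots that can still be
removed from the live set. -/
noncomputable def pivotPotential (ε : ℝ) (t : ℕ) (μ : α → ℝ) (ν : β → ℝ) : ℝ :=
  (4 / ε) ^ t * √((∑ a, μ a) * ∑ b, ν b)

lemma pivotPotential_comm (ε : ℝ) (t : ℕ) (μ : α → ℝ) (ν : β → ℝ) :
    pivotPotential ε t μ ν = pivotPotential ε t ν μ := by
  rw [pivotPotential, pivotPotential, mul_comm (∑ a, μ a)]

lemma pivotPotential_nonneg (hε : 0 ≤ ε) (t : ℕ) (μ : α → ℝ) (ν : β → ℝ) :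
    0 ≤ pivotPotential ε t μ ν := by
  unfold pivotPotential
  positivity

lemma sqrt_mass_le_pivotPotential (hε : 0 < ε) (hε₁ : ε ≤ 1) (t : ℕ) (μ : α → ℝ) (ν : β → ℝ) :
    √((∑ a, μ a) * ∑ b, ν b) ≤ pivotPotential ε t μ ν :=
  le_mul_of_one_le_left (Real.sqrt_nonneg _)
    (one_le_pow₀ ((one_le_div hε).2 (by linarith)))

lemma pivotPotential_succ (ε : ℝ) (t : ℕ) (μ : α → ℝ) (ν : β → ℝ) :
    pivotPotential ε (t + 1) μ ν = 4 / ε * pivotPotential ε t μ ν := by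
  rw [pivotPotential, pivotPotential, pow_succ', mul_assoc]

lemma pivotPotential_indicator_le (hε : 0 ≤ ε) (t : ℕ) (hμ : 0 ≤ μ) (hν : 0 ≤ ν) (S : Set α) :
    pivotPotential ε t (S.indicator μ) ν ≤ pivotPotential ε t μ ν := by
  have hν₀ : 0 ≤ ∑ b, ν b := sum_nonneg fun b _ => hν b
  unfold pivotPotential
  gcongr with a
  exact Set.indicator_le_self' (fun _ _ => hμ _) a

lemma pivotPotential_indicator_compl_le (hε : 0 < ε) (hε₁ : ε ≤ 1) (t : ℕ) (hμ : 0 ≤ μ)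
    (hν : 0 ≤ ν) {S : Set α} (hS : ε * ∑ a, μ a ≤ ∑ a, S.indicator μ a) :
    pivotPotential ε t (Sᶜ.indicator μ) ν ≤ (1 - ε / 2) * pivotPotential ε t μ ν := by
  have hμ₀ : 0 ≤ ∑ a, μ a := sum_nonneg fun a _ => hμ a
  have hν₀ : 0 ≤ ∑ b, ν b := sum_nonneg fun b _ => hν b
  have mass_le : ∑ a, Sᶜ.indicator μ a ≤ (1 - ε / 2) ^ 2 * ∑ a, μ a := by
    have := sum_indicator_add_sum_indicator_compl S μ
    have square : (1 - ε) * ∑ a, μ a ≤ (1 - ε / 2) ^ 2 * ∑ a, μ a :=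
      mul_le_mul_of_nonneg_right (by nlinarith [sq_nonneg ε]) hμ₀
    linarith
  calc pivotPotential ε t (Sᶜ.indicator μ) ν
      ≤ (4 / ε) ^ t * √((1 - ε / 2) ^ 2 * (∑ a, μ a) * ∑ b, ν b) := by
        unfold pivotPotential
        gcongr
    _ = (1 - ε / 2) * pivotPotential ε t μ ν := by
        rw [mul_assoc ((1 - ε / 2) ^ 2), Real.sqrt_mul (sq_nonneg _), Real.sqrt_sq (by linarith),
          pivotPotential]
        ring

lemma pivotPotential_indicator_add_le (hε : 0 < ε) (hε₁ : ε ≤ 1) (t : ℕ) (hμ : 0 ≤ μ)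
    (hν : 0 ≤ ν) {S : Set α} (hS : ε * ∑ a, μ a ≤ ∑ a, S.indicator μ a) :
    pivotPotential ε t (S.indicator μ) ν + pivotPotential ε (t + 1) (Sᶜ.indicator μ) ν ≤
      (1 - ε / 4) * pivotPotential ε (t + 1) μ ν :=
  calc pivotPotential ε t (S.indicator μ) ν + pivotPotential ε (t + 1) (Sᶜ.indicator μ) ν
      ≤ pivotPotential ε t μ ν + (1 - ε / 2) * pivotPotential ε (t + 1) μ ν :=
        add_le_add (pivotPotential_indicator_le hε.le t hμ hν S)
          (pivotPotential_indicator_compl_le hε hε₁ (t + 1) hμ hν hS)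
    _ = (1 - ε / 4) * pivotPotential ε (t + 1) μ ν := by
        rw [pivotPotential_succ]
        field_simp
        ring

end PivotPotential

section LargeSets

variable {X : Type*} [DecidableEq X]

lemma disjOn_sdiff_iff {Y A B B₀ : Finset X} (h : DisjOn Y A B₀) :
    DisjOn (Y \ B₀) A B ↔ DisjOn Y A B := by
  simp only [DisjOn, Finset.disjoint_left, mem_inter, mem_sdiff] at h ⊢
  exact ⟨fun H x hA hB => H ⟨hA.1, hA.2, fun hx => h hA ⟨hx, hA.2⟩⟩
      ⟨hB.1, hB.2, fun hx => h hA ⟨hx, hA.2⟩⟩,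
    fun H x hA hB => H ⟨hA.1, hA.2.1⟩ ⟨hB.1, hB.2.1⟩⟩

lemma potential_le_six_pow {s : ℕ} {Y A B : Finset X} (hA : #(A ∩ Y) ≤ s) (hB : #(B ∩ Y) ≤ s) :
    potential 3 2 Y A B ≤ 6 ^ s := by
  unfold potential
  split_ifs
  · calc (3 : ℝ) ^ #(A ∩ Y) * 2 ^ #(B ∩ Y) ≤ 3 ^ s * 2 ^ s := by gcongr <;> norm_num
      _ = 6 ^ s := by rw [← mul_pow]; norm_num
  · positivity

/-- The indicator of the event that the inputs are disjoint on the live set although the first one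
has at least `s` live points. Such pairs are answered wrongly once no pivot is left. -/
noncomputable def largeDisjoint (s : ℕ) (Y A B : Finset X) : ℝ :=
  if s ≤ #(A ∩ Y) ∧ DisjOn Y A B then 1 else 0

lemma largeDisjoint_nonneg (s : ℕ) (Y A B : Finset X) : 0 ≤ largeDisjoint s Y A B := by
  unfold largeDisjoint
  positivity

variable [Fintype X]

lemma hasRandomizedProtocol_disjOn_of_six_pow_le {ε : ℝ} {s T : ℕ} (hT : 6 ^ s * (4 / 5) ^ T ≤ ε)
    (Y : Finset X) :
    HasRandomizedProtocol (DisjOn Y) (128 ^ T + 2) fun A B =>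
      largeDisjoint s Y A B + largeDisjoint s Y B A + ε := by
  have hε : 0 < ε := lt_of_lt_of_le (by positivity) hT
  have reject := HasRandomizedProtocol.leaf false (DisjOn Y)
  refine ((reject.alice {A | s ≤ #(A ∩ Y)} (reject.bob {B | s ≤ #(B ∩ Y)}
    (hasRandomizedProtocol_disjOn T Y))).congr fun A B => ?_).mono (by linarith) fun A B => ?_
  · simp only [ite_self]
  · have h₁ := largeDisjoint_nonneg s Y A B
    have h₂ := largeDisjoint_nonneg s Y B A
    simp only [Set.mem_ofPred_eq]
    split_ifs with hA hAB hB hAB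
    · positivity
    · rw [largeDisjoint, if_pos ⟨hA, by simpa using hAB⟩]
      linarith
    · positivity
    · rw [largeDisjoint.eq_def s Y B, if_pos ⟨hB, disjOn_comm.1 (by simpa using hAB)⟩]
      linarith
    · calc (4 / 5) ^ T * potential 3 2 Y A B ≤ (4 / 5) ^ T * 6 ^ s := by
            gcongr
            exact potential_le_six_pow (not_le.1 hA).le (not_le.1 hB).le
        _ ≤ ε := by rwa [mul_comm]
        _ ≤ _ := le_add_of_nonneg_left (add_nonneg h₁ h₂)

variable {ε : ℝ} {s : ℕ} {Y : Finset X} {μ ν : Finset X → ℝ}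

lemma prodIntegral_largeDisjoint_le (hμ : 0 ≤ μ) (hν : 0 ≤ ν) (hε : 0 ≤ ε)
    (h : ∀ A, s ≤ #(A ∩ Y) → ∑ B, {B | DisjOn Y A B}.indicator ν B ≤ ε * ∑ B, ν B) :
    prodIntegral μ ν (largeDisjoint s Y) ≤ ε * ((∑ A, μ A) * ∑ B, ν B) := by
  have hν₀ : 0 ≤ ∑ B, ν B := sum_nonneg fun B _ => hν B
  have hsection (A : Finset X) : ∑ B, ν B * largeDisjoint s Y A B ≤ ε * ∑ B, ν B := by
    by_cases hA : s ≤ #(A ∩ Y)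
    · simpa [largeDisjoint, hA, Set.indicator_apply] using h A hA
    · simp only [largeDisjoint, hA, false_and, if_false, mul_zero, sum_const_zero]
      positivity
  calc prodIntegral μ ν (largeDisjoint s Y)
      = ∑ A, μ A * ∑ B, ν B * largeDisjoint s Y A B := by
        simp only [prodIntegral, mul_sum, mul_assoc]
    _ ≤ ∑ A, μ A * (ε * ∑ B, ν B) :=
        sum_le_sum fun A _ => mul_le_mul_of_nonneg_left (hsection A) (hμ A)
    _ = ε * ((∑ A, μ A) * ∑ B, ν B) := by rw [← sum_mul]; ring

lemma hasProtocol_disjOn_of_no_pivot {T : ℕ} (hT : 6 ^ s * (4 / 5) ^ T ≤ ε) (hμ : 0 ≤ μ)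
    (hν : 0 ≤ ν)
    (hA : ∀ A, s ≤ #(A ∩ Y) → ∑ B, {B | DisjOn Y A B}.indicator ν B ≤ ε * ∑ B, ν B)
    (hB : ∀ B, s ≤ #(B ∩ Y) → ∑ A, {A | DisjOn Y B A}.indicator μ A ≤ ε * ∑ A, μ A) :
    HasProtocol μ ν (DisjOn Y) (128 ^ T + 2) (3 * ε * ((∑ A, μ A) * ∑ B, ν B)) := by
  have hε : 0 ≤ ε := le_trans (by positivity) hT
  refine (hasRandomizedProtocol_disjOn_of_six_pow_le hT Y hμ hν).mono le_rfl ?_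
  have alice_large := prodIntegral_largeDisjoint_le hμ hν hε hA
  have bob_large := prodIntegral_largeDisjoint_le hν hμ hε hB
  have split : prodIntegral μ ν (fun A B => largeDisjoint s Y A B + largeDisjoint s Y B A + ε) =
      prodIntegral μ ν (largeDisjoint s Y) + prodIntegral ν μ (largeDisjoint s Y) +
        ε * ((∑ A, μ A) * ∑ B, ν B) := by
    rw [← prodIntegral_swap ν μ (largeDisjoint s Y), prodIntegral_add, prodIntegral_add,
      prodIntegral_const]
  linarith

/-- The bounds obtained for the protocol with pivots: at most `M` leaves for every `ρ` of the
potential and for one more, error `3ε` relative to the total mass, and an additional error `ρ` for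
every unit of the potential from the branches abandoned because their mass is below `ρ ^ 2`. -/
def PivotBound (ε ρ M : ℝ) (t : ℕ) (Y : Finset X) (μ ν : Finset X → ℝ) : Prop :=
  HasProtocol μ ν (DisjOn Y) (M * (pivotPotential ε t μ ν / ρ + 1))
    (3 * ε * ((∑ A, μ A) * ∑ B, ν B) + ρ * pivotPotential ε t μ ν)

namespace PivotBound

variable {ρ M : ℝ} {t T : ℕ}

lemma swap (h : PivotBound ε ρ M t Y μ ν) : PivotBound ε ρ M t Y ν μ := by
  rw [PivotBound, pivotPotential_comm, mul_comm (∑ A, ν A)]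
  exact (HasProtocol.swap h).congr fun A B => disjOn_comm

lemma of_mass_lt (hε : 0 < ε) (hε₁ : ε ≤ 1) (hρ : 0 < ρ) (hM : 1 ≤ M) (hμ : 0 ≤ μ) (hν : 0 ≤ ν)
    (hmass : (∑ A, μ A) * ∑ B, ν B < ρ ^ 2) : PivotBound ε ρ M t Y μ ν := by
  have hμν : 0 ≤ (∑ A, μ A) * ∑ B, ν B :=
    mul_nonneg (sum_nonneg fun A _ => hμ A) (sum_nonneg fun B _ => hν B)
  have hΦ := pivotPotential_nonneg hε.le t μ ν
  refine (HasProtocol.leaf false μ ν (DisjOn Y)).mono ?_ ?_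
  · have : 0 ≤ pivotPotential ε t μ ν / ρ := by positivity
    nlinarith
  · calc prodIntegral μ ν (fun A B => if (DisjOn Y A B ↔ false = true) then 0 else 1)
        ≤ prodIntegral μ ν (fun _ _ => 1) :=
          prodIntegral_mono hμ hν fun A B => by split_ifs <;> norm_num
      _ = √((∑ A, μ A) * ∑ B, ν B) * √((∑ A, μ A) * ∑ B, ν B) := by
          rw [prodIntegral_const, one_mul, Real.mul_self_sqrt hμν]
      _ ≤ ρ * pivotPotential ε t μ ν := by
          gcongr
          · exact Real.sqrt_le_iff.2 ⟨hρ.le, hmass.le⟩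
          · exact sqrt_mass_le_pivotPotential hε hε₁ t μ ν
      _ ≤ _ := le_add_of_nonneg_left (by positivity)

lemma of_no_pivot (hT : 6 ^ s * (4 / 5) ^ T ≤ ε) (hρ : 0 < ρ) (hμ : 0 ≤ μ) (hν : 0 ≤ ν)
    (hA : ∀ A, s ≤ #(A ∩ Y) → ∑ B, {B | DisjOn Y A B}.indicator ν B ≤ ε * ∑ B, ν B)
    (hB : ∀ B, s ≤ #(B ∩ Y) → ∑ A, {A | DisjOn Y B A}.indicator μ A ≤ ε * ∑ A, μ A) :
    PivotBound ε ρ (128 ^ T + 2) t Y μ ν := by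
  have hΦ := pivotPotential_nonneg (le_trans (by positivity) hT) t μ ν
  exact (hasProtocol_disjOn_of_no_pivot hT hμ hν hA hB).mono
    (le_mul_of_one_le_right (by positivity) (le_add_of_nonneg_left (by positivity)))
    (le_add_of_nonneg_right (by positivity))

lemma of_pivot (hε : 0 < ε) (hε₁ : ε ≤ 1) (hρ : 0 < ρ) (hM : 0 ≤ M) (hμ : 0 ≤ μ) (hν : 0 ≤ ν)
    (hmass : ρ ^ 2 ≤ (∑ A, μ A) * ∑ B, ν B) {B₀ : Finset X}
    (hB₀ : ε * ∑ A, μ A ≤ ∑ A, {A | DisjOn Y B₀ A}.indicator μ A)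
    (yes : PivotBound ε ρ M t (Y \ B₀) ({A | DisjOn Y B₀ A}.indicator μ) ν)
    (no : PivotBound ε ρ M (t + 1) Y ({A | DisjOn Y B₀ A}ᶜ.indicator μ) ν) :
    PivotBound ε ρ M (t + 1) Y μ ν := by
  have drop := pivotPotential_indicator_add_le hε hε₁ t hμ hν hB₀
  have hmasses := sum_indicator_add_sum_indicator_compl {A | DisjOn Y B₀ A} μ
  have hρΦ : ρ ≤ ε / 4 * pivotPotential ε (t + 1) μ ν :=
    calc ρ ≤ √((∑ A, μ A) * ∑ B, ν B) := Real.le_sqrt_of_sq_le hmass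
      _ ≤ pivotPotential ε t μ ν := sqrt_mass_le_pivotPotential hε hε₁ t μ ν
      _ = ε / 4 * pivotPotential ε (t + 1) μ ν := by rw [pivotPotential_succ]; field_simp
  refine ((HasProtocol.alice yes no).congr fun A B => ?_).mono ?_ ?_
  · rw [Set.mem_ofPred_eq]
    split_ifs with hA
    exacts [disjOn_sdiff_iff (disjOn_comm.1 hA), Iff.rfl]
  · rw [← mul_add]
    refine mul_le_mul_of_nonneg_left ?_ hM
    have : pivotPotential ε t ({A | DisjOn Y B₀ A}.indicator μ) ν / ρ +
        pivotPotential ε (t + 1) ({A | DisjOn Y B₀ A}ᶜ.indicator μ) ν / ρ + 1 ≤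
          pivotPotential ε (t + 1) μ ν / ρ := by
      rw [← add_div, ← div_self hρ.ne', ← add_div]
      gcongr
      linarith
    linarith
  · rw [← hmasses]
    nlinarith

lemma of_pivot_of_forall_lt (hε : 0 < ε) (hε₁ : ε ≤ 1) (hρ : 0 < ρ) (hM : 0 ≤ M) (hs : 1 ≤ s)
    (hμ : 0 ≤ μ) (hν : 0 ≤ ν) (hY : #Y ≤ t * s) (hmass : ρ ^ 2 ≤ (∑ A, μ A) * ∑ B, ν B)
    {B₀ : Finset X} (hB₀s : s ≤ #(B₀ ∩ Y))
    (hB₀ : ε * ∑ A, μ A ≤ ∑ A, {A | DisjOn Y B₀ A}.indicator μ A)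
    (ih : ∀ t' Y' μ', 0 ≤ μ' → #Y' ≤ t' * s →
      t' + (Function.support μ').ncard < t + (Function.support μ).ncard →
      PivotBound ε ρ M t' Y' μ' ν) :
    PivotBound ε ρ M t Y μ ν := by
  obtain ⟨t, rfl⟩ : ∃ t', t = t' + 1 := by
    refine Nat.exists_eq_add_one.2 (Nat.pos_of_ne_zero ?_)
    rintro rfl
    have := card_le_card (inter_subset_right : B₀ ∩ Y ⊆ Y)
    omega
  have hμ₀ : 0 < ∑ A, μ A :=
    pos_of_mul_pos_left ((pow_pos hρ 2).trans_le hmass) (sum_nonneg fun B _ => hν B)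
  have hμ_indicator (S : Set (Finset X)) : 0 ≤ S.indicator μ :=
    Set.indicator_nonneg fun A _ => hμ A
  refine of_pivot hε hε₁ hρ hM hμ hν hmass hB₀ (ih _ _ _ (hμ_indicator _) ?_ ?_)
    (ih _ _ _ (hμ_indicator _) hY ?_)
  · have := card_sdiff_add_card_inter Y B₀
    rw [inter_comm] at this
    rw [add_mul] at hY
    omega
  · rw [Set.support_indicator]
    have := Set.ncard_inter_le_ncard_right {A | DisjOn Y B₀ A} (Function.support μ)
    omega
  · have := ncard_support_indicator_compl_lt ((mul_pos hε hμ₀).trans_le hB₀)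
    omega

end PivotBound

theorem pivotBound_of_card_le_mul (hε₁ : ε ≤ 1) {ρ : ℝ} (hρ : 0 < ρ) (hs : 1 ≤ s) {T : ℕ}
    (hT : 6 ^ s * (4 / 5) ^ T ≤ ε) (t : ℕ) (hμ : 0 ≤ μ) (hν : 0 ≤ ν) (hY : #Y ≤ t * s) :
    PivotBound ε ρ (128 ^ T + 2) t Y μ ν := by
  have hε : 0 < ε := lt_of_lt_of_le (by positivity) hT
  have hM : (1 : ℝ) ≤ 128 ^ T + 2 := by linarith [pow_pos (by norm_num : (0 : ℝ) < 128) T]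
  induction hN : t + (Function.support μ).ncard + (Function.support ν).ncard
    using Nat.strong_induction_on generalizing t Y μ ν with
  | _ N ih =>
  subst hN
  rcases lt_or_ge ((∑ A, μ A) * ∑ B, ν B) (ρ ^ 2) with hmass | hmass
  · exact .of_mass_lt hε hε₁ hρ hM hμ hν hmass
  by_cases pivot_of_bob : ∃ B₀, s ≤ #(B₀ ∩ Y) ∧
      ε * ∑ A, μ A ≤ ∑ A, {A | DisjOn Y B₀ A}.indicator μ A
  · obtain ⟨B₀, hB₀s, hB₀⟩ := pivot_of_bob
    exact .of_pivot_of_forall_lt hε hε₁ hρ (by linarith) hs hμ hν hY hmass hB₀s hB₀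
      fun t' Y' μ' hμ' hY' hlt => ih _ (by omega) t' hμ' hν hY' rfl
  by_cases pivot_of_alice : ∃ A₀, s ≤ #(A₀ ∩ Y) ∧
      ε * ∑ B, ν B ≤ ∑ B, {B | DisjOn Y A₀ B}.indicator ν B
  · obtain ⟨A₀, hA₀s, hA₀⟩ := pivot_of_alice
    rw [mul_comm] at hmass
    exact (PivotBound.of_pivot_of_forall_lt hε hε₁ hρ (by linarith) hs hν hμ hY hmass hA₀s hA₀
      fun t' Y' ν' hν' hY' hlt => (ih _ (by omega) t' hμ hν' hY' rfl).swap).swap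
  push Not at pivot_of_bob pivot_of_alice
  exact .of_no_pivot hT hρ hμ hν (fun A hA => (pivot_of_alice A hA).le)
    fun B hB => (pivot_of_bob B hB).le

end LargeSets

/-! ### Choice of parameters -/

section Parameters

variable {X : Type*} [Fintype X] {μ ν : Finset X → ℝ}

lemma disjOn_univ_iff [DecidableEq X] {A B : Finset X} : DisjOn univ A B ↔ Disjoint A B := by
  simp only [DisjOn, inter_univ]

lemma six_pow_mul_le_half_pow {k s : ℕ} (hk : 1 ≤ k) (hks : k ≤ s) :
    (6 : ℝ) ^ s * (4 / 5) ^ (18 * s) ≤ (1 / 2) ^ (k + 2) :=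
  calc (6 : ℝ) ^ s * (4 / 5) ^ (18 * s) = (6 * (4 / 5) ^ 18) ^ s := by rw [pow_mul, mul_pow]
    _ ≤ ((1 / 2) ^ 3) ^ s := by gcongr; norm_num
    _ = (1 / 2) ^ (3 * s) := by rw [pow_mul]
    _ ≤ (1 / 2) ^ (k + 2) := pow_le_pow_of_le_one (by norm_num) (by norm_num) (by omega)

lemma numLeaves_bound_le_two_pow {k s t : ℕ} (hk : 1 ≤ k) (hks : k ≤ s) (htk : t * k ≤ 2 * s) :
    (128 ^ (18 * s) + 2 : ℝ) * ((2 ^ (k + 4)) ^ t / ((1 / 2) ^ (k + 2) / (2 ^ (k + 4)) ^ t) + 1) ≤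
      2 ^ (151 * s) := by
  have small : (128 ^ (18 * s) + 2 : ℝ) ≤ 2 ^ (127 * s) :=
    calc (128 ^ (18 * s) + 2 : ℝ) ≤ 2 ^ (126 * s) + 2 ^ (126 * s) := by
          rw [show (128 : ℝ) = 2 ^ 7 by norm_num, ← pow_mul, ← mul_assoc]
          exact add_le_add_right (le_self_pow₀ one_le_two (by omega)) _
      _ = 2 ^ (126 * s + 1) := by ring
      _ ≤ 2 ^ (127 * s) := pow_le_pow_right₀ one_le_two (by omega)
  have large : ((2 ^ (k + 4)) ^ t / ((1 / 2) ^ (k + 2) / (2 ^ (k + 4)) ^ t) + 1 : ℝ) ≤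
      2 ^ (24 * s) :=
    calc ((2 ^ (k + 4)) ^ t / ((1 / 2) ^ (k + 2) / (2 ^ (k + 4)) ^ t) + 1 : ℝ)
        = 2 ^ ((k + 4) * t + (k + 4) * t + (k + 2)) + 1 := by
          rw [← pow_mul, one_div_pow, pow_add _ (_ + _), pow_add _ ((k + 4) * t)]
          field_simp
      _ ≤ 2 ^ (23 * s) + 2 ^ (23 * s) := by
          gcongr
          · exact one_le_two
          · nlinarith
          · exact one_le_pow₀ one_le_two
      _ = 2 ^ (23 * s + 1) := by ring
      _ ≤ 2 ^ (24 * s) := pow_le_pow_right₀ one_le_two (by omega)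
  calc _ ≤ (2 : ℝ) ^ (127 * s) * 2 ^ (24 * s) := by gcongr
    _ = 2 ^ (151 * s) := by rw [← pow_add]; ring

lemma hasProtocol_disjoint_of_card_le_mul (hμ : 0 ≤ μ) (hμ₁ : ∑ A, μ A = 1) (hν : 0 ≤ ν)
    (hν₁ : ∑ B, ν B = 1) {k s t : ℕ} (hk : 1 ≤ k) (hks : k ≤ s) (hX : Fintype.card X ≤ t * s)
    (htk : t * k ≤ 2 * s) : HasProtocol μ ν Disjoint (2 ^ (151 * s)) ((1 / 2) ^ k) := by
  set δ : ℝ := (1 / 2) ^ (k + 2) with hδ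
  set Φ : ℝ := (2 ^ (k + 4)) ^ t with hΦ
  have hΦ_eq : pivotPotential δ t μ ν = Φ := by
    rw [pivotPotential, hμ₁, hν₁, mul_one, Real.sqrt_one, mul_one, hΦ, hδ, one_div_pow]
    congr 1
    field_simp
    ring
  have key := pivotBound_of_card_le_mul (pow_le_one₀ (by norm_num) (by norm_num))
    (by positivity : 0 < δ / Φ) (hk.trans hks) (six_pow_mul_le_half_pow hk hks) t hμ hν hX
  rw [PivotBound, hΦ_eq, hμ₁, hν₁] at key
  refine (key.congr fun A B => disjOn_univ_iff).mono
    (numLeaves_bound_le_two_pow hk hks htk) (le_of_eq ?_)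
  rw [div_mul_cancel₀ _ (by positivity), hδ, pow_add]
  ring

lemma hasProtocol_disjoint_of_card_mul_le_sq (hμ : 0 ≤ μ) (hμ₁ : ∑ A, μ A = 1) (hν : 0 ≤ ν)
    (hν₁ : ∑ B, ν B = 1) {k s : ℕ} (hk : 1 ≤ k) (hs : 1 ≤ s) (hX : Fintype.card X * k ≤ s ^ 2) :
    HasProtocol μ ν Disjoint (2 ^ (151 * s)) ((1 / 2) ^ k) := by
  obtain hks | hsk := le_or_gt k s
  · refine hasProtocol_disjoint_of_card_le_mul hμ hμ₁ hν hν₁ hk hks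
      (t := Fintype.card X / s + 1) ?_ ?_
    · rw [mul_comm]
      exact (Nat.lt_mul_div_succ _ hs).le
    · have : k * (Fintype.card X / s) ≤ s :=
        calc k * (Fintype.card X / s) ≤ k * Fintype.card X / s := Nat.mul_div_le_mul_div_assoc ..
          _ ≤ s := Nat.div_le_of_le_mul (by rwa [mul_comm k, ← sq])
      linarith
  · refine (HasRandomizedProtocol.zero_error Disjoint hμ hν).mono ?_ ?_
    · have hXs : Fintype.card X ≤ s := by nlinarith
      rw [Fintype.card_finset, Nat.cast_pow, Nat.cast_ofNat, ← pow_succ']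
      exact pow_le_pow_right₀ one_le_two (by omega)
    · rw [prodIntegral_const, zero_mul]
      positivity

lemma exists_parameters {n : ℕ} (hn : 1 ≤ n) {ε : ℝ} (hε : 0 < ε) (hε₂ : ε < 1 / 2) :
    ∃ k s : ℕ, 1 ≤ k ∧ 1 ≤ s ∧ n * k ≤ s ^ 2 ∧ (1 / 2) ^ k ≤ ε ∧
      s ≤ 4 * √(n * Real.logb 2 (1 / ε)) := by
  set L := Real.logb 2 (1 / ε) with hL
  have two_pow_L : (2 : ℝ) ^ L = 1 / ε :=
    Real.rpow_logb two_pos (by norm_num) (one_div_pos.2 hε)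
  have one_le_L : 1 ≤ L := by
    rw [hL, Real.le_logb_iff_rpow_le one_lt_two (one_div_pos.2 hε), Real.rpow_one,
      le_one_div two_pos hε]
    exact hε₂.le
  have hk : 1 ≤ ⌈L⌉₊ := Nat.one_le_ceil_iff.2 (by linarith)
  have hkL : (⌈L⌉₊ : ℝ) ≤ 4 * L := by linarith [Nat.ceil_lt_add_one (by linarith : 0 ≤ L)]
  have one_le_sqrt : 1 ≤ √(n * ⌈L⌉₊) := by
    rw [Real.one_le_sqrt]
    exact_mod_cast Nat.mul_pos hn hk
  refine ⟨⌈L⌉₊, ⌈√(n * ⌈L⌉₊)⌉₊, hk, Nat.one_le_ceil_iff.2 (by linarith), ?_, ?_, ?_⟩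
  · have := Nat.le_ceil √(n * ⌈L⌉₊)
    rw [Real.sqrt_le_left (by positivity)] at this
    exact_mod_cast this
  · rw [one_div_pow, one_div_le (by positivity) hε, ← two_pow_L, ← Real.rpow_natCast]
    exact Real.rpow_le_rpow_of_exponent_le one_le_two (Nat.le_ceil L)
  · calc (⌈√(n * ⌈L⌉₊)⌉₊ : ℝ) ≤ 2 * √(n * ⌈L⌉₊) := by
          linarith [Nat.ceil_lt_add_one (Real.sqrt_nonneg (n * ⌈L⌉₊))]
      _ ≤ 2 * √(2 ^ 2 * (n * L)) := by
          refine mul_le_mul_of_nonneg_left (Real.sqrt_le_sqrt ?_) two_pos.le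
          calc (n * ⌈L⌉₊ : ℝ) ≤ n * (4 * L) := by gcongr
            _ = 2 ^ 2 * (n * L) := by ring
      _ = 4 * √(n * L) := by
          rw [Real.sqrt_mul (by positivity), Real.sqrt_sq two_pos.le]
          ring

theorem hasProtocol_disjoint [Nonempty X] (hμ : 0 ≤ μ) (hμ₁ : ∑ A, μ A = 1) (hν : 0 ≤ ν)
    (hν₁ : ∑ B, ν B = 1) {ε : ℝ} (hε : 0 < ε) (hε₂ : ε < 1 / 2) :
    HasProtocol μ ν Disjoint (2 ^ (604 * √(Fintype.card X * Real.logb 2 (1 / ε)))) ε := by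
  obtain ⟨k, s, hk, hs, hX, hkε, hsε⟩ := exists_parameters (Fintype.card_pos (α := X)) hε hε₂
  refine (hasProtocol_disjoint_of_card_mul_le_sq hμ hμ₁ hν hν₁ hk hs hX).mono ?_ hkε
  rw [← Real.rpow_natCast]
  refine Real.rpow_le_rpow_of_exponent_le one_le_two ?_
  push_cast
  linarith

end Parameters

/-- for every product distribution `μA × μB` and error `ε ∈ (0, 1/2)`,
there is a partition of `2^[n] × 2^[n]` into at most `2^{C√(n log₂(1/ε))}` labeled
combinatorial rectangles computing disjointness with error at most `ε` under `μA × μB`. -/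
theorem statement11 :
    ∃ C : ℝ, 0 < C ∧ ∀ n : ℕ, 0 < n →
      ∀ μA μB : Finset (Fin n) → ℝ,
        (∀ A, 0 ≤ μA A) → (∑ A, μA A) = 1 →
        (∀ B, 0 ≤ μB B) → (∑ B, μB B) = 1 →
        ∀ ε : ℝ, 0 < ε → ε < 1 / 2 →
          ∃ m : ℕ, 0 < m ∧
            (m : ℝ) ≤ (2 : ℝ) ^ (C * Real.sqrt (n * Real.logb 2 (1 / ε))) ∧
            ∃ ℱ 𝒢 : Fin m → Finset (Finset (Fin n)), ∃ b : Fin m → Bool,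
              (∀ i j, i ≠ j → Disjoint (ℱ i ×ˢ 𝒢 i) (ℱ j ×ˢ 𝒢 j)) ∧
              (∀ p : Finset (Fin n) × Finset (Fin n), ∃ i, p ∈ ℱ i ×ˢ 𝒢 i) ∧
              ∑ i, ∑ p ∈ ℱ i ×ˢ 𝒢 i,
                  (if (Disjoint p.1 p.2 ↔ b i = true) then 0 else μA p.1 * μB p.2)
                ≤ ε := by
  refine ⟨604, by norm_num, fun n hn μA μB hμA hμA₁ hμB hμB₁ ε hε hε₂ => ?_⟩
  have : NeZero n := ⟨hn.ne'⟩
  obtain ⟨P, numLeaves_le, error_le⟩ := hasProtocol_disjoint hμA hμA₁ hμB hμB₁ hε hε₂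
  rw [Fintype.card_fin] at numLeaves_le
  obtain ⟨ℱ, 𝒢, b, disjoint, cover, error_eq⟩ := P.exists_partition Disjoint μA μB
  exact ⟨P.numLeaves, P.numLeaves_pos, numLeaves_le, ℱ, 𝒢, b, disjoint, cover,
    by convert error_eq.trans_le error_le⟩
end
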